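/- Let α,β>−1, let M,N≥0 be integers, let L,γ₁,γ₂∈{0,1} with γ₁+γ₂≥1, let W≥1 be real and 1≤p≤∞, and assume W/p+γ₁+γ₂−L−N−M ≥ 2 (with the convention W/p=0 when p=∞). Then there exists a constant C such that for all θ,φ∈(0,π) with θ≠φ: (sin θ)^{γ₁}(sin φ)^{γ₂}·‖∂_φ^L ∂_θ^N ∂_t^M H_t^{α+1,β+1}(θ,φ)‖_{L^p((0,∞),t^{W−1}dt)} ≤ C/μ⁺_{α,β}(B(θ,|θ−φ|)). -/

import Mathlib

open MeasureTheory Real Set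
open scoped ENNReal

noncomputable section

/-- The classical Jacobi polynomial `P_n^{α,β}`. -/
def jacobiP (α β : ℝ) (n : ℕ) (x : ℝ) : ℝ :=
  ∑ m ∈ Finset.range (n + 1),
    (Real.Gamma (α + n + 1) * Real.Gamma (α + β + n + m + 1)) /
      ((m.factorial : ℝ) * ((n - m).factorial : ℝ) * Real.Gamma (α + β + n + 1) *
        Real.Gamma (α + m + 1)) * ((x - 1) / 2) ^ m

/-- `Ψ^{α,β}(θ) = |sin(θ/2)|^{α+1/2} (cos(θ/2))^{β+1/2}`. -/
def jPsi (α β θ : ℝ) : ℝ := |Real.sin (θ / 2)| ^ (α + 1 / 2) * Real.cos (θ / 2) ^ (β + 1 / 2)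

/-- The measure `μ_{α,β}` on `(−π, π)`, with density `(Ψ^{α,β})²` w.r.t. Lebesgue measure. -/
def jacobiMeasure (α β : ℝ) : Measure ℝ :=
  (volume.restrict (Ioo (-π) π)).withDensity fun θ => ENNReal.ofReal (jPsi α β θ ^ 2)

/-- The restriction `μ⁺_{α,β}` of `μ_{α,β}` to `(0, π)`. -/
def jacobiMeasurePlus (α β : ℝ) : Measure ℝ := (jacobiMeasure α β).restrict (Ioo 0 π)

/-- The normalizing constant `c_n^{α,β}` making `𝒫_n^{α,β}` have unit `L²(μ⁺)` norm. -/
def cJ (α β : ℝ) (n : ℕ) : ℝ :=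
  (∫ θ, jacobiP α β n (Real.cos θ) ^ 2 ∂(jacobiMeasurePlus α β)) ^ (-(1 / 2) : ℝ)

/-- The normalized trigonometric Jacobi polynomial `𝒫_n^{α,β}(θ)`. -/
def trigP (α β : ℝ) (n : ℕ) (θ : ℝ) : ℝ := cJ α β n * jacobiP α β n (Real.cos θ)

/-- The eigenvalue `λ_n^{α,β} = (n + (α+β+1)/2)²`. -/
def jLam (α β : ℝ) (n : ℕ) : ℝ := ((n : ℝ) + (α + β + 1) / 2) ^ 2

/-- The symmetrized system `Φ_n^{α,β}`. -/
def symPhi (α β : ℝ) (n : ℕ) (θ : ℝ) : ℝ :=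
  if Even n then (Real.sqrt 2)⁻¹ * trigP α β (n / 2) θ
  else (Real.sqrt 2)⁻¹ * (Real.sin θ / 2) * trigP (α + 1) (β + 1) ((n - 1) / 2) θ

/-- The Jacobi functions `φ_n^{α,β} = Ψ^{α,β} 𝒫_n^{α,β}`. -/
def phiFun (α β : ℝ) (n : ℕ) (θ : ℝ) : ℝ := jPsi α β θ * trigP α β n θ

/-- The symmetrized Jacobi function system `Θ_n^{α,β}`. -/
def jTheta (α β : ℝ) (n : ℕ) (θ : ℝ) : ℝ :=
  if Even n then (Real.sqrt 2)⁻¹ * phiFun α β (n / 2) θ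
  else (Real.sqrt 2)⁻¹ * Real.sign θ * phiFun (α + 1) (β + 1) ((n - 1) / 2) θ

/-- The symmetrized Jacobi–Poisson semigroup `ℍ_t^{α,β}f(θ)` (polynomial setting). -/
def symH (α β : ℝ) (f : ℝ → ℝ) (t θ : ℝ) : ℝ :=
  ∑' n : ℕ, Real.exp (-t * Real.sqrt (jLam α β ((n + 1) / 2))) *
    (∫ φ, f φ * symPhi α β n φ ∂(jacobiMeasure α β)) * symPhi α β n θ

/-- The symmetrized Jacobi–Poisson semigroup `H̄_t^{α,β}f(θ)` (function setting). -/
def symHbar (α β : ℝ) (f : ℝ → ℝ) (t θ : ℝ) : ℝ :=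
  ∑' n : ℕ, Real.exp (-t * Real.sqrt (jLam α β ((n + 1) / 2))) *
    (∫ φ in Ioo (-π) π, f φ * jTheta α β n φ) * jTheta α β n θ

/-- The non-symmetrized Jacobi–Poisson semigroup `ℋ_t^{α,β}f(θ)` (polynomial setting). -/
def jacH (α β : ℝ) (f : ℝ → ℝ) (t θ : ℝ) : ℝ :=
  ∑' n : ℕ, Real.exp (-t * Real.sqrt (jLam α β n)) *
    (∫ φ, f φ * trigP α β n φ ∂(jacobiMeasurePlus α β)) * trigP α β n θ

/-- The non-symmetrized Jacobi–Poisson semigroup `𝓗̄_t^{α,β}f(θ)` (function setting). -/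
def jacHbar (α β : ℝ) (f : ℝ → ℝ) (t θ : ℝ) : ℝ :=
  ∑' n : ℕ, Real.exp (-t * Real.sqrt (jLam α β n)) *
    (∫ φ in Ioo 0 π, f φ * phiFun α β n φ) * phiFun α β n θ

/-- The symmetrized derivative `𝔻_{α,β}`. -/
def symD (α β : ℝ) (f : ℝ → ℝ) : ℝ → ℝ := fun θ =>
  deriv f θ + (α - β + (α + β + 1) * Real.cos θ) / Real.sin θ * ((f θ - f (-θ)) / 2)

/-- The symmetrized derivative `D̄_{α,β}` (function setting). -/
def symDbar (α β : ℝ) (f : ℝ → ℝ) : ℝ → ℝ := fun θ =>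
  deriv f θ -
    ((2 * α + 1) / 4 * (Real.cos (θ / 2) / Real.sin (θ / 2)) -
      (2 * β + 1) / 4 * Real.tan (θ / 2)) * f (-θ)

/-- The derivative `D_{α,β}` (non-symmetrized function setting). -/
def jacD (α β : ℝ) (f : ℝ → ℝ) : ℝ → ℝ := fun θ =>
  deriv f θ - (2 * α + 1) / 4 * (Real.cos (θ / 2) / Real.sin (θ / 2)) * f θ +
    (2 * β + 1) / 4 * Real.tan (θ / 2) * f θ

/-- `δ*_{α,β} = −d/dθ − (α+1/2)cot(θ/2) + (β+1/2)tan(θ/2)`. -/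
def delStar (α β : ℝ) (f : ℝ → ℝ) : ℝ → ℝ := fun θ =>
  -deriv f θ - (α + 1 / 2) * (Real.cos (θ / 2) / Real.sin (θ / 2)) * f θ +
    (β + 1 / 2) * Real.tan (θ / 2) * f θ

/-- `δ_N^even`: `N` alternating factors, rightmost (first applied) one being `δ = d/dθ`. -/
def deltaEven (α β : ℝ) : ℕ → (ℝ → ℝ) → ℝ → ℝ
  | 0 => fun f => f
  | N + 1 => fun f => (if N % 2 = 0 then deriv else delStar α β) (deltaEven α β N f)

/-- `δ_N^odd`: `N` alternating factors, rightmost (first applied) one being `δ*_{α,β}`. -/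
def deltaOdd (α β : ℝ) : ℕ → (ℝ → ℝ) → ℝ → ℝ
  | 0 => fun f => f
  | N + 1 => fun f => (if N % 2 = 0 then delStar α β else deriv) (deltaOdd α β N f)

/-- The Jacobi–Poisson kernel `H_t^{α,β}(θ,φ)` (even part of the symmetrized kernel). -/
def jHker (α β t θ φ : ℝ) : ℝ :=
  (1 / 2) * ∑' n : ℕ, Real.exp (-t * Real.sqrt (jLam α β n)) * trigP α β n θ * trigP α β n φ

/-- The kernel `H̃_t^{α,β}(θ,φ)` (odd part of the symmetrized kernel). -/
def jHtil (α β t θ φ : ℝ) : ℝ :=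
  (1 / 8) * Real.sin θ * Real.sin φ *
    ∑' n : ℕ, Real.exp (-t * Real.sqrt (jLam α β (n + 1))) *
      trigP (α + 1) (β + 1) n θ * trigP (α + 1) (β + 1) n φ

/-- `μ⁺_{α,β}(B(θ,r))` where `B(θ,r) = (θ−r, θ+r) ∩ (0,π)`. -/
def ballMeasure (α β θ r : ℝ) : ℝ≥0∞ := jacobiMeasurePlus α β (Ioo (θ - r) (θ + r))

/-- The Muckenhoupt class `A_p^{α,β}` (`1 < p < ∞`) on `(−π,π)` w.r.t. `μ_{α,β}`. -/
def IsApWeight (α β p : ℝ) (w : ℝ → ℝ) : Prop :=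
  (∀ θ, 0 ≤ w θ) ∧
    ∃ C : ℝ, ∀ a b : ℝ, -π ≤ a → a ≤ b → b ≤ π →
      (∫⁻ θ in Ioo a b, ENNReal.ofReal (w θ) ∂(jacobiMeasure α β)) *
          (∫⁻ θ in Ioo a b, ENNReal.ofReal (w θ ^ (-1 / (p - 1))) ∂(jacobiMeasure α β)) ^
            (p - 1) ≤
        ENNReal.ofReal C * jacobiMeasure α β (Ioo a b) ^ p

/-- The Muckenhoupt class `A_1^{α,β}` on `(−π,π)` w.r.t. `μ_{α,β}`. -/
def IsA1Weight (α β : ℝ) (w : ℝ → ℝ) : Prop :=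
  (∀ θ, 0 ≤ w θ) ∧
    ∃ C : ℝ, ∀ a b : ℝ, -π ≤ a → a ≤ b → b ≤ π →
      ∫⁻ θ in Ioo a b, ENNReal.ofReal (w θ) ∂(jacobiMeasure α β) ≤
        ENNReal.ofReal C *
          essInf (fun θ => ENNReal.ofReal (w θ)) ((jacobiMeasure α β).restrict (Ioo a b)) *
          jacobiMeasure α β (Ioo a b)

/-- The Muckenhoupt class `(A_p^{α,β})⁺` (`1 < p < ∞`) on `(0,π)` w.r.t. `μ⁺_{α,β}`. -/
def IsApWeightPlus (α β p : ℝ) (w : ℝ → ℝ) : Prop :=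
  (∀ θ, 0 ≤ w θ) ∧
    ∃ C : ℝ, ∀ a b : ℝ, 0 ≤ a → a ≤ b → b ≤ π →
      (∫⁻ θ in Ioo a b, ENNReal.ofReal (w θ) ∂(jacobiMeasurePlus α β)) *
          (∫⁻ θ in Ioo a b, ENNReal.ofReal (w θ ^ (-1 / (p - 1))) ∂(jacobiMeasurePlus α β)) ^
            (p - 1) ≤
        ENNReal.ofReal C * jacobiMeasurePlus α β (Ioo a b) ^ p

/-- The Muckenhoupt class `(A_1^{α,β})⁺` on `(0,π)` w.r.t. `μ⁺_{α,β}`. -/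
def IsA1WeightPlus (α β : ℝ) (w : ℝ → ℝ) : Prop :=
  (∀ θ, 0 ≤ w θ) ∧
    ∃ C : ℝ, ∀ a b : ℝ, 0 ≤ a → a ≤ b → b ≤ π →
      ∫⁻ θ in Ioo a b, ENNReal.ofReal (w θ) ∂(jacobiMeasurePlus α β) ≤
        ENNReal.ofReal C *
          essInf (fun θ => ENNReal.ofReal (w θ)) ((jacobiMeasurePlus α β).restrict (Ioo a b)) *
          jacobiMeasurePlus α β (Ioo a b)

/-- The double power weight `w_{r,s}(θ) = |sin(θ/2)|^r (cos(θ/2))^s`. -/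
def wrs (r s θ : ℝ) : ℝ := |Real.sin (θ / 2)| ^ r * Real.cos (θ / 2) ^ s

/-!
# Growth of the Jacobi–Poisson kernel

Bateman's formula writes `P_N(x) P_N(y) / P_N(1)²` as a weighted sum of the binary forms
`batemanForm a b S T k`. For `a, b > -1/2` these forms are, up to constants, the moments
`∫ (s u + c v)^{2k}` against a product of ultraspherical measures on `(-1, 1)²`, so summing the
Gegenbauer generating function over the spectrum gives a closed integral representation

`H_t(θ, φ) = C sinh (t/2) ∫∫ Φ^{-(a+b+2)}`,
`Φ = cosh (t/2) - u sin (θ/2) sin (φ/2) - v cos (θ/2) cos (φ/2)`.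

The shift `α + 1 > 0`, `β + 1 > 0` puts the kernel of the theorem in this range. Differentiating
under the integral costs half a power of the phase for each derivative, since the first
derivatives of the phase are bounded by its square root. The two integrations then give, for
`t ≤ 1`, `R = t² + (θ - φ)²`, `S = sin (θ/2) sin (φ/2)` and `T = cos (θ/2) cos (φ/2)`,

`|∂ H_t| ≲ R^{-(1+M+N+L)/2} (R + S)^{-(a+1/2)} (R + T)^{-(b+1/2)}`,

while for `t ≥ 1` the kernel decays exponentially. The factors `sin θ`, `sin φ` lower the
exponents from `a = α + 1`, `b = β + 1` to `α`, `β`, which is exactly the size of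
`1 / μ⁺_{α,β}(B(θ, |θ - φ|))`, and the remaining function of `t` and `|θ - φ|` has an `L^p` norm
that does not depend on `|θ - φ|`, by scaling.
-/

open Finset.HasAntidiagonal (antidiagonal)

/-! ### Bateman's bilinear formula for Jacobi polynomials -/

section Bateman

open Polynomial

lemma natCast_add_pos {s : ℝ} (hs : 0 < s) (n : ℕ) : 0 < s + n := by positivity

lemma Gamma_add_natCast_succ {s : ℝ} (hs : 0 < s) (n : ℕ) :
    Gamma (s + (n + 1 : ℕ)) = (s + n) * Gamma (s + n) := by
  rw [← Gamma_add_one (natCast_add_pos hs n).ne']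
  push_cast
  ring_nf

lemma natCast_descFactorial_succ (N k : ℕ) :
    (N.descFactorial (k + 1) : ℝ) = (N - k) * N.descFactorial k := by
  rw [Nat.descFactorial_succ]
  rcases le_or_gt k N with hk | hk
  · rw [Nat.cast_mul, Nat.cast_sub hk]
  · simp [Nat.descFactorial_of_lt hk]

lemma natCast_choose_succ_mul (N j : ℕ) :
    (N.choose (j + 1) : ℝ) * (j + 1) = N.choose j * (N - j) := by
  rcases le_or_gt j N with hj | hj
  · rw [← Nat.cast_sub hj]
    exact_mod_cast Nat.choose_succ_right_eq N j
  · simp [Nat.choose_eq_zero_of_lt hj, Nat.choose_eq_zero_of_lt (Nat.lt_succ_of_lt hj)]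

/-- The coefficient of `S ^ i * T ^ j` in `batemanForm`. -/
def batemanCoeff (a b : ℝ) (i j : ℕ) : ℝ :=
  ((i.factorial : ℝ) * j.factorial * Gamma (a + 1 + i) * Gamma (b + 1 + j))⁻¹

/-- The homogeneous form of degree `k` occurring in Bateman's bilinear formula. It is defined over
any `ℝ`-algebra so that it can be differentiated formally over `ℝ[X]` and then evaluated in `ℝ`. -/
def batemanForm {R : Type*} [CommRing R] [Algebra ℝ R] (a b : ℝ) (S T : R) (k : ℕ) : R :=
  ∑ ij ∈ antidiagonal k, batemanCoeff a b ij.1 ij.2 • (S ^ ij.1 * T ^ ij.2)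

/-- The coefficient of the form of degree `k` in Bateman's bilinear formula for Jacobi polynomials
of degree `N`, with `s = a + b + 1`; it vanishes for `N < k`. -/
def batemanWeight (s : ℝ) (N k : ℕ) : ℝ :=
  (-1) ^ (N + k) * Gamma (s + N + k) * N.descFactorial k / N.factorial

/-- The right-hand side of Bateman's bilinear formula, each monomial `S ^ i * T ^ j` carrying an
additional factor `f i j`. -/
def batemanWeightedSum {R : Type*} [CommRing R] [Algebra ℝ R] (a b : ℝ) (N : ℕ) (S T : R)
    (f : ℕ → ℕ → ℝ) : R :=
  ∑ k ∈ Finset.range (N + 1), ∑ ij ∈ antidiagonal k,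
    (f ij.1 ij.2 * batemanWeight (a + b + 1) N k * batemanCoeff a b ij.1 ij.2) •
      (S ^ ij.1 * T ^ ij.2)

/-- The right-hand side of Bateman's bilinear formula. Up to a constant it equals
`P_N^{a,b}(1 - 2 x) P_N^{a,b}(1 - 2 y)` at `S = x * y`, `T = (1 - x) * (1 - y)`. -/
def batemanSum {R : Type*} [CommRing R] [Algebra ℝ R] (a b : ℝ) (N : ℕ) (S T : R) : R :=
  ∑ k ∈ Finset.range (N + 1), batemanWeight (a + b + 1) N k • batemanForm a b S T k

/-- The coefficients of the Jacobi polynomial in powers of `(1 - x) / 2`, in the normalization of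
`jacobiPoly`. -/
def jacobiCoeff (a b : ℝ) (N j : ℕ) : ℝ :=
  (-1) ^ j * Gamma (a + b + 1 + N + j) * N.choose j / (N.factorial * Gamma (a + 1 + j))

/-- The Jacobi polynomial in the variable `(1 - x) / 2`, scaled so as to have no Gamma factor
depending on the degree alone. -/
def jacobiPoly (a b : ℝ) (N : ℕ) : ℝ[X] :=
  ∑ j ∈ Finset.range (N + 1), C (jacobiCoeff a b N j) * X ^ j

variable {a b : ℝ}

lemma batemanCoeff_swap (a b : ℝ) (i j : ℕ) : batemanCoeff a b i j = batemanCoeff b a j i := by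
  unfold batemanCoeff
  congr 1
  ring

lemma mul_batemanCoeff_succ (ha : -1 < a) (b : ℝ) (i j : ℕ) :
    ((i + 1 : ℕ) : ℝ) * ((i + 1 : ℕ) + a) * batemanCoeff a b (i + 1) j = batemanCoeff a b i j := by
  have hpos : 0 < a + 1 + i := natCast_add_pos (by linarith) i
  have hshift : ((i + 1 : ℕ) : ℝ) + a = a + 1 + i := by push_cast; ring
  unfold batemanCoeff
  rw [Gamma_add_natCast_succ (by linarith : 0 < a + 1), Nat.factorial_succ, hshift, Nat.cast_mul]
  simp only [mul_inv]
  field_simp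

lemma batemanWeight_succ {s : ℝ} (hs : -1 < s) {N k : ℕ} (hk : k < N) :
    batemanWeight s N (k + 1) = -((s + N + k) * (N - k)) * batemanWeight s N k := by
  have hN : (1 : ℝ) ≤ N := by exact_mod_cast hk.pos
  unfold batemanWeight
  rw [Gamma_add_natCast_succ (by linarith : 0 < s + N), natCast_descFactorial_succ]
  ring

section Algebra

variable {R : Type*} [CommRing R] [Algebra ℝ R]

lemma sum_antidiagonal_succ_batemanCoeff (ha : -1 < a) (b : ℝ) (S T : R) (k : ℕ) :
    ∑ ij ∈ antidiagonal (k + 1),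
      ((ij.1 : ℝ) * (ij.1 + a) * batemanCoeff a b ij.1 ij.2) • (S ^ ij.1 * T ^ ij.2) =
      S * batemanForm a b S T k := by
  rw [Finset.Nat.sum_antidiagonal_succ, batemanForm, Finset.mul_sum]
  simp only [Nat.cast_zero, zero_mul, zero_smul, zero_add, mul_batemanCoeff_succ ha]
  refine Finset.sum_congr rfl fun ij _ => ?_
  rw [mul_smul_comm, pow_succ']
  ring_nf

lemma batemanWeightedSum_add (a b : ℝ) (N : ℕ) (S T : R) (f g : ℕ → ℕ → ℝ) :
    batemanWeightedSum a b N S T f + batemanWeightedSum a b N S T g =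
      batemanWeightedSum a b N S T (fun i j => f i j + g i j) := by
  simp only [batemanWeightedSum, ← Finset.sum_add_distrib, add_mul, add_smul]

lemma smul_batemanWeightedSum (a b : ℝ) (N : ℕ) (S T : R) (c : ℝ) (f : ℕ → ℕ → ℝ) :
    c • batemanWeightedSum a b N S T f = batemanWeightedSum a b N S T (fun i j => c * f i j) := by
  simp only [batemanWeightedSum, Finset.smul_sum, smul_smul, mul_assoc]

lemma batemanWeightedSum_one (a b : ℝ) (N : ℕ) (S T : R) :
    batemanWeightedSum a b N S T (fun _ _ => 1) = batemanSum a b N S T := by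
  simp only [batemanWeightedSum, batemanSum, batemanForm, Finset.smul_sum, smul_smul, one_mul]

lemma batemanWeightedSum_swap (a b : ℝ) (N : ℕ) (S T : R) (f : ℕ → ℕ → ℝ) :
    batemanWeightedSum a b N S T f = batemanWeightedSum b a N T S (fun i j => f j i) := by
  unfold batemanWeightedSum
  refine Finset.sum_congr rfl fun k _ => ?_
  rw [← Finset.Nat.sum_antidiagonal_swap]
  refine Finset.sum_congr rfl fun ij _ => ?_
  rw [Prod.fst_swap, Prod.snd_swap, batemanCoeff_swap a b, add_comm a b, mul_comm (S ^ _)]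

lemma batemanWeightedSum_totalDegree (a b : ℝ) (N : ℕ) (S T : R) (f : ℝ → ℝ) :
    batemanWeightedSum a b N S T (fun i j => f (i + j)) =
      ∑ k ∈ Finset.range (N + 1),
        (f k * batemanWeight (a + b + 1) N k) • batemanForm a b S T k := by
  unfold batemanWeightedSum batemanForm
  refine Finset.sum_congr rfl fun k _ => ?_
  rw [Finset.smul_sum]
  refine Finset.sum_congr rfl fun ij hij => ?_
  rw [smul_smul, ← Finset.HasAntidiagonal.mem_antidiagonal.1 hij, Nat.cast_add]

lemma batemanWeightedSum_left (ha : -1 < a) (hab : -2 < a + b) (N : ℕ) (S T : R) :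
    batemanWeightedSum a b N S T (fun i _ => i * (i + a)) =
      -S * batemanWeightedSum a b N S T
        (fun i j => (a + b + 1 + N + (i + j)) * (N - (i + j))) := by
  have regroup : batemanWeightedSum a b N S T (fun i _ => i * (i + a)) =
      ∑ k ∈ Finset.range (N + 1), batemanWeight (a + b + 1) N k • ∑ ij ∈ antidiagonal k,
        ((ij.1 : ℝ) * (ij.1 + a) * batemanCoeff a b ij.1 ij.2) • (S ^ ij.1 * T ^ ij.2) := by
    simp only [batemanWeightedSum, Finset.smul_sum, smul_smul, mul_left_comm, mul_assoc]
  rw [regroup, batemanWeightedSum_totalDegree a b N S T fun d => (a + b + 1 + N + d) * (N - d),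
    Finset.sum_range_succ', Finset.sum_range_succ]
  simp only [sum_antidiagonal_succ_batemanCoeff ha, Finset.Nat.antidiagonal_zero,
    Finset.sum_singleton, Nat.cast_zero, zero_mul, zero_smul, smul_zero, mul_zero, add_zero,
    sub_self, Finset.mul_sum]
  refine Finset.sum_congr rfl fun k hk => ?_
  rw [batemanWeight_succ (by linarith) (Finset.mem_range.1 hk), neg_mul, neg_smul, neg_mul,
    mul_smul_comm]

lemma batemanWeightedSum_right (hb : -1 < b) (hab : -2 < a + b) (N : ℕ) (S T : R) :
    batemanWeightedSum a b N S T (fun _ j => j * (j + b)) =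
      -T * batemanWeightedSum a b N S T
        (fun i j => (a + b + 1 + N + (i + j)) * (N - (i + j))) := by
  rw [batemanWeightedSum_swap, batemanWeightedSum_left hb (by linarith),
    batemanWeightedSum_swap b a]
  simp only [add_comm a b, add_comm (Nat.cast _ : ℝ) (Nat.cast _ : ℝ)]

lemma map_batemanSum {R' : Type*} [CommRing R'] [Algebra ℝ R'] (F : R →ₐ[ℝ] R') (a b : ℝ) (N : ℕ)
    (S T : R) : F (batemanSum a b N S T) = batemanSum a b N (F S) (F T) := by
  simp [batemanSum, batemanForm]

end Algebra

lemma derivation_pow_of_eq_mul {R A : Type*} [CommRing R] [CommRing A] [Algebra R A]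
    (D : Derivation R A A) {s u : A} (h : D s = u * s) (i : ℕ) : D (s ^ i) = i * u * s ^ i := by
  induction i with
  | zero => simp
  | succ i ih =>
    rw [pow_succ, D.leibniz, ih, h, smul_eq_mul, smul_eq_mul]
    push_cast
    ring

/-- The derivation `x (1 - x) d/dx`. In terms of it the hypergeometric equation of the Jacobi
polynomials acts on the monomials `x ^ i * (1 - x) ^ j` with polynomial factors. -/
def jacobiDerivation : Derivation ℝ ℝ[X] ℝ[X] := mkDerivation ℝ (X * (1 - X))

lemma jacobiDerivation_apply (f : ℝ[X]) :
    jacobiDerivation f = X * (1 - X) * derivative f := by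
  rw [jacobiDerivation, mkDerivation_apply, smul_eq_mul, mul_comm]

lemma jacobiDerivation_monomial (y z : ℝ) (i j : ℕ) :
    jacobiDerivation ((X * C y) ^ i * ((1 - X) * C z) ^ j) =
      ((i : ℝ[X]) * (1 - X) - (j : ℝ[X]) * X) * ((X * C y) ^ i * ((1 - X) * C z) ^ j) := by
  have hX : jacobiDerivation (X * C y) = (1 - X) * (X * C y) := by
    rw [jacobiDerivation_apply]
    simp only [derivative_mul, derivative_X, derivative_C]
    ring
  have hX' : jacobiDerivation ((1 - X) * C z) = -X * ((1 - X) * C z) := by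
    rw [jacobiDerivation_apply]
    simp only [derivative_mul, derivative_sub, derivative_one, derivative_X, derivative_C]
    ring
  rw [Derivation.leibniz, derivation_pow_of_eq_mul _ hX, derivation_pow_of_eq_mul _ hX',
    smul_eq_mul, smul_eq_mul]
  ring

lemma jacobiOperator_monomial (a b y z : ℝ) (i j : ℕ) :
    jacobiDerivation (jacobiDerivation ((X * C y) ^ i * ((1 - X) * C z) ^ j)) +
      (C a * (1 - X) - C b * X) * jacobiDerivation ((X * C y) ^ i * ((1 - X) * C z) ^ j) =
    ((1 - X) ^ 2 * C ((i : ℝ) * (i + a)) + X ^ 2 * C ((j : ℝ) * (j + b)) -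
      X * (1 - X) * C (2 * (i : ℝ) * j + (a + 1) * j + (b + 1) * i)) *
      ((X * C y) ^ i * ((1 - X) * C z) ^ j) := by
  have hlin : jacobiDerivation ((i : ℝ[X]) * (1 - X) - (j : ℝ[X]) * X) =
      -((i : ℝ[X]) + (j : ℝ[X])) * (X * (1 - X)) := by
    rw [jacobiDerivation_apply]
    simp only [derivative_sub, derivative_mul, derivative_natCast, derivative_one, derivative_X]
    ring
  rw [jacobiDerivation_monomial, Derivation.leibniz, jacobiDerivation_monomial, hlin]
  simp only [smul_eq_mul, C_mul, C_add, map_natCast, map_ofNat, map_one]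
  ring

/-- Bateman's sum as a polynomial in `x`, for fixed `y`. -/
def batemanPoly (a b : ℝ) (N : ℕ) (y : ℝ) : ℝ[X] :=
  batemanSum a b N (X * C y) ((1 - X) * C (1 - y))

lemma eval_batemanPoly (a b : ℝ) (N : ℕ) (x y : ℝ) :
    (batemanPoly a b N y).eval x = batemanSum a b N (x * y) ((1 - x) * (1 - y)) := by
  rw [batemanPoly, ← coe_aeval_eq_eval, map_batemanSum]
  simp [mul_comm x]

lemma jacobiOperator_batemanPoly_eq_weightedSum (a b : ℝ) (N : ℕ) (y : ℝ) :
    jacobiDerivation (jacobiDerivation (batemanPoly a b N y)) +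
      (C a * (1 - X) - C b * X) * jacobiDerivation (batemanPoly a b N y) =
    (1 - X) ^ 2 * batemanWeightedSum a b N (X * C y) ((1 - X) * C (1 - y))
        (fun i _ => i * (i + a)) +
      X ^ 2 * batemanWeightedSum a b N (X * C y) ((1 - X) * C (1 - y)) (fun _ j => j * (j + b)) -
      X * (1 - X) * batemanWeightedSum a b N (X * C y) ((1 - X) * C (1 - y))
        (fun i j => 2 * i * j + (a + 1) * j + (b + 1) * i) := by
  rw [batemanPoly, ← batemanWeightedSum_one]
  simp only [batemanWeightedSum, map_sum, Derivation.map_smul, Finset.mul_sum,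
    ← Finset.sum_add_distrib, ← Finset.sum_sub_distrib]
  refine Finset.sum_congr rfl fun k _ => Finset.sum_congr rfl fun ij _ => ?_
  rw [mul_smul_comm, ← smul_add, jacobiOperator_monomial]
  simp only [smul_eq_C_mul, C_mul, C_1]
  ring

lemma jacobiOperator_batemanPoly (ha : -1 < a) (hb : -1 < b) (N : ℕ) (y : ℝ) :
    jacobiDerivation (jacobiDerivation (batemanPoly a b N y)) +
      (C a * (1 - X) - C b * X) * jacobiDerivation (batemanPoly a b N y) =
      X * (1 - X) * -(C (N * (N + (a + b + 1))) * batemanPoly a b N y) := by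
  have hab : -2 < a + b := by linarith
  have eigenvalue : C (N * (N + (a + b + 1))) * batemanPoly a b N y =
      batemanWeightedSum a b N (X * C y) ((1 - X) * C (1 - y))
        (fun i j => (a + b + 1 + N + (i + j)) * (N - (i + j))) +
      batemanWeightedSum a b N (X * C y) ((1 - X) * C (1 - y)) (fun i _ => i * (i + a)) +
      batemanWeightedSum a b N (X * C y) ((1 - X) * C (1 - y)) (fun _ j => j * (j + b)) +
      batemanWeightedSum a b N (X * C y) ((1 - X) * C (1 - y))
        (fun i j => 2 * i * j + (a + 1) * j + (b + 1) * i) := by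
    rw [batemanPoly, ← batemanWeightedSum_one, ← smul_eq_C_mul, smul_batemanWeightedSum,
      batemanWeightedSum_add, batemanWeightedSum_add, batemanWeightedSum_add]
    congr 1
    ext i j
    ring
  rw [jacobiOperator_batemanPoly_eq_weightedSum, eigenvalue, batemanWeightedSum_left ha hab,
    batemanWeightedSum_right hb hab]
  simp only [C_sub, C_1]
  ring

lemma hypergeometricODE_batemanPoly (ha : -1 < a) (hb : -1 < b) (N : ℕ) (y : ℝ) :
    X * (1 - X) * derivative (derivative (batemanPoly a b N y)) +
      (C (a + 1) - C (a + b + 2) * X) * derivative (batemanPoly a b N y) =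
      -(C (N * (N + (a + b + 1))) * batemanPoly a b N y) := by
  have hne : (X * (1 - X) : ℝ[X]) ≠ 0 :=
    mul_ne_zero X_ne_zero fun h => by simpa using congrArg (eval 0) h
  apply mul_left_cancel₀ hne
  rw [← jacobiOperator_batemanPoly ha hb]
  simp only [jacobiDerivation_apply, derivative_mul, derivative_X, derivative_sub, derivative_one,
    C_add, C_1, map_ofNat]
  ring

lemma coeff_succ_of_hypergeometricODE {f : ℝ[X]} {c d l : ℝ}
    (h : X * (1 - X) * derivative (derivative f) + (C c - C d * X) * derivative f = -(C l * f))
    (j : ℕ) : (j + 1) * (j + c) * f.coeff (j + 1) = (j * (j - 1 + d) - l) * f.coeff j := by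
  have expand : X * (1 - X) * derivative (derivative f) + (C c - C d * X) * derivative f =
      X * derivative (derivative f) - X * (X * derivative (derivative f)) +
        C c * derivative f - C d * (X * derivative f) := by ring
  rw [expand] at h
  have hj := congrArg (coeff · j) h
  rcases j with _ | _ | j <;>
  · simp only [coeff_sub, coeff_add, coeff_neg, coeff_C_mul, coeff_X_mul, coeff_derivative,
      mul_coeff_zero, coeff_X_zero, coeff_C_zero] at hj
    push_cast at hj ⊢
    linarith

lemma coeff_batemanPoly_succ (ha : -1 < a) (hb : -1 < b) (N : ℕ) (y : ℝ) (j : ℕ) :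
    ((j : ℝ) + 1) * (a + 1 + j) * (batemanPoly a b N y).coeff (j + 1) =
      -((N - j) * (N + j + (a + b + 1))) * (batemanPoly a b N y).coeff j := by
  linear_combination coeff_succ_of_hypergeometricODE (hypergeometricODE_batemanPoly ha hb N y) j

lemma jacobiCoeff_succ (ha : -1 < a) (hb : -1 < b) (N j : ℕ) :
    ((j : ℝ) + 1) * (a + 1 + j) * jacobiCoeff a b N (j + 1) =
      -((N - j) * (N + j + (a + b + 1))) * jacobiCoeff a b N j := by
  rcases N.eq_zero_or_pos with rfl | hN
  · rcases j with _ | j <;> simp [jacobiCoeff]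
  have hN' : (1 : ℝ) ≤ N := by exact_mod_cast hN
  have hpos : 0 < a + 1 + j := natCast_add_pos (by linarith) j
  have hΓ := (Gamma_pos_of_pos hpos).ne'
  unfold jacobiCoeff
  rw [Gamma_add_natCast_succ (by linarith : 0 < a + b + 1 + N),
    Gamma_add_natCast_succ (by linarith : 0 < a + 1)]
  field_simp
  linear_combination (-1) ^ (j + 1) * (a + b + 1 + N + j) *
    Gamma (a + b + 1 + N + j) * natCast_choose_succ_mul N j

lemma jacobiCoeff_zero_pos (ha : -1 < a) (hab : -1 < a + b) (N : ℕ) :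
    0 < jacobiCoeff a b N 0 := by
  have hs := Gamma_pos_of_pos (natCast_add_pos (by linarith : 0 < a + b + 1) N)
  have ha' := Gamma_pos_of_pos (by linarith : 0 < a + 1)
  simp only [jacobiCoeff, pow_zero, one_mul, Nat.cast_zero, add_zero, Nat.choose_zero_right,
    Nat.cast_one, mul_one]
  positivity

lemma coeff_jacobiPoly (a b : ℝ) (N j : ℕ) : (jacobiPoly a b N).coeff j = jacobiCoeff a b N j := by
  simp only [jacobiPoly, finsetSum_coeff, coeff_C_mul, coeff_X_pow, mul_ite, mul_one, mul_zero,
    Finset.sum_ite_eq, Finset.mem_range]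
  split_ifs with hj
  · rfl
  · simp [jacobiCoeff, Nat.choose_eq_zero_of_lt (by omega : N < j)]

lemma coeff_batemanPoly_mul (ha : -1 < a) (hb : -1 < b) (N : ℕ) (y : ℝ) (j : ℕ) :
    (batemanPoly a b N y).coeff j * jacobiCoeff a b N 0 =
      (batemanPoly a b N y).coeff 0 * jacobiCoeff a b N j := by
  induction j with
  | zero => rfl
  | succ j ih =>
    have hpos : 0 < a + 1 + j := natCast_add_pos (by linarith) j
    apply mul_left_cancel₀ (by positivity : ((j : ℝ) + 1) * (a + 1 + j) ≠ 0)
    linear_combination jacobiCoeff a b N 0 * coeff_batemanPoly_succ ha hb N y j -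
      (batemanPoly a b N y).coeff 0 * jacobiCoeff_succ ha hb N j -
      (N - j) * (N + j + (a + b + 1)) * ih

lemma batemanSum_mul_eq_eval (ha : -1 < a) (hb : -1 < b) (N : ℕ) (x y : ℝ) :
    batemanSum a b N (x * y) ((1 - x) * (1 - y)) * jacobiCoeff a b N 0 =
      batemanSum a b N 0 (1 - y) * (jacobiPoly a b N).eval x := by
  have hcoeff : (batemanPoly a b N y).coeff 0 = batemanSum a b N 0 (1 - y) := by
    simp [coeff_zero_eq_eval_zero, eval_batemanPoly]
  have hpoly : batemanPoly a b N y * C (jacobiCoeff a b N 0) =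
      C (batemanSum a b N 0 (1 - y)) * jacobiPoly a b N := by
    ext j
    rw [coeff_mul_C, coeff_C_mul, coeff_jacobiPoly, ← hcoeff, coeff_batemanPoly_mul ha hb]
  simpa [eval_batemanPoly] using congrArg (eval x) hpoly

theorem batemanSum_mul_sq_eq_eval_mul_eval (ha : -1 < a) (hb : -1 < b) (N : ℕ) (x y : ℝ) :
    batemanSum a b N (x * y) ((1 - x) * (1 - y)) * jacobiCoeff a b N 0 ^ 2 =
      batemanSum a b N 0 1 * (jacobiPoly a b N).eval x * (jacobiPoly a b N).eval y := by
  have hx := batemanSum_mul_eq_eval ha hb N x y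
  have hy := batemanSum_mul_eq_eval ha hb N y 0
  simp only [mul_zero, sub_zero, mul_one] at hy
  linear_combination jacobiCoeff a b N 0 * hx + (jacobiPoly a b N).eval x * hy

end Bateman

/-! ### Normalization of the trigonometric Jacobi polynomials -/

section Normalization

open Polynomial

lemma setIntegral_Ioo_rpow_mul_one_sub_rpow {u v : ℝ} (hu : 0 < u) (hv : 0 < v) :
    ∫ x in Ioo (0 : ℝ) 1, x ^ (u - 1) * (1 - x) ^ (v - 1) =
      Gamma u * Gamma v / Gamma (u + v) := by
  have hint : IntegrableOn (fun x : ℝ => (x : ℂ) ^ ((u : ℂ) - 1) * (1 - (x : ℂ)) ^ ((v : ℂ) - 1))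
      (Ioc 0 1) :=
    (intervalIntegrable_iff_integrableOn_Ioc_of_le zero_le_one).1
      (Complex.betaIntegral_convergent (by simpa) (by simpa))
  change _ = ProbabilityTheory.beta u v
  rw [ProbabilityTheory.beta_eq_betaIntegralReal u v hu hv, Complex.betaIntegral,
    intervalIntegral.integral_of_le zero_le_one, ← integral_Ioc_eq_integral_Ioo,
    ← RCLike.re_to_complex, ← integral_re hint]
  refine setIntegral_congr_fun measurableSet_Ioc fun x hx => ?_
  norm_cast
  rw [← Complex.ofReal_cpow hx.1.le, ← Complex.ofReal_cpow (by linarith [hx.2]),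
    RCLike.re_to_complex, Complex.re_mul_ofReal, Complex.ofReal_re]

lemma sum_range_neg_one_pow_mul_choose_succ (N : ℕ) (f : ℕ → ℝ) :
    ∑ m ∈ Finset.range (N + 2), (-1) ^ m * (N + 1).choose m * f m =
      ∑ m ∈ Finset.range (N + 1), (-1) ^ m * N.choose m * f m -
        ∑ m ∈ Finset.range (N + 1), (-1) ^ m * N.choose m * f (m + 1) := by
  have extend := Finset.sum_range_succ (fun m : ℕ => (-1) ^ m * N.choose m * f m) (N + 1)
  rw [Nat.choose_succ_self, Nat.cast_zero, mul_zero, zero_mul, add_zero] at extend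
  rw [← extend, Finset.sum_range_succ', Finset.sum_range_succ' _ (N + 1), add_sub_right_comm,
    ← Finset.sum_sub_distrib]
  simp only [Nat.choose_zero_right, add_left_inj]
  refine Finset.sum_congr rfl fun m _ => ?_
  rw [Nat.choose_succ_succ']
  push_cast
  ring

lemma sum_choose_mul_Gamma_div_Gamma (N : ℕ) {B C : ℝ} (hB : 0 < B) (hC : 0 < C) :
    ∑ m ∈ Finset.range (N + 1),
      (-1 : ℝ) ^ m * N.choose m * (Gamma (B + m) / Gamma (C + m)) =
      Gamma B * (descPochhammer ℝ N).eval (C - B + N - 1) / Gamma (C + N) := by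
  induction N generalizing B C with
  | zero => simp
  | succ N ih =>
    have hCN : 0 < C + N := natCast_add_pos hC N
    have hΓ := (Gamma_pos_of_pos hCN).ne'
    have hdesc : (descPochhammer ℝ (N + 1)).eval (C - B + (N + 1 : ℕ) - 1) =
        (C - B + N) * (descPochhammer ℝ N).eval (C - B + N - 1) := by
      rw [descPochhammer_succ_left, Nat.cast_add_one, ← add_assoc, add_sub_cancel_right]
      simp
    have shift (m : ℕ) : Gamma (B + (m + 1 : ℕ)) / Gamma (C + (m + 1 : ℕ)) =
        Gamma (B + 1 + m) / Gamma (C + 1 + m) := by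
      rw [Nat.cast_add_one, add_right_comm B, add_right_comm C, add_assoc B, add_assoc C]
    rw [sum_range_neg_one_pow_mul_choose_succ N fun m => Gamma (B + m) / Gamma (C + m), ih hB hC]
    simp only [shift]
    rw [ih (by linarith) (by linarith), hdesc, add_sub_add_right_eq_sub,
      Gamma_add_one hB.ne', add_right_comm C, Gamma_add_one hCN.ne', Gamma_add_natCast_succ hC]
    field_simp
    ring

lemma jacobiMeasurePlus_eq_withDensity (a b : ℝ) : jacobiMeasurePlus a b =
    (volume.restrict (Ioo 0 π)).withDensity fun θ => ENNReal.ofReal (jPsi a b θ ^ 2) := by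
  rw [jacobiMeasurePlus, jacobiMeasure, restrict_withDensity measurableSet_Ioo,
    Measure.restrict_restrict_of_subset (Ioo_subset_Ioo_left (by linarith [pi_pos]))]

lemma measurable_ofReal_jPsi_sq (a b : ℝ) :
    Measurable fun θ => ENNReal.ofReal (jPsi a b θ ^ 2) := by
  unfold jPsi
  fun_prop

lemma sin_half_pos {θ : ℝ} (h : θ ∈ Ioo 0 π) : 0 < sin (θ / 2) :=
  sin_pos_of_pos_of_lt_pi (by linarith [h.1]) (by linarith [h.2, pi_pos])

lemma cos_half_pos {θ : ℝ} (h : θ ∈ Ioo 0 π) : 0 < cos (θ / 2) :=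
  cos_pos_of_mem_Ioo ⟨by linarith [h.1, pi_pos], by linarith [h.2]⟩

lemma sin_half_sq (θ : ℝ) : sin (θ / 2) ^ 2 = (1 - cos θ) / 2 := by
  rw [sin_sq_eq_half_sub, mul_div_cancel₀ θ two_ne_zero]
  ring

lemma jPsi_sq_eq (a b : ℝ) {θ : ℝ} (h : θ ∈ Ioo 0 π) :
    jPsi a b θ ^ 2 = sin (θ / 2) ^ (2 * a + 1) * cos (θ / 2) ^ (2 * b + 1) := by
  rw [jPsi, abs_of_pos (sin_half_pos h), mul_pow, ← rpow_mul_natCast (sin_half_pos h).le,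
    ← rpow_mul_natCast (cos_half_pos h).le]
  congr 2 <;> push_cast <;> ring

lemma image_sin_half_sq_Ioo : (fun θ => sin (θ / 2) ^ 2) '' Ioo 0 π = Ioo 0 1 := by
  ext x
  simp only [sin_half_sq, mem_image]
  constructor
  · rintro ⟨θ, hθ, rfl⟩
    have hcos := mapsTo_cos_Ioo hθ
    exact ⟨by linarith [hcos.2], by linarith [hcos.1]⟩
  · intro hx
    refine ⟨arccos (1 - 2 * x), ⟨arccos_pos.2 (by linarith [hx.1]), ?_⟩, ?_⟩
    · exact arccos_lt_pi.2 (by linarith [hx.2])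
    · rw [cos_arccos (by linarith [hx.2]) (by linarith [hx.1])]
      ring

lemma injOn_sin_half_sq : InjOn (fun θ => sin (θ / 2) ^ 2) (Ioo 0 π) := fun θ hθ φ hφ h =>
  injOn_cos (Ioo_subset_Icc_self hθ) (Ioo_subset_Icc_self hφ) (by
    simp only [sin_half_sq] at h
    linarith)

lemma integral_jacobiMeasurePlus_comp_sin_half_sq (a b : ℝ) (g : ℝ → ℝ) :
    ∫ θ, g (sin (θ / 2) ^ 2) ∂jacobiMeasurePlus a b =
      ∫ x in Ioo (0 : ℝ) 1, x ^ a * (1 - x) ^ b * g x := by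
  have hderiv (θ : ℝ) (_ : θ ∈ Ioo 0 π) : HasDerivWithinAt (fun θ => sin (θ / 2) ^ 2)
      (sin (θ / 2) * cos (θ / 2)) (Ioo 0 π) θ :=
    ((((hasDerivAt_id θ).div_const 2).sin.pow 2).congr_deriv
      (by simp only [id]; push_cast; ring)).hasDerivWithinAt
  rw [jacobiMeasurePlus_eq_withDensity, integral_withDensity_eq_integral_toReal_smul
    (measurable_ofReal_jPsi_sq a b) (by simp), ← image_sin_half_sq_Ioo,
    integral_image_eq_integral_abs_deriv_smul measurableSet_Ioo hderiv injOn_sin_half_sq]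
  refine setIntegral_congr_fun measurableSet_Ioo fun θ hθ => ?_
  have hs := sin_half_pos hθ
  have hc := cos_half_pos hθ
  simp only [smul_eq_mul]
  rw [ENNReal.toReal_ofReal (sq_nonneg _), jPsi_sq_eq a b hθ, abs_of_pos (mul_pos hs hc),
    ← cos_sq', ← rpow_natCast_mul hs.le, ← rpow_natCast_mul hc.le, rpow_add_one hs.ne',
    rpow_add_one hc.ne']
  push_cast
  ring

variable {a b : ℝ}

lemma integral_jacobiMeasurePlus_pow_mul_pow (ha : -1 < a) (hb : -1 < b) (m n : ℕ) :
    ∫ θ, (sin (θ / 2) ^ 2) ^ m * (1 - sin (θ / 2) ^ 2) ^ n ∂jacobiMeasurePlus a b =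
      Gamma (a + 1 + m) * Gamma (b + 1 + n) / Gamma (a + b + 2 + n + m) := by
  rw [integral_jacobiMeasurePlus_comp_sin_half_sq a b fun x => x ^ m * (1 - x) ^ n,
    show a + b + 2 + n + m = (a + 1 + m) + (b + 1 + n) by ring,
    ← setIntegral_Ioo_rpow_mul_one_sub_rpow (natCast_add_pos (by linarith) m)
      (natCast_add_pos (by linarith) n)]
  refine setIntegral_congr_fun measurableSet_Ioo fun x hx => ?_
  rw [add_right_comm, add_right_comm b, add_sub_cancel_right, add_sub_cancel_right,
    rpow_add_natCast hx.1.ne', rpow_add_natCast (sub_pos.2 hx.2).ne']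
  ring

lemma integrable_jacobiMeasurePlus_comp_sin_half_sq (ha : -1 < a) (hb : -1 < b) {g : ℝ → ℝ}
    (hg : Continuous g) :
    Integrable (fun θ => g (sin (θ / 2) ^ 2)) (jacobiMeasurePlus a b) := by
  have hone : Integrable (fun _ => (1 : ℝ)) (jacobiMeasurePlus a b) := by
    apply Integrable.of_integral_ne_zero
    have hmoment := integral_jacobiMeasurePlus_pow_mul_pow ha hb 0 0
    simp only [pow_zero, mul_one, Nat.cast_zero, add_zero] at hmoment
    rw [hmoment]
    have hΓa := Gamma_pos_of_pos (by linarith : 0 < a + 1)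
    have hΓb := Gamma_pos_of_pos (by linarith : 0 < b + 1)
    have hΓab := Gamma_pos_of_pos (by linarith : 0 < a + b + 2)
    positivity
  obtain ⟨C, hC⟩ := isCompact_Icc.exists_bound_of_continuousOn
    (hg.continuousOn : ContinuousOn g (Icc 0 1))
  refine (hone.const_mul C).mono' (by fun_prop) (ae_of_all _ fun θ => ?_)
  rw [mul_one]
  exact hC _ ⟨sq_nonneg _, sin_sq_le_one _⟩

lemma integral_one_sub_pow_mul_jacobiPoly (ha : -1 < a) (hb : -1 < b) (hab : -1 < a + b)
    (N n : ℕ) :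
    ∫ θ, (1 - sin (θ / 2) ^ 2) ^ n * (jacobiPoly a b N).eval (sin (θ / 2) ^ 2)
      ∂jacobiMeasurePlus a b =
      Gamma (b + 1 + n) * Gamma (a + b + 1 + N) * n.descFactorial N /
        (N.factorial * Gamma (a + b + 2 + n + N)) := by
  have expand (x : ℝ) : (1 - x) ^ n * (jacobiPoly a b N).eval x =
      ∑ j ∈ Finset.range (N + 1), jacobiCoeff a b N j * (x ^ j * (1 - x) ^ n) := by
    simp only [jacobiPoly, eval_finsetSum, eval_mul, eval_C, eval_pow, eval_X, Finset.mul_sum]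
    exact Finset.sum_congr rfl fun j _ => by ring
  have term (j : ℕ) : jacobiCoeff a b N j *
      (Gamma (a + 1 + j) * Gamma (b + 1 + n) / Gamma (a + b + 2 + n + j)) =
      Gamma (b + 1 + n) / N.factorial * ((-1) ^ j * N.choose j *
        (Gamma (a + b + 1 + N + j) / Gamma (a + b + 2 + n + j))) := by
    have hΓ := (Gamma_pos_of_pos (natCast_add_pos (by linarith : 0 < a + 1) j)).ne'
    rw [jacobiCoeff]
    field_simp
  simp only [expand]
  rw [integral_finsetSum _ fun j _ =>
    (integrable_jacobiMeasurePlus_comp_sin_half_sq ha hb (g := fun x => x ^ j * (1 - x) ^ n)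
      (by fun_prop)).const_mul _]
  simp only [integral_const_mul, integral_jacobiMeasurePlus_pow_mul_pow ha hb, term]
  rw [← Finset.mul_sum, sum_choose_mul_Gamma_div_Gamma N
      (natCast_add_pos (by linarith) N) (natCast_add_pos (by linarith) n),
    show a + b + 2 + n - (a + b + 1 + N) + N - 1 = (n : ℝ) by ring,
    descPochhammer_eval_eq_descFactorial]
  field_simp

lemma batemanSum_zero_left (a b : ℝ) (N : ℕ) (y : ℝ) :
    batemanSum a b N 0 y = ∑ k ∈ Finset.range (N + 1),
      batemanWeight (a + b + 1) N k * batemanCoeff a b 0 k * y ^ k := by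
  refine Finset.sum_congr rfl fun k _ => ?_
  rw [batemanForm, Finset.sum_eq_single_of_mem (0, k) (by simp)]
  · simp [mul_assoc]
  · intro ij hij hne
    have : ij.1 ≠ 0 := fun h0 => hne <| Prod.ext h0 <| by
      simpa [h0] using Finset.HasAntidiagonal.mem_antidiagonal.1 hij
    simp [this]

lemma eval_zero_jacobiPoly (a b : ℝ) (N : ℕ) :
    (jacobiPoly a b N).eval 0 = jacobiCoeff a b N 0 := by
  rw [← coeff_zero_eq_eval_zero, coeff_jacobiPoly]

lemma batemanSum_mul_eval_sq (ha : -1 < a) (hb : -1 < b) (hab : -1 < a + b) (N : ℕ) (x : ℝ) :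
    batemanSum a b N 0 1 * (jacobiPoly a b N).eval x ^ 2 =
      ∑ k ∈ Finset.range (N + 1), jacobiCoeff a b N 0 * batemanWeight (a + b + 1) N k *
        batemanCoeff a b 0 k * ((1 - x) ^ k * (jacobiPoly a b N).eval x) := by
  have hprod := batemanSum_mul_sq_eq_eval_mul_eval ha hb N 0 x
  rw [eval_zero_jacobiPoly, zero_mul, sub_zero, one_mul] at hprod
  have hcancel : batemanSum a b N 0 1 * (jacobiPoly a b N).eval x =
      jacobiCoeff a b N 0 * batemanSum a b N 0 (1 - x) := by
    apply mul_left_cancel₀ (jacobiCoeff_zero_pos ha hab N).ne'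
    linear_combination -hprod
  rw [sq, ← mul_assoc, hcancel, batemanSum_zero_left, Finset.mul_sum, Finset.sum_mul]
  exact Finset.sum_congr rfl fun k _ => by ring

-- Only the term `k = N` of `batemanSum_mul_eval_sq` survives: the others are orthogonal to
-- `jacobiPoly a b N` for reasons of degree.
lemma batemanSum_mul_integral_jacobiPoly_sq (ha : -1 < a) (hb : -1 < b) (hab : -1 < a + b)
    (N : ℕ) :
    (a + b + 1 + 2 * N) * (batemanSum a b N 0 1 *
      ∫ θ, (jacobiPoly a b N).eval (sin (θ / 2) ^ 2) ^ 2 ∂jacobiMeasurePlus a b) =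
      jacobiCoeff a b N 0 ^ 2 := by
  have hs : 0 < a + b + 1 + N := natCast_add_pos (by linarith) N
  have hΓa := (Gamma_pos_of_pos (by linarith : 0 < a + 1)).ne'
  have hΓb := (Gamma_pos_of_pos (natCast_add_pos (by linarith : 0 < b + 1) N)).ne'
  have hΓs := (Gamma_pos_of_pos (natCast_add_pos hs N)).ne'
  have hdeg : a + b + 1 + N + N ≠ 0 := (natCast_add_pos hs N).ne'
  rw [← integral_const_mul]
  simp only [batemanSum_mul_eval_sq ha hb hab]
  rw [integral_finsetSum _ fun k _ => (integrable_jacobiMeasurePlus_comp_sin_half_sq ha hb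
    (g := fun x => (1 - x) ^ k * (jacobiPoly a b N).eval x) (by fun_prop)).const_mul _]
  simp only [integral_const_mul, integral_one_sub_pow_mul_jacobiPoly ha hb hab]
  rw [Finset.sum_range_succ, Finset.sum_eq_zero fun k hk => by
      rw [Nat.descFactorial_of_lt (Finset.mem_range.1 hk), Nat.cast_zero, mul_zero, zero_div,
        mul_zero],
    zero_add, Nat.descFactorial_self,
    show a + b + 2 + N + N = a + b + 1 + N + N + 1 by ring, Gamma_add_one hdeg]
  simp only [jacobiCoeff, batemanWeight, batemanCoeff, Nat.descFactorial_self, ← two_mul, pow_mul,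
    neg_one_sq, one_pow, pow_zero, Nat.cast_zero, Nat.choose_zero_right, Nat.factorial_zero,
    Nat.cast_one, add_zero, one_mul, mul_one]
  rw [show a + b + 1 + 2 * N = a + b + 1 + N + N by ring]
  field_simp

lemma jacobiP_cos_eq (a b : ℝ) (N : ℕ) (θ : ℝ) : jacobiP a b N (cos θ) =
    Gamma (a + N + 1) / Gamma (a + b + N + 1) * (jacobiPoly a b N).eval (sin (θ / 2) ^ 2) := by
  simp only [jacobiP, jacobiPoly, eval_finsetSum, eval_mul, eval_C, eval_pow, eval_X,
    Finset.mul_sum]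
  refine Finset.sum_congr rfl fun j hj => ?_
  rw [show (cos θ - 1) / 2 = -sin (θ / 2) ^ 2 by rw [sin_half_sq]; ring, neg_pow, jacobiCoeff,
    Nat.cast_choose ℝ (Finset.mem_range_succ_iff.1 hj),
    show a + b + 1 + N + j = a + b + N + j + 1 by ring, add_right_comm a 1]
  field_simp

theorem trigP_mul_trigP (ha : -1 < a) (hb : -1 < b) (hab : -1 < a + b) (N : ℕ) (θ φ : ℝ) :
    trigP a b N θ * trigP a b N φ = (a + b + 1 + 2 * N) *
      batemanSum a b N ((sin (θ / 2) * sin (φ / 2)) ^ 2) ((cos (θ / 2) * cos (φ / 2)) ^ 2) := by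
  set K := Gamma (a + N + 1) / Gamma (a + b + N + 1) with hK
  have hKpos : 0 < K := div_pos (Gamma_pos_of_pos (by linarith)) (Gamma_pos_of_pos (by linarith))
  have hcoeff := pow_pos (jacobiCoeff_zero_pos ha hab N) 2
  have hnorm := batemanSum_mul_integral_jacobiPoly_sq ha hb hab N
  set I := ∫ θ, (jacobiPoly a b N).eval (sin (θ / 2) ^ 2) ^ 2 ∂jacobiMeasurePlus a b with hI
  have hIpos : 0 < I := (integral_nonneg fun θ => sq_nonneg _).lt_of_ne fun h0 : 0 = I => by
    rw [← h0, mul_zero, mul_zero] at hnorm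
    exact hcoeff.ne hnorm
  have hcJ : cJ a b N ^ 2 = (K ^ 2 * I)⁻¹ := by
    simp only [cJ, jacobiP_cos_eq, ← hK, mul_pow, integral_const_mul, ← hI]
    rw [← rpow_mul_natCast (by positivity), ← rpow_neg_one]
    norm_num
  have hprod := batemanSum_mul_sq_eq_eval_mul_eval ha hb N (sin (θ / 2) ^ 2) (sin (φ / 2) ^ 2)
  rw [← cos_sq', ← cos_sq', ← mul_pow, ← mul_pow] at hprod
  generalize batemanSum a b N ((sin (θ / 2) * sin (φ / 2)) ^ 2)
    ((cos (θ / 2) * cos (φ / 2)) ^ 2) = Q at hprod ⊢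
  rw [trigP, trigP, jacobiP_cos_eq, jacobiP_cos_eq, ← hK, mul_mul_mul_comm, ← sq, hcJ]
  field_simp
  apply mul_left_cancel₀ hcoeff.ne'
  linear_combination (-((jacobiPoly a b N).eval (sin (θ / 2) ^ 2) *
    (jacobiPoly a b N).eval (sin (φ / 2) ^ 2))) * hnorm - I * (a + b + 1 + 2 * N) * hprod

end Normalization

/-! ### Moments of the ultraspherical measures -/

section UltrasphericalMeasure

/-- The ultraspherical measure of index `a`: the measure on `(-1, 1)` with density
`(1 - u²)^(a - 1/2)`. Products of two of them carry the integral representation of the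
Jacobi–Poisson kernel. -/
def ultrasphericalMeasure (a : ℝ) : Measure ℝ :=
  (volume.restrict (Ioo (-1) 1)).withDensity fun u => ENNReal.ofReal ((1 - u ^ 2) ^ (a - 1 / 2))

lemma one_sub_sq_pos {u : ℝ} (hu : u ∈ Ioo (-1) 1) : 0 < 1 - u ^ 2 := by nlinarith [hu.1, hu.2]

lemma ae_ultrasphericalMeasure_mem (a : ℝ) : ∀ᵐ u ∂ultrasphericalMeasure a, u ∈ Ioo (-1) 1 :=
  (withDensity_absolutelyContinuous _ _).ae_le (ae_restrict_mem measurableSet_Ioo)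

lemma integral_ultrasphericalMeasure (a : ℝ) (g : ℝ → ℝ) :
    ∫ u, g u ∂ultrasphericalMeasure a = ∫ u in Ioo (-1) 1, (1 - u ^ 2) ^ (a - 1 / 2) * g u := by
  rw [ultrasphericalMeasure,
    integral_withDensity_eq_integral_toReal_smul (by fun_prop) (by simp)]
  refine setIntegral_congr_fun measurableSet_Ioo fun u hu => ?_
  simp only [smul_eq_mul]
  rw [ENNReal.toReal_ofReal (rpow_nonneg (one_sub_sq_pos hu).le _)]

lemma integral_ultrasphericalMeasure_pow_of_odd (a : ℝ) {k : ℕ} (hk : Odd k) :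
    ∫ u, u ^ k ∂ultrasphericalMeasure a = 0 := by
  have hneg := intervalIntegral.integral_comp_neg (a := -1) (b := 1)
    fun u : ℝ => (1 - u ^ 2) ^ (a - 1 / 2) * u ^ k
  simp only [neg_sq, hk.neg_pow, neg_neg, mul_neg, intervalIntegral.integral_neg] at hneg
  rw [integral_ultrasphericalMeasure, ← integral_Ioc_eq_integral_Ioo,
    ← intervalIntegral.integral_of_le (by norm_num)]
  linarith

lemma Gamma_natCast_add_half (m : ℕ) :
    Gamma (m + 1 / 2) = √π * (2 * m).factorial / (4 ^ m * m.factorial) := by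
  have hdup := Gamma_mul_Gamma_add_half (m + 1 / 2)
  have hpow : (2 : ℝ) ^ (1 - 2 * ((m : ℝ) + 1 / 2)) = (4 ^ m)⁻¹ := by
    rw [show 1 - 2 * ((m : ℝ) + 1 / 2) = -(2 * m : ℕ) by push_cast; ring, rpow_neg two_pos.le,
      rpow_natCast, pow_mul]
    norm_num
  rw [show (m : ℝ) + 1 / 2 + 1 / 2 = m + 1 by ring, Gamma_nat_eq_factorial, hpow,
    show 2 * ((m : ℝ) + 1 / 2) = (2 * m : ℕ) + 1 by push_cast; ring,
    Gamma_nat_eq_factorial] at hdup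
  rw [eq_div_iff (by positivity), mul_left_comm, hdup]
  field_simp

variable {a b : ℝ}

-- The substitution `y = u²` turns the even moments into Beta integrals.
lemma setIntegral_one_sub_sq_rpow_mul_pow (ha : -(1 / 2) < a) (m : ℕ) :
    ∫ u in Ioo (-1 : ℝ) 1, (1 - u ^ 2) ^ (a - 1 / 2) * u ^ (2 * m) =
      Gamma (m + 1 / 2) * Gamma (a + 1 / 2) / Gamma (a + 1 + m) := by
  set f : ℝ → ℝ := (Iio 1).indicator fun u => (1 - u ^ 2) ^ (a - 1 / 2) * u ^ (2 * m) with hf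
  set g : ℝ → ℝ := (Iio 1).indicator
    fun y => y ^ ((m + 1 / 2 : ℝ) - 1) * (1 - y) ^ (a + 1 / 2 - 1) with hg
  have hfold : ∫ u in Ioo (-1 : ℝ) 1, (1 - u ^ 2) ^ (a - 1 / 2) * u ^ (2 * m) =
      2 * ∫ u in Ioi 0, f u := by
    rw [← integral_comp_abs, ← integral_indicator measurableSet_Ioo]
    refine integral_congr_ae (ae_of_all _ fun u => ?_)
    simp only [hf, indicator_apply, mem_Iio, abs_lt, mem_Ioo, sq_abs,
      (even_two_mul m).pow_abs]
  have hsubst : ∫ u in Ioi 0, 2 * f u = ∫ y in Ioi 0, g y := by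
    rw [← integral_comp_rpow_Ioi_of_pos (g := g) two_pos]
    refine setIntegral_congr_fun measurableSet_Ioi fun u (hu : 0 < u) => ?_
    simp only [hf, hg, indicator_apply, mem_Iio, rpow_two, sq_lt_one_iff₀ hu.le, smul_eq_mul]
    split_ifs
    · rw [← rpow_natCast_mul hu.le, Nat.cast_ofNat, show (2 : ℝ) - 1 = 1 by norm_num, rpow_one,
        show 2 * ((m : ℝ) + 1 / 2 - 1) = (2 * m : ℕ) - 1 by push_cast; ring,
        rpow_sub_one hu.ne', rpow_natCast]
      field_simp
      ring_nf
    · simp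
  rw [hfold, ← integral_const_mul, hsubst, hg, setIntegral_indicator measurableSet_Iio,
    Ioi_inter_Iio, setIntegral_Ioo_rpow_mul_one_sub_rpow (by positivity) (by linarith),
    show (m : ℝ) + 1 / 2 + (a + 1 / 2) = a + 1 + m by ring]

lemma integral_ultrasphericalMeasure_pow_two_mul (ha : -(1 / 2) < a) (m : ℕ) :
    ∫ u, u ^ (2 * m) ∂ultrasphericalMeasure a =
      √π * Gamma (a + 1 / 2) * (2 * m).factorial / (4 ^ m * m.factorial * Gamma (a + 1 + m)) := by
  rw [integral_ultrasphericalMeasure, setIntegral_one_sub_sq_rpow_mul_pow ha,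
    Gamma_natCast_add_half]
  field_simp

lemma isFiniteMeasure_ultrasphericalMeasure (ha : -(1 / 2) < a) :
    IsFiniteMeasure (ultrasphericalMeasure a) := by
  have hmass : ∫ u in Ioo (-1 : ℝ) 1, (1 - u ^ 2) ^ (a - 1 / 2) ≠ 0 := by
    have hmoment := setIntegral_one_sub_sq_rpow_mul_pow ha 0
    simp only [mul_zero, pow_zero, mul_one, Nat.cast_zero, zero_add, add_zero] at hmoment
    rw [hmoment]
    exact (div_pos (mul_pos (Gamma_pos_of_pos (by norm_num)) (Gamma_pos_of_pos (by linarith)))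
      (Gamma_pos_of_pos (by linarith))).ne'
  exact isFiniteMeasure_withDensity_ofReal (Integrable.of_integral_ne_zero hmass).2

lemma integrable_ultrasphericalMeasure_pow (ha : -(1 / 2) < a) (k : ℕ) :
    Integrable (fun u => u ^ k) (ultrasphericalMeasure a) := by
  have := isFiniteMeasure_ultrasphericalMeasure ha
  refine Integrable.of_bound (by fun_prop) 1 ?_
  filter_upwards [ae_ultrasphericalMeasure_mem a] with u hu
  rw [norm_pow]
  exact pow_le_one₀ (norm_nonneg _) (abs_le.2 ⟨hu.1.le, hu.2.le⟩)

/-- The product of two ultraspherical measures, on the square `(-1, 1)²`. -/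
abbrev ultrasphericalProd (a b : ℝ) : Measure (ℝ × ℝ) :=
  (ultrasphericalMeasure a).prod (ultrasphericalMeasure b)

/-- The square `(-1, 1)²`, the domain of integration in the integral representation. -/
abbrev openSquare : Set (ℝ × ℝ) := Ioo (-1) 1 ×ˢ Ioo (-1) 1

lemma isFiniteMeasure_ultrasphericalProd (ha : -(1 / 2) < a) (hb : -(1 / 2) < b) :
    IsFiniteMeasure (ultrasphericalProd a b) := by
  have := isFiniteMeasure_ultrasphericalMeasure ha
  have := isFiniteMeasure_ultrasphericalMeasure hb
  infer_instance

lemma ae_ultrasphericalProd_mem (a b : ℝ) :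
    ∀ᵐ q ∂ultrasphericalProd a b, q ∈ openSquare := by
  have : SFinite (ultrasphericalMeasure a) := by unfold ultrasphericalMeasure; infer_instance
  have : SFinite (ultrasphericalMeasure b) := by unfold ultrasphericalMeasure; infer_instance
  exact (Measure.quasiMeasurePreserving_fst.ae (ae_ultrasphericalMeasure_mem a)).and
    (Measure.quasiMeasurePreserving_snd.ae (ae_ultrasphericalMeasure_mem b))

lemma integral_linearForm_pow (ha : -(1 / 2) < a) (hb : -(1 / 2) < b) (s c : ℝ) (n : ℕ) :
    ∫ q, (q.1 * s + q.2 * c) ^ n ∂ultrasphericalProd a b =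
      ∑ ij ∈ antidiagonal n, n.choose ij.1 * (s ^ ij.1 * c ^ ij.2) *
        ((∫ u, u ^ ij.1 ∂ultrasphericalMeasure a) * ∫ v, v ^ ij.2 ∂ultrasphericalMeasure b) := by
  have := isFiniteMeasure_ultrasphericalMeasure ha
  have := isFiniteMeasure_ultrasphericalMeasure hb
  have expand (q : ℝ × ℝ) : (q.1 * s + q.2 * c) ^ n = ∑ ij ∈ antidiagonal n,
      n.choose ij.1 * (s ^ ij.1 * c ^ ij.2) * (q.1 ^ ij.1 * q.2 ^ ij.2) := by
    rw [(Commute.all (q.1 * s) (q.2 * c)).add_pow']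
    refine Finset.sum_congr rfl fun ij _ => ?_
    rw [nsmul_eq_mul, mul_pow, mul_pow]
    ring
  simp only [expand]
  rw [integral_finsetSum _ fun ij _ => ((integrable_ultrasphericalMeasure_pow ha ij.1).mul_prod
    (integrable_ultrasphericalMeasure_pow hb ij.2)).const_mul _]
  refine Finset.sum_congr rfl fun ij _ => ?_
  rw [integral_const_mul, integral_prod_mul (fun u => u ^ ij.1) fun v => v ^ ij.2]

lemma integral_linearForm_pow_of_odd (ha : -(1 / 2) < a) (hb : -(1 / 2) < b) (s c : ℝ) {n : ℕ}
    (hn : Odd n) :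
    ∫ q, (q.1 * s + q.2 * c) ^ n ∂ultrasphericalProd a b = 0 := by
  rw [integral_linearForm_pow ha hb]
  refine Finset.sum_eq_zero fun ij hij => ?_
  rw [← Finset.HasAntidiagonal.mem_antidiagonal.1 hij, Nat.odd_add] at hn
  rcases Nat.even_or_odd ij.2 with heven | hodd
  · rw [integral_ultrasphericalMeasure_pow_of_odd a (hn.2 heven), zero_mul, mul_zero]
  · rw [integral_ultrasphericalMeasure_pow_of_odd b hodd, mul_zero, mul_zero]

lemma sum_antidiagonal_two_mul {M : Type*} [AddCommMonoid M] (k : ℕ) {f : ℕ × ℕ → M}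
    (hf : ∀ ij, Odd ij.1 → f ij = 0) :
    ∑ ij ∈ antidiagonal (2 * k), f ij = ∑ ij ∈ antidiagonal k, f (2 * ij.1, 2 * ij.2) := by
  symm
  refine Finset.sum_of_injOn (fun ij => (2 * ij.1, 2 * ij.2)) ?_ ?_ ?_ fun _ _ => rfl
  · rintro ⟨i, j⟩ _ ⟨i', j'⟩ _ h
    simpa using h
  · rintro ⟨i, j⟩ h
    simp only [Finset.mem_coe, Finset.HasAntidiagonal.mem_antidiagonal] at h ⊢
    lia
  · rintro ⟨i, j⟩ h hnot
    rw [Finset.HasAntidiagonal.mem_antidiagonal] at h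
    refine hf _ (Nat.not_even_iff_odd.1 ?_)
    rintro ⟨i', hi'⟩
    refine hnot ⟨(i', k - i'), ?_, ?_⟩
    · simp only [Finset.mem_coe, Finset.HasAntidiagonal.mem_antidiagonal] at h ⊢
      lia
    · simp only at h hi'
      exact Prod.ext (by dsimp only; lia) (by dsimp only; lia)

lemma integral_linearForm_pow_two_mul (ha : -(1 / 2) < a) (hb : -(1 / 2) < b) (s c : ℝ) (k : ℕ) :
    4 ^ k * ∫ q, (q.1 * s + q.2 * c) ^ (2 * k)
        ∂ultrasphericalProd a b =
      π * Gamma (a + 1 / 2) * Gamma (b + 1 / 2) * (2 * k).factorial *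
        batemanForm a b (s ^ 2) (c ^ 2) k := by
  rw [integral_linearForm_pow ha hb, sum_antidiagonal_two_mul k fun ij hodd => by
      rw [integral_ultrasphericalMeasure_pow_of_odd a hodd, zero_mul, mul_zero],
    batemanForm, Finset.mul_sum, Finset.mul_sum]
  refine Finset.sum_congr rfl fun ⟨i, j⟩ hij => ?_
  obtain rfl : i + j = k := Finset.HasAntidiagonal.mem_antidiagonal.1 hij
  have hΓa := (Gamma_pos_of_pos (natCast_add_pos (by linarith : 0 < a + 1) i)).ne'
  have hΓb := (Gamma_pos_of_pos (natCast_add_pos (by linarith : 0 < b + 1) j)).ne'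
  simp only [integral_ultrasphericalMeasure_pow_two_mul ha,
    integral_ultrasphericalMeasure_pow_two_mul hb, batemanCoeff, smul_eq_mul]
  rw [Nat.cast_choose ℝ (by lia), show 2 * (i + j) - 2 * i = 2 * j by lia]
  generalize Gamma (a + 1 + i) = Γa at hΓa ⊢
  generalize Gamma (b + 1 + j) = Γb at hΓb ⊢
  field_simp
  rw [sq_sqrt pi_pos.le]
  ring

end UltrasphericalMeasure

/-! ### Generating functions -/

section GeneratingFunctions

lemma Gamma_mul_multichoose {D : ℝ} (hD : 0 < D) (n : ℕ) :
    Gamma D * Ring.multichoose D n = Gamma (D + n) / n.factorial := by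
  have hasc : (ascPochhammer ℝ n).eval D * Gamma D = Gamma (D + n) := by
    induction n with
    | zero => simp
    | succ n ih =>
      rw [Gamma_add_natCast_succ hD, ← ih, ascPochhammer_succ_eval]
      ring
  have hfact := Ring.factorial_nsmul_multichoose_eq_ascPochhammer D n
  rw [Polynomial.ascPochhammer_smeval_cast, Polynomial.ascPochhammer_smeval_eq_eval,
    nsmul_eq_mul] at hfact
  rw [← hasc, ← hfact]
  field_simp

lemma multichoose_pos {D : ℝ} (hD : 0 < D) (n : ℕ) : 0 < Ring.multichoose D n := by
  refine pos_of_mul_pos_right ?_ (Gamma_pos_of_pos hD).le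
  rw [Gamma_mul_multichoose hD]
  exact div_pos (Gamma_pos_of_pos (natCast_add_pos hD n)) (by positivity)

lemma hasSum_multichoose_mul_pow (D : ℝ) {z : ℂ} (hz : ‖z‖ < 1) :
    HasSum (fun n => ((Ring.multichoose D n : ℝ) : ℂ) * z ^ n) (1 / (1 - z) ^ (D : ℂ)) := by
  have hsum := (Complex.one_div_one_sub_cpow_hasFPowerSeriesOnBall_zero D).hasSum (y := z)
    (by simpa [enorm_eq_nnnorm, ← NNReal.coe_lt_coe] using hz)
  rw [zero_add] at hsum
  refine hsum.congr_fun fun n => ?_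
  have hcoeff : Ring.choose ((D : ℂ) + n - 1) n = ((Ring.multichoose D n : ℝ) : ℂ) := by
    rw [Ring.multichoose_eq, Complex.ofReal_choose]
    push_cast
    rfl
  simp [hcoeff, mul_comm]

lemma hasSum_multichoose_mul_pow_real (D : ℝ) {x : ℝ} (hx : |x| < 1) :
    HasSum (fun n => Ring.multichoose D n * x ^ n) ((1 - x) ^ (-D)) := by
  have hsum := (one_div_one_sub_rpow_hasFPowerSeriesOnBall_zero D).hasSum (y := x)
    (by simpa [enorm_eq_nnnorm, ← NNReal.coe_lt_coe] using hx)
  rw [zero_add, one_div, ← rpow_neg (by linarith [(abs_lt.1 hx).2])] at hsum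
  refine hsum.congr_fun fun n => ?_
  simp [Ring.multichoose_eq, mul_comm]

lemma hasSum_sum_antidiagonal {F : ℕ × ℕ → ℝ} {T : ℝ} (h : HasSum F T) :
    HasSum (fun n => ∑ kl ∈ antidiagonal n, F kl) T :=
  (Finset.HasAntidiagonal.sigmaAntidiagonalEquivProd.hasSum_iff.2 h).sigma fun n =>
    Finset.hasSum (antidiagonal n) F

lemma summable_prod_of_summable_sum_antidiagonal {F : ℕ × ℕ → ℝ} (hF : ∀ kl, 0 ≤ F kl)
    (h : Summable fun n => ∑ kl ∈ antidiagonal n, F kl) : Summable F := by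
  refine Finset.HasAntidiagonal.sigmaAntidiagonalEquivProd.summable_iff.1
    ((summable_sigma_of_nonneg fun x => hF _).2 ⟨fun n => Summable.of_finite, ?_⟩)
  exact h.congr fun n => (Finset.tsum_subtype (antidiagonal n) F).symm

lemma sum_antidiagonal_Gamma_mul_pow_mul_pow {D : ℝ} (hD : 0 < D) (y z : ℝ) (n : ℕ) :
    ∑ kl ∈ antidiagonal n, Gamma (D + kl.1 + kl.2) / (kl.1.factorial * kl.2.factorial) *
      (y ^ kl.1 * z ^ kl.2) = Gamma D * (Ring.multichoose D n * (y + z) ^ n) := by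
  rw [← mul_assoc, Gamma_mul_multichoose hD, (Commute.all y z).add_pow', Finset.mul_sum]
  refine Finset.sum_congr rfl fun ⟨k, l⟩ hkl => ?_
  obtain rfl : k + l = n := Finset.HasAntidiagonal.mem_antidiagonal.1 hkl
  rw [nsmul_eq_mul, Nat.cast_choose ℝ (Nat.le_add_right k l), Nat.add_sub_cancel_left,
    Nat.cast_add, add_assoc]
  field_simp

lemma summable_Gamma_mul_pow_mul_pow {D y z : ℝ} (hD : 0 < D) (hy : 0 ≤ y) (hz : 0 ≤ z)
    (h : y + z < 1) : Summable fun kl : ℕ × ℕ =>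
      Gamma (D + kl.1 + kl.2) / (kl.1.factorial * kl.2.factorial) * (y ^ kl.1 * z ^ kl.2) := by
  refine summable_prod_of_summable_sum_antidiagonal (fun kl => ?_) ?_
  · positivity
  · simp only [sum_antidiagonal_Gamma_mul_pow_mul_pow hD]
    have habs : |y + z| < 1 := by rwa [abs_of_nonneg (by positivity)]
    exact (hasSum_multichoose_mul_pow_real D habs).summable.mul_left _

lemma hasSum_Gamma_mul_pow_mul_pow {D y z : ℝ} (hD : 0 < D) (h : |y| + |z| < 1) :
    HasSum (fun kl : ℕ × ℕ =>
      Gamma (D + kl.1 + kl.2) / (kl.1.factorial * kl.2.factorial) * (y ^ kl.1 * z ^ kl.2))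
      (Gamma D * (1 - (y + z)) ^ (-D)) := by
  have hsummable : Summable fun kl : ℕ × ℕ =>
      Gamma (D + kl.1 + kl.2) / (kl.1.factorial * kl.2.factorial) * (y ^ kl.1 * z ^ kl.2) := by
    refine .of_norm ((summable_Gamma_mul_pow_mul_pow hD (abs_nonneg y) (abs_nonneg z) h).congr
      fun kl => ?_)
    have hΓ := Gamma_pos_of_pos (natCast_add_pos (natCast_add_pos hD kl.1) kl.2)
    rw [norm_mul, norm_mul, norm_pow, norm_pow, norm_eq_abs, norm_eq_abs, norm_eq_abs,
      abs_of_pos (div_pos hΓ (by positivity))]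
  have hdiag := hasSum_sum_antidiagonal hsummable.hasSum
  simp only [sum_antidiagonal_Gamma_mul_pow_mul_pow hD] at hdiag
  rw [← hdiag.unique ((hasSum_multichoose_mul_pow_real D
    ((abs_add_le y z).trans_lt h)).mul_left _)]
  exact hsummable.hasSum

/-- The Gegenbauer polynomial `C_j^D(cos ψ)` as a cosine sum, from which
`|C_j^D(cos ψ)| ≤ C_j^D(1)` is immediate. -/
def gegenbauerCos (D : ℝ) (j : ℕ) (ψ : ℝ) : ℝ :=
  ∑ mn ∈ antidiagonal j,
    Ring.multichoose D mn.1 * Ring.multichoose D mn.2 * cos ((mn.1 - mn.2) * ψ)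

lemma continuous_gegenbauerCos (D : ℝ) (j : ℕ) : Continuous (gegenbauerCos D j) :=
  continuous_finsetSum _ fun _ _ => by fun_prop

lemma abs_gegenbauerCos_le {D : ℝ} (hD : 0 < D) (j : ℕ) (ψ : ℝ) :
    |gegenbauerCos D j ψ| ≤ gegenbauerCos D j 0 := by
  refine (Finset.abs_sum_le_sum_abs _ _).trans (Finset.sum_le_sum fun mn _ => ?_)
  have hpos := mul_pos (multichoose_pos hD mn.1) (multichoose_pos hD mn.2)
  rw [abs_mul, abs_of_pos hpos, mul_zero, cos_zero]
  exact mul_le_mul_of_nonneg_left (abs_cos_le_one _) hpos.le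

lemma normSq_one_sub_mul_exp (x ψ : ℝ) :
    Complex.normSq (1 - x * Complex.exp (ψ * Complex.I)) = 1 - 2 * x * cos ψ + x ^ 2 := by
  rw [Complex.normSq_apply]
  simp only [Complex.sub_re, Complex.one_re, Complex.re_ofReal_mul, Complex.exp_ofReal_mul_I_re,
    Complex.sub_im, Complex.one_im, Complex.im_ofReal_mul, Complex.exp_ofReal_mul_I_im]
  linear_combination x ^ 2 * sin_sq_add_cos_sq ψ

-- With `z = x e^{iψ}`, the generating function is the Cauchy product of the binomial series of
-- `(1 - z)^{-D}` and of its complex conjugate.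
lemma hasSum_gegenbauerCos_mul_pow (D ψ : ℝ) {x : ℝ} (hx : |x| < 1) :
    HasSum (fun j => gegenbauerCos D j ψ * x ^ j) ((1 - 2 * x * cos ψ + x ^ 2) ^ (-D)) := by
  set z : ℂ := x * Complex.exp (ψ * Complex.I) with hz
  have hnorm : ‖z‖ < 1 := by simpa [hz, Complex.norm_exp_ofReal_mul_I] using hx
  have hsum := hasSum_multichoose_mul_pow D hnorm
  have hconj := hsum.map (starRingEnd ℂ) Complex.continuous_conj
  have hcauchy := (summable_norm_sum_mul_antidiagonal_of_summable_norm hsum.summable.norm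
    hconj.summable.norm).of_norm.hasSum
  rw [← tsum_mul_tsum_eq_tsum_sum_antidiagonal_of_summable_norm hsum.summable.norm
    hconj.summable.norm, hsum.tsum_eq, hconj.tsum_eq, Complex.mul_conj] at hcauchy
  have hvalue : Complex.normSq (1 / (1 - z) ^ (D : ℂ)) = (1 - 2 * x * cos ψ + x ^ 2) ^ (-D) := by
    rw [← normSq_one_sub_mul_exp, Complex.normSq_eq_norm_sq, Complex.normSq_eq_norm_sq, norm_div,
      Complex.norm_cpow_real, norm_one, one_div, ← rpow_neg (norm_nonneg _),
      rpow_pow_comm (norm_nonneg _)]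
  rw [hvalue] at hcauchy
  refine (Complex.hasSum_re hcauchy).congr_fun fun j => ?_
  rw [gegenbauerCos, Finset.sum_mul, Complex.re_sum]
  refine Finset.sum_congr rfl fun ⟨m, n⟩ hmn => ?_
  obtain rfl : m + n = j := Finset.HasAntidiagonal.mem_antidiagonal.1 hmn
  have hexp : Complex.exp (ψ * Complex.I) ^ m * Complex.exp (-(ψ * Complex.I)) ^ n =
      Complex.exp (((m - n) * ψ : ℝ) * Complex.I) := by
    rw [← Complex.exp_nat_mul, ← Complex.exp_nat_mul, ← Complex.exp_add]
    push_cast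
    ring_nf
  have hterm : ((Ring.multichoose D m : ℝ) : ℂ) * z ^ m *
      starRingEnd ℂ (((Ring.multichoose D n : ℝ) : ℂ) * z ^ n) =
      ((Ring.multichoose D m * Ring.multichoose D n * x ^ (m + n) : ℝ) : ℂ) *
        Complex.exp (((m - n) * ψ : ℝ) * Complex.I) := by
    rw [← hexp]
    simp only [hz, map_mul, map_pow, Complex.conj_ofReal, ← Complex.exp_conj, Complex.conj_I]
    push_cast
    ring_nf
  rw [Function.comp_apply, hterm, Complex.re_ofReal_mul, Complex.exp_ofReal_mul_I_re]
  ring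

lemma eq_of_hasSum_mul_pow {f : ℝ → ℝ} {p q : ℕ → ℝ} {ε : ℝ} (hε : 0 < ε)
    (hp : ∀ x, |x| < ε → HasSum (fun n => p n * x ^ n) (f x))
    (hq : ∀ x, |x| < ε → HasSum (fun n => q n * x ^ n) (f x)) : p = q := by
  have hasFPowerSeries {p : ℕ → ℝ} (hp : ∀ x, |x| < ε → HasSum (fun n => p n * x ^ n) (f x)) :
      HasFPowerSeriesAt f (.ofScalars ℝ p) 0 := by
    rw [hasFPowerSeriesAt_iff]
    filter_upwards [Metric.ball_mem_nhds (0 : ℝ) hε] with x hx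
    rw [zero_add]
    refine (hp x (by simpa using hx)).congr_fun fun n => ?_
    simp [mul_comm]
  have hseries := (hasFPowerSeries hp).eq_formalMultilinearSeries (hasFPowerSeries hq)
  ext n
  simpa using congrArg (fun P => FormalMultilinearSeries.coeff P n) hseries

lemma hasSum_ite_even_mul_pow_iff {g : ℕ → ℝ} {x T : ℝ} :
    HasSum (fun j => (if Even j then g (j / 2) else 0) * x ^ j) T ↔
      HasSum (fun n => g n * (x ^ 2) ^ n) T := by
  have hinj : Function.Injective fun n : ℕ => 2 * n := mul_right_injective₀ two_ne_zero
  have hcomp : (fun j => (if Even j then g (j / 2) else 0) * x ^ j) ∘ (fun n => 2 * n) =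
      fun n => g n * (x ^ 2) ^ n := by
    ext n
    simp [pow_mul]
  rw [← hcomp, hinj.hasSum_iff]
  intro j hj
  have hodd : ¬Even j := fun heven => hj ⟨j / 2, Nat.two_mul_div_two_of_even heven⟩
  simp [hodd]

lemma hasSum_mul_pow_of_hasSum_sum_range {u : ℕ → ℝ} {r T : ℝ}
    (h : HasSum (fun N => (∑ n ∈ Finset.range (N + 1), u n) * r ^ N) T) :
    HasSum (fun N => u N * r ^ N) ((1 - r) * T) := by
  have hshift : HasSum (fun N => (∑ n ∈ Finset.range (N + 2), u n) * r ^ (N + 1)) (T - u 0) := by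
    simpa using (hasSum_nat_add_iff'
      (f := fun N => (∑ n ∈ Finset.range (N + 1), u n) * r ^ N) 1).2 h
  have hdiff : HasSum (fun N => u (N + 1) * r ^ (N + 1)) (T - u 0 - r * T) :=
    (hshift.sub (h.mul_left r)).congr_fun fun N => by
      rw [Finset.sum_range_succ _ (N + 1)]
      ring
  have hsum := (hasSum_nat_add_iff (f := fun N => u N * r ^ N) 1).1 hdiff
  rwa [Finset.sum_range_one, pow_zero, mul_one,
    show T - u 0 - r * T + u 0 = (1 - r) * T by ring] at hsum

end GeneratingFunctions

/-! ### Integral representation of the Jacobi–Poisson kernel -/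

section KernelFormula

lemma hasSum_integral_of_abs_le {ι α : Type*} [Countable ι] [MeasurableSpace α] {μ : Measure α}
    [IsFiniteMeasure μ] {F : ι → α → ℝ} {f : α → ℝ} {bound : ι → ℝ}
    (hF : ∀ i, AEStronglyMeasurable (F i) μ) (hsummable : Summable bound)
    (hle : ∀ i, ∀ᵐ q ∂μ, |F i q| ≤ bound i) (hsum : ∀ᵐ q ∂μ, HasSum (fun i => F i q) (f q)) :
    HasSum (fun i => ∫ q, F i q ∂μ) (∫ q, f q ∂μ) :=
  hasSum_integral_of_dominated_convergence (fun i _ => bound i) hF hle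
    (ae_of_all _ fun _ => hsummable) (integrable_const _) hsum

lemma abs_linearForm_le_one {s c : ℝ} (h : |s| + |c| ≤ 1) {q : ℝ × ℝ}
    (hq : q ∈ openSquare) : |q.1 * s + q.2 * c| ≤ 1 := by
  have h1 : |q.1| ≤ 1 := abs_le.2 ⟨hq.1.1.le, hq.1.2.le⟩
  have h2 : |q.2| ≤ 1 := abs_le.2 ⟨hq.2.1.le, hq.2.2.le⟩
  calc |q.1 * s + q.2 * c| ≤ |q.1| * |s| + |q.2| * |c| := by
        simpa only [abs_mul] using abs_add_le (q.1 * s) (q.2 * c)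
    _ ≤ 1 * |s| + 1 * |c| := by gcongr
    _ ≤ 1 := by linarith

/-- The Taylor coefficients, in powers of `x²` and up to a constant factor, of the average of
`(1 - 2xw + x²)^(-(a + b + 2))` over the linear forms `w = u s + v c` with `s² = S`, `c² = T`. -/
def poissonCoeff (a b S T : ℝ) (N : ℕ) : ℝ :=
  ∑ kl ∈ antidiagonal N,
    (-1) ^ kl.2 * Gamma (a + b + 2 + 2 * kl.1 + kl.2) / kl.2.factorial * batemanForm a b S T kl.1

variable {a b s c x : ℝ}

lemma hasSum_integral_Gamma_mul_linearForm_pow (ha : -(1 / 2) < a) (hb : -(1 / 2) < b)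
    (h : |s| + |c| ≤ 1) (hx : 2 * |x| + x ^ 2 < 1) :
    HasSum (fun kl : ℕ × ℕ => Gamma (a + b + 2 + kl.1 + kl.2) /
        (kl.1.factorial * kl.2.factorial) * ((2 * x) ^ kl.1 * (-x ^ 2) ^ kl.2) *
        ∫ q, (q.1 * s + q.2 * c) ^ kl.1 ∂ultrasphericalProd a b)
      (Gamma (a + b + 2) *
        ∫ q, (1 - 2 * x * (q.1 * s + q.2 * c) + x ^ 2) ^ (-(a + b + 2))
          ∂ultrasphericalProd a b) := by
  have := isFiniteMeasure_ultrasphericalProd ha hb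
  have hD : 0 < a + b + 2 := by linarith
  simp only [← integral_const_mul]
  refine hasSum_integral_of_abs_le (fun kl => by fun_prop)
    (summable_Gamma_mul_pow_mul_pow hD (by positivity) (sq_nonneg x) hx) (fun kl => ?_) ?_
  · filter_upwards [ae_ultrasphericalProd_mem a b] with q hq
    have hΓ := Gamma_pos_of_pos (natCast_add_pos (natCast_add_pos hD kl.1) kl.2)
    rw [abs_mul, abs_mul, abs_mul, abs_pow, abs_pow, abs_pow, abs_neg, abs_sq, abs_mul, abs_two,
      abs_of_pos (div_pos hΓ (by positivity))]
    exact mul_le_of_le_one_right (by positivity)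
      (pow_le_one₀ (abs_nonneg _) (abs_linearForm_le_one h hq))
  · filter_upwards [ae_ultrasphericalProd_mem a b] with q hq
    have hw := abs_linearForm_le_one h hq
    have hyz : |2 * x * (q.1 * s + q.2 * c)| + |-x ^ 2| < 1 := by
      rw [abs_neg, abs_sq, abs_mul, abs_mul, abs_two]
      nlinarith [mul_le_of_le_one_right (abs_nonneg x) hw]
    rw [show 1 - 2 * x * (q.1 * s + q.2 * c) + x ^ 2 =
      1 - (2 * x * (q.1 * s + q.2 * c) + -x ^ 2) by ring]
    refine (hasSum_Gamma_mul_pow_mul_pow hD hyz).congr_fun fun kl => ?_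
    rw [mul_pow (2 * x)]
    ring

lemma hasSum_poissonCoeff_of_small (ha : -(1 / 2) < a) (hb : -(1 / 2) < b)
    (h : |s| + |c| ≤ 1) (hx : 2 * |x| + x ^ 2 < 1) :
    HasSum (fun N => π * Gamma (a + 1 / 2) * Gamma (b + 1 / 2) *
        poissonCoeff a b (s ^ 2) (c ^ 2) N * (x ^ 2) ^ N)
      (Gamma (a + b + 2) *
        ∫ q, (1 - 2 * x * (q.1 * s + q.2 * c) + x ^ 2) ^ (-(a + b + 2))
          ∂ultrasphericalProd a b) := by
  have hinj : Function.Injective fun kl : ℕ × ℕ => (2 * kl.1, kl.2) := fun p q hpq => by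
    simpa [Prod.ext_iff] using hpq
  have heven := (hinj.hasSum_iff fun kl hkl => ?_).2
    (hasSum_integral_Gamma_mul_linearForm_pow ha hb h hx)
  · refine (hasSum_sum_antidiagonal heven).congr_fun fun N => ?_
    rw [poissonCoeff, mul_assoc, Finset.sum_mul, Finset.mul_sum]
    refine Finset.sum_congr rfl fun ⟨k, l⟩ hkl => ?_
    obtain rfl : k + l = N := Finset.HasAntidiagonal.mem_antidiagonal.1 hkl
    have hmoment := integral_linearForm_pow_two_mul ha hb s c k
    simp only [Function.comp_apply]
    rw [pow_mul (2 * x), mul_pow 2 x, show (2 : ℝ) ^ 2 = 4 by norm_num, mul_pow 4, neg_pow (x ^ 2),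
      pow_add, Nat.cast_mul, Nat.cast_ofNat]
    generalize ∫ q, (q.1 * s + q.2 * c) ^ (2 * k) ∂ultrasphericalProd a b = I at hmoment ⊢
    generalize Gamma (a + 1 / 2) = Γa at hmoment ⊢
    generalize Gamma (b + 1 / 2) = Γb at hmoment ⊢
    field_simp
    linear_combination (-1) * Gamma (a + b + 2 + 2 * k + l) * (x ^ 2) ^ k * (x ^ 2) ^ l * hmoment
  · have hodd : Odd kl.1 := by
      by_contra hne
      obtain ⟨k, hk⟩ := Nat.not_odd_iff_even.1 hne
      exact hkl ⟨(k, kl.2), by simp [Prod.ext_iff, hk, two_mul]⟩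
    rw [integral_linearForm_pow_of_odd ha hb s c hodd, mul_zero]

lemma hasSum_integral_gegenbauerCos (ha : -(1 / 2) < a) (hb : -(1 / 2) < b)
    (h : |s| + |c| ≤ 1) (hx : |x| < 1) :
    HasSum (fun j => (∫ q, gegenbauerCos (a + b + 2) j (arccos (q.1 * s + q.2 * c))
        ∂ultrasphericalProd a b) * x ^ j)
      (∫ q, (1 - 2 * x * (q.1 * s + q.2 * c) + x ^ 2) ^ (-(a + b + 2))
        ∂ultrasphericalProd a b) := by
  have := isFiniteMeasure_ultrasphericalProd ha hb
  have hD : 0 < a + b + 2 := by linarith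
  simp only [← integral_mul_const]
  refine hasSum_integral_of_abs_le (fun j => ?_)
    (hasSum_gegenbauerCos_mul_pow (a + b + 2) 0 ((abs_abs x).trans_lt hx)).summable
    (fun j => ae_of_all _ fun q => ?_) ?_
  · exact (((continuous_gegenbauerCos _ j).comp (continuous_arccos.comp
      (by fun_prop))).mul_const _).aestronglyMeasurable
  · rw [abs_mul, abs_pow]
    gcongr
    exact abs_gegenbauerCos_le hD j _
  · filter_upwards [ae_ultrasphericalProd_mem a b] with q hq
    have hw := abs_le.1 (abs_linearForm_le_one h hq)
    simpa only [cos_arccos hw.1 hw.2] using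
      hasSum_gegenbauerCos_mul_pow (a + b + 2) (arccos (q.1 * s + q.2 * c)) hx

-- The double series converges for small `x` only; the Gegenbauer expansion converges for all
-- `|x| < 1`, and the two have the same coefficients.
lemma hasSum_poissonCoeff (ha : -(1 / 2) < a) (hb : -(1 / 2) < b)
    (h : |s| + |c| ≤ 1) (hx : |x| < 1) :
    HasSum (fun N => π * Gamma (a + 1 / 2) * Gamma (b + 1 / 2) *
        poissonCoeff a b (s ^ 2) (c ^ 2) N * (x ^ 2) ^ N)
      (Gamma (a + b + 2) *
        ∫ q, (1 - 2 * x * (q.1 * s + q.2 * c) + x ^ 2) ^ (-(a + b + 2))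
          ∂ultrasphericalProd a b) := by
  have hgegenbauer (x : ℝ) (hx : |x| < 1) :=
    (hasSum_integral_gegenbauerCos ha hb h hx).mul_left (Gamma (a + b + 2))
  simp only [← mul_assoc (Gamma (a + b + 2))] at hgegenbauer
  have hcoeff := eq_of_hasSum_mul_pow (ε := 1 / 4) (by norm_num)
    (fun x hx => hgegenbauer x (by linarith))
    (fun x hx => hasSum_ite_even_mul_pow_iff.2
      (hasSum_poissonCoeff_of_small ha hb h (by nlinarith [sq_abs x, abs_nonneg x])))
  refine hasSum_ite_even_mul_pow_iff.1 ((hgegenbauer x hx).congr_fun fun j => ?_)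
  rw [← congrFun hcoeff j]

lemma batemanWeight_of_le {s : ℝ} {N k : ℕ} (hk : k ≤ N) :
    batemanWeight s N k = (-1) ^ (N - k) * Gamma (s + N + k) / (N - k).factorial := by
  obtain ⟨l, rfl⟩ := Nat.exists_eq_add_of_le hk
  have hfact : ((k + l).factorial : ℝ) = l.factorial * (k + l).descFactorial k := by
    exact_mod_cast (by simpa using (Nat.factorial_mul_descFactorial hk).symm)
  have hdesc : ((k + l).descFactorial k : ℝ) ≠ 0 := by
    exact_mod_cast (Nat.descFactorial_pos.2 hk).ne'
  have hsign : (-1 : ℝ) ^ (k + l + k) = (-1) ^ l := by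
    rw [show k + l + k = 2 * k + l by ring, pow_add, pow_mul, neg_one_sq, one_pow, one_mul]
  rw [batemanWeight, hfact, hsign, Nat.add_sub_cancel_left]
  field_simp

lemma batemanWeight_add_one_succ_sub {s : ℝ} (hs : -1 < s) (N k : ℕ) :
    batemanWeight (s + 1) (N + 1) k - batemanWeight (s + 1) N k =
      (s + 2 * (N + 1 : ℕ)) * batemanWeight s (N + 1) k := by
  have hdesc : (N + 1 - k : ℝ) * (N + 1).descFactorial k = (N + 1) * N.descFactorial k := by
    rcases le_or_gt k (N + 1) with hk | hk
    · have hcast := Nat.cast_sub (R := ℝ) hk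
      push_cast at hcast
      rw [← hcast]
      exact_mod_cast Nat.succ_descFactorial N k
    · simp [Nat.descFactorial_of_lt hk, Nat.descFactorial_of_lt (N.lt_succ_self.trans hk)]
  have hGamma : Gamma (s + 1 + (N + 1 : ℕ) + k) = (s + 1 + N + k) * Gamma (s + 1 + N + k) := by
    rw [← Gamma_add_one (natCast_add_pos (natCast_add_pos (by linarith) N) k).ne']
    push_cast
    ring_nf
  have hshift : s + (N + 1 : ℕ) + k = s + 1 + N + k := by push_cast; ring
  unfold batemanWeight
  rw [hGamma, hshift, Nat.factorial_succ, add_right_comm N 1 k, pow_succ]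
  push_cast
  field_simp
  linear_combination Gamma (s + 1 + N + k) * hdesc

lemma poissonCoeff_eq_sum_batemanWeight (a b S T : ℝ) (N : ℕ) :
    poissonCoeff a b S T N =
      ∑ k ∈ Finset.range (N + 1), batemanWeight (a + b + 2) N k * batemanForm a b S T k := by
  rw [poissonCoeff, Finset.Nat.sum_antidiagonal_eq_sum_range_succ (fun k l => (-1) ^ l *
    Gamma (a + b + 2 + 2 * k + l) / l.factorial * batemanForm a b S T k)]
  refine Finset.sum_congr rfl fun k hk => ?_
  have hkN := Finset.mem_range_succ_iff.1 hk
  rw [batemanWeight_of_le hkN, Nat.cast_sub hkN,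
    show a + b + 2 + 2 * (k : ℝ) + (N - k) = a + b + 2 + N + k by ring]

lemma poissonCoeff_eq_sum_batemanSum (hab : -1 < a + b) (S T : ℝ) (N : ℕ) :
    poissonCoeff a b S T N =
      ∑ n ∈ Finset.range (N + 1), (a + b + 1 + 2 * n) * batemanSum a b n S T := by
  induction N with
  | zero =>
    have hGamma := Gamma_add_one (by linarith : a + b + 1 ≠ 0)
    simp [poissonCoeff_eq_sum_batemanWeight, batemanSum, batemanWeight,
      show a + b + 2 = a + b + 1 + 1 by ring, hGamma, mul_assoc]
  | succ N ih =>
    have hzero : batemanWeight (a + b + 2) N (N + 1) = 0 := by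
      simp [batemanWeight]
    have hextend : poissonCoeff a b S T N = ∑ k ∈ Finset.range (N + 1 + 1),
        batemanWeight (a + b + 2) N k * batemanForm a b S T k := by
      rw [Finset.sum_range_succ, hzero, zero_mul, add_zero, poissonCoeff_eq_sum_batemanWeight]
    rw [Finset.sum_range_succ, ← ih, ← sub_eq_iff_eq_add', hextend,
      poissonCoeff_eq_sum_batemanWeight, ← Finset.sum_sub_distrib, batemanSum, Finset.mul_sum]
    refine Finset.sum_congr rfl fun k _ => ?_
    rw [← sub_mul, show a + b + 2 = a + b + 1 + 1 by ring,
      batemanWeight_add_one_succ_sub (by linarith), smul_eq_mul, mul_assoc]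

lemma hasSum_batemanSum (ha : -(1 / 2) < a) (hb : -(1 / 2) < b)
    (h : |s| + |c| ≤ 1) (hx : |x| < 1) :
    HasSum (fun N => (a + b + 1 + 2 * N) * batemanSum a b N (s ^ 2) (c ^ 2) * (x ^ 2) ^ N)
      ((1 - x ^ 2) * (Gamma (a + b + 2) / (π * Gamma (a + 1 / 2) * Gamma (b + 1 / 2)) *
        ∫ q, (1 - 2 * x * (q.1 * s + q.2 * c) + x ^ 2) ^ (-(a + b + 2))
          ∂ultrasphericalProd a b)) := by
  have hΓa := Gamma_pos_of_pos (by linarith : 0 < a + 1 / 2)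
  have hΓb := Gamma_pos_of_pos (by linarith : 0 < b + 1 / 2)
  refine hasSum_mul_pow_of_hasSum_sum_range (u := fun N : ℕ => (a + b + 1 + 2 * N) *
    batemanSum a b N (s ^ 2) (c ^ 2)) ?_
  simp only [← poissonCoeff_eq_sum_batemanSum (by linarith : -1 < a + b)]
  rw [div_mul_eq_mul_div]
  refine ((hasSum_poissonCoeff ha hb h hx).div_const _).congr_fun fun N => ?_
  rw [mul_assoc (π * _ * _), mul_div_cancel_left₀ _ (by positivity)]

lemma abs_sin_mul_sin_add_abs_cos_mul_cos_le_one (x y : ℝ) :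
    |sin x * sin y| + |cos x * cos y| ≤ 1 := by
  rw [abs_mul, abs_mul]
  nlinarith [sin_sq_add_cos_sq x, sin_sq_add_cos_sq y, sq_abs (sin x), sq_abs (sin y),
    sq_abs (cos x), sq_abs (cos y), sq_nonneg (|sin x| - |sin y|), sq_nonneg (|cos x| - |cos y|)]

/-- The linear form in the integration variables through which the angles `θ`, `φ` enter the
integral representation of the Jacobi–Poisson kernel. -/
def angleForm (θ φ : ℝ) (q : ℝ × ℝ) : ℝ :=
  q.1 * (sin (θ / 2) * sin (φ / 2)) + q.2 * (cos (θ / 2) * cos (φ / 2))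

lemma abs_angleForm_le_one (θ φ : ℝ) {q : ℝ × ℝ} (hq : q ∈ openSquare) :
    |angleForm θ φ q| ≤ 1 :=
  abs_linearForm_le_one (abs_sin_mul_sin_add_abs_cos_mul_cos_le_one _ _) hq

/-- The constant factor in the integral representation of the Jacobi–Poisson kernel. -/
def poissonConst (a b : ℝ) : ℝ :=
  Gamma (a + b + 2) * 2 ^ (-(a + b + 1)) / (2 * (π * Gamma (a + 1 / 2) * Gamma (b + 1 / 2)))

lemma jHker_eq_mul_integral_rpow (ha : -(1 / 2) < a) (hb : -(1 / 2) < b) {t : ℝ} (ht : 0 < t)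
    (θ φ : ℝ) :
    jHker a b t θ φ = 1 / 2 * (exp (-(t / 2)) ^ (a + b + 1) * ((1 - exp (-(t / 2)) ^ 2) *
      (Gamma (a + b + 2) / (π * Gamma (a + 1 / 2) * Gamma (b + 1 / 2)) *
        ∫ q, (1 - 2 * exp (-(t / 2)) * angleForm θ φ q + exp (-(t / 2)) ^ 2) ^ (-(a + b + 2))
          ∂ultrasphericalProd a b))) := by
  have hlt : |exp (-(t / 2))| < 1 := by rw [abs_exp, exp_lt_one_iff]; linarith
  have hsum := (hasSum_batemanSum ha hb (abs_sin_mul_sin_add_abs_cos_mul_cos_le_one (θ / 2) (φ / 2))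
    hlt).mul_left (exp (-(t / 2)) ^ (a + b + 1))
  simp only [angleForm]
  rw [jHker, ← hsum.tsum_eq]
  congr 1
  refine tsum_congr fun N => ?_
  have hexp : exp (-t * (N + (a + b + 1) / 2)) =
      exp (-(t / 2)) ^ (a + b + 1) * (exp (-(t / 2)) ^ 2) ^ N := by
    rw [← exp_mul, ← pow_mul, ← exp_nat_mul, ← exp_add]
    push_cast
    ring_nf
  have hN : 0 ≤ N + (a + b + 1) / 2 := by
    have := N.cast_nonneg (α := ℝ)
    linarith
  rw [mul_assoc, trigP_mul_trigP (by linarith) (by linarith) (by linarith), jLam, sqrt_sq hN, hexp]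
  ring

theorem jHker_eq_integral (ha : -(1 / 2) < a) (hb : -(1 / 2) < b) {t : ℝ} (ht : 0 < t)
    (θ φ : ℝ) :
    jHker a b t θ φ = poissonConst a b *
      ∫ q, sinh (t / 2) * (cosh (t / 2) - angleForm θ φ q) ^ (-(a + b + 2))
        ∂ultrasphericalProd a b := by
  rw [jHker_eq_mul_integral_rpow ha hb ht, integral_const_mul]
  set ρ := exp (-(t / 2)) with hρ
  have hρ0 : 0 < ρ := exp_pos _
  have hinv : exp (t / 2) * ρ = 1 := by rw [hρ, ← exp_add, add_neg_cancel, exp_zero]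
  have hbase : ∫ q, (1 - 2 * ρ * angleForm θ φ q + ρ ^ 2) ^ (-(a + b + 2))
      ∂ultrasphericalProd a b = (2 * ρ) ^ (-(a + b + 2)) *
        ∫ q, (cosh (t / 2) - angleForm θ φ q) ^ (-(a + b + 2)) ∂ultrasphericalProd a b := by
    rw [← integral_const_mul]
    refine integral_congr_ae ?_
    filter_upwards [ae_ultrasphericalProd_mem a b] with q hq
    have hw := (abs_le.1 (abs_angleForm_le_one θ φ hq)).2
    rw [← mul_rpow (by positivity) (by linarith [one_le_cosh (t / 2)]), cosh_eq, ← hρ]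
    congr 1
    linear_combination (-1) * hinv
  have hsinh : 1 - ρ ^ 2 = 2 * ρ * sinh (t / 2) := by
    rw [sinh_eq, ← hρ]
    linear_combination (-1) * hinv
  have hpow : (2 * ρ) ^ (-(a + b + 2)) = 2 ^ (-(a + b + 1)) * (ρ ^ (a + b + 1))⁻¹ * (2 * ρ)⁻¹ := by
    rw [show -(a + b + 2) = -(a + b + 1) + -1 by ring, rpow_add (by positivity), rpow_neg_one,
      mul_rpow two_pos.le hρ0.le, rpow_neg hρ0.le]
  rw [hbase, hsinh, hpow, poissonConst]
  field_simp

end KernelFormula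

/-! ### Symbols generated by the integrand -/

section PoissonSymbol

lemma rpow_le_rpow_add_rpow {l h x : ℝ} (hl : 0 < l) (hlx : l ≤ x) (hxh : x ≤ h) (e : ℝ) :
    x ^ e ≤ l ^ e + h ^ e := by
  have hx : 0 < x := hl.trans_le hlx
  rcases le_total 0 e with he | he
  · exact (rpow_le_rpow hx.le hxh he).trans (le_add_of_nonneg_left (rpow_nonneg hl.le e))
  · exact (rpow_le_rpow_of_nonpos hl hlx he).trans
      (le_add_of_nonneg_right (rpow_nonneg (hx.le.trans hxh) e))

/-- The function whose powers make up the integrand of the Jacobi–Poisson kernel. -/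
def poissonPhase (t θ φ : ℝ) (q : ℝ × ℝ) : ℝ := cosh (t / 2) - angleForm θ φ q

/-- The phase divided by the size of its dominant term; it is at most `2`, and tends to zero
exactly where the kernel becomes singular. -/
def relPhase (t θ φ : ℝ) (q : ℝ × ℝ) : ℝ := poissonPhase t θ φ q / cosh (t / 2)

/-- The class of symbols of order `κ` and growth `d`: the functions of `(t, θ, φ, q)` generated by
the integrand of the Jacobi–Poisson kernel under differentiation in `t`, `θ` and `φ`. The order
counts powers of `relPhase ^ (-1 / 2)`, the growth counts powers of `cosh (t / 2)`. A shift of an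
angle by `π` stands for twice the derivative of `angleForm` in this angle. -/
inductive PoissonSymbol : ℝ → ℝ → (ℝ → ℝ → ℝ → ℝ × ℝ → ℝ) → Prop
  | const (c : ℝ) : PoissonSymbol 0 0 fun _ _ _ _ => c
  | cosh : PoissonSymbol 0 1 fun t _ _ _ => cosh (t / 2)
  | sinh : PoissonSymbol (-1) 1 fun t _ _ _ => sinh (t / 2)
  | angle : PoissonSymbol 0 0 fun _ θ φ q => angleForm θ φ q
  | angleLeft : PoissonSymbol (-1) 0 fun _ θ φ q => angleForm (θ + π) φ q
  | angleRight : PoissonSymbol (-1) 0 fun _ θ φ q => angleForm θ (φ + π) q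
  | angleBoth : PoissonSymbol 0 0 fun _ θ φ q => angleForm (θ + π) (φ + π) q
  | phase (ν : ℝ) : PoissonSymbol (2 * ν) (-ν) fun t θ φ q => poissonPhase t θ φ q ^ (-ν)
  | add {κ d : ℝ} {F G} : PoissonSymbol κ d F → PoissonSymbol κ d G →
      PoissonSymbol κ d fun t θ φ q => F t θ φ q + G t θ φ q
  | mul {κ₁ κ₂ d₁ d₂ : ℝ} {F G} : PoissonSymbol κ₁ d₁ F → PoissonSymbol κ₂ d₂ G →
      PoissonSymbol (κ₁ + κ₂) (d₁ + d₂) fun t θ φ q => F t θ φ q * G t θ φ q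
  | weaken {κ κ' d d' : ℝ} {F} : PoissonSymbol κ d F → κ ≤ κ' → d ≤ d' → PoissonSymbol κ' d' F

variable {t θ φ : ℝ} {q : ℝ × ℝ}

lemma angleForm_comm (θ φ : ℝ) (q : ℝ × ℝ) : angleForm θ φ q = angleForm φ θ q := by
  simp only [angleForm]
  ring

lemma angleForm_add_pi_left (θ φ : ℝ) (q : ℝ × ℝ) :
    angleForm (θ + π) φ q =
      q.1 * (cos (θ / 2) * sin (φ / 2)) - q.2 * (sin (θ / 2) * cos (φ / 2)) := by
  rw [angleForm, add_div, sin_add_pi_div_two, cos_add_pi_div_two]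
  ring

lemma angleForm_add_pi_add_pi_left (θ φ : ℝ) (q : ℝ × ℝ) :
    angleForm (θ + π + π) φ q = -angleForm θ φ q := by
  rw [angleForm_add_pi_left, add_div, sin_add_pi_div_two, cos_add_pi_div_two, angleForm]
  ring

lemma angleForm_add_pi_add_pi_right (θ φ : ℝ) (q : ℝ × ℝ) :
    angleForm θ (φ + π + π) q = -angleForm θ φ q := by
  rw [angleForm_comm, angleForm_add_pi_add_pi_left, angleForm_comm]

lemma sq_angleForm_add_pi_left_le (hq : q ∈ openSquare) :
    angleForm (θ + π) φ q ^ 2 ≤ 1 - angleForm θ φ q ^ 2 := by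
  have hq1 : q.1 ^ 2 ≤ 1 := sub_nonneg.1 (one_sub_sq_pos hq.1).le
  have hq2 : q.2 ^ 2 ≤ 1 := sub_nonneg.1 (one_sub_sq_pos hq.2).le
  have hsum : angleForm (θ + π) φ q ^ 2 + angleForm θ φ q ^ 2 =
      q.1 ^ 2 * sin (φ / 2) ^ 2 + q.2 ^ 2 * cos (φ / 2) ^ 2 := by
    rw [angleForm_add_pi_left, angleForm]
    linear_combination (q.1 ^ 2 * sin (φ / 2) ^ 2 + q.2 ^ 2 * cos (φ / 2) ^ 2) *
      sin_sq_add_cos_sq (θ / 2)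
  nlinarith [sin_sq_add_cos_sq (φ / 2), mul_le_of_le_one_left (sq_nonneg (sin (φ / 2))) hq1,
    mul_le_of_le_one_left (sq_nonneg (cos (φ / 2))) hq2]

lemma cosh_sub_one_le_poissonPhase (hq : q ∈ openSquare) :
    cosh (t / 2) - 1 ≤ poissonPhase t θ φ q :=
  sub_le_sub_left (le_of_abs_le (abs_angleForm_le_one θ φ hq)) _

lemma poissonPhase_pos (ht : 0 < t) (hq : q ∈ openSquare) : 0 < poissonPhase t θ φ q :=
  (sub_pos.2 (one_lt_cosh.2 (by positivity))).trans_le (cosh_sub_one_le_poissonPhase hq)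

lemma relPhase_pos (ht : 0 < t) (hq : q ∈ openSquare) : 0 < relPhase t θ φ q :=
  div_pos (poissonPhase_pos ht hq) (cosh_pos _)

lemma relPhase_le_two (hq : q ∈ openSquare) : relPhase t θ φ q ≤ 2 := by
  rw [relPhase, div_le_iff₀ (cosh_pos _), poissonPhase]
  linarith [neg_le_of_abs_le (abs_angleForm_le_one θ φ hq), one_le_cosh (t / 2)]

lemma one_sub_inv_cosh_le_relPhase {t₀ : ℝ} (ht₀ : 0 ≤ t₀) (ht : t₀ ≤ t) (hq : q ∈ openSquare) :
    1 - (cosh (t₀ / 2))⁻¹ ≤ relPhase t θ φ q := by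
  have hcosh : cosh (t₀ / 2) ≤ cosh (t / 2) := by
    rw [cosh_le_cosh, abs_of_nonneg (by positivity), abs_of_nonneg (by linarith)]
    linarith
  calc 1 - (cosh (t₀ / 2))⁻¹ ≤ 1 - (cosh (t / 2))⁻¹ := by gcongr
    _ = (cosh (t / 2) - 1) / cosh (t / 2) := by
      rw [sub_div, div_self (cosh_pos _).ne', one_div]
    _ ≤ relPhase t θ φ q :=
      div_le_div_of_nonneg_right (cosh_sub_one_le_poissonPhase hq) (cosh_pos _).le

lemma sq_angleForm_add_pi_left_le_relPhase (hq : q ∈ openSquare) :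
    angleForm (θ + π) φ q ^ 2 ≤ 2 * relPhase t θ φ q := by
  rw [relPhase, poissonPhase, mul_div_assoc', le_div_iff₀ (cosh_pos _)]
  nlinarith [mul_le_mul_of_nonneg_right (sq_angleForm_add_pi_left_le (θ := θ) (φ := φ) hq)
    (cosh_pos (t / 2)).le, sq_nonneg (angleForm θ φ q - 1), one_le_cosh (t / 2),
    mul_le_mul_of_nonneg_left (one_le_cosh (t / 2)) (sq_nonneg (angleForm θ φ q))]

lemma relPhase_comm : relPhase t θ φ q = relPhase t φ θ q := by
  rw [relPhase, relPhase, poissonPhase, poissonPhase, angleForm_comm]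

lemma sq_sinh_le_relPhase (hq : q ∈ openSquare) :
    sinh (t / 2) ^ 2 ≤ 2 * relPhase t θ φ q * cosh (t / 2) ^ 2 := by
  have hphase : relPhase t θ φ q * cosh (t / 2) = poissonPhase t θ φ q :=
    div_mul_cancel₀ _ (cosh_pos _).ne'
  nlinarith [cosh_sq (t / 2), one_le_cosh (t / 2),
    mul_le_mul_of_nonneg_right (cosh_sub_one_le_poissonPhase (t := t) (θ := θ) (φ := φ) hq)
      (cosh_pos (t / 2)).le]

lemma abs_le_sqrt_two_mul_rpow_half {x y z : ℝ} (hz : 0 ≤ z) (h : x ^ 2 ≤ 2 * y * z ^ 2) :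
    |x| ≤ √2 * y ^ (1 / 2 : ℝ) * z := by
  rw [← sqrt_eq_rpow, ← sqrt_mul two_pos.le]
  calc |x| ≤ √(2 * y * z ^ 2) := abs_le_sqrt h
    _ = √(2 * y) * z := by rw [sqrt_mul' _ (sq_nonneg z), sqrt_sq hz]

lemma PoissonSymbol.measurable {κ d : ℝ} {F : ℝ → ℝ → ℝ → ℝ × ℝ → ℝ} (hF : PoissonSymbol κ d F)
    (t θ φ : ℝ) : Measurable (F t θ φ) := by
  induction hF with
  | const => exact measurable_const
  | cosh => exact measurable_const
  | sinh => exact measurable_const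
  | angle => unfold angleForm; fun_prop
  | angleLeft => unfold angleForm; fun_prop
  | angleRight => unfold angleForm; fun_prop
  | angleBoth => unfold angleForm; fun_prop
  | phase ν => unfold poissonPhase angleForm; fun_prop
  | add _ _ ihF ihG => exact ihF.add ihG
  | mul _ _ ihF ihG => exact ihF.mul ihG
  | weaken _ _ _ ih => exact ih

lemma relPhase_rpow_mul_cosh_rpow_le {κ κ' d d' : ℝ} (hκ : κ ≤ κ') (hd : d ≤ d') (ht : 0 < t)
    (hq : q ∈ openSquare) :
    relPhase t θ φ q ^ (-κ / 2) * cosh (t / 2) ^ d ≤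
      2 ^ ((κ' - κ) / 2) * (relPhase t θ φ q ^ (-κ' / 2) * cosh (t / 2) ^ d') := by
  have hR := relPhase_pos (θ := θ) (φ := φ) ht hq
  have hsplit : relPhase t θ φ q ^ (-κ / 2) =
      relPhase t θ φ q ^ ((κ' - κ) / 2) * relPhase t θ φ q ^ (-κ' / 2) := by
    rw [← rpow_add hR]
    ring_nf
  rw [hsplit, ← mul_assoc]
  gcongr
  · exact relPhase_le_two hq
  · exact one_le_cosh _

lemma poissonPhase_rpow_eq (ht : 0 < t) (hq : q ∈ openSquare) (r : ℝ) :
    poissonPhase t θ φ q ^ r = relPhase t θ φ q ^ r * cosh (t / 2) ^ r := by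
  rw [← mul_rpow (relPhase_pos ht hq).le (cosh_pos _).le, relPhase,
    div_mul_cancel₀ _ (cosh_pos _).ne']

lemma PoissonSymbol.exists_abs_le {κ d : ℝ} {F : ℝ → ℝ → ℝ → ℝ × ℝ → ℝ}
    (hF : PoissonSymbol κ d F) :
    ∃ K, 0 ≤ K ∧ ∀ ⦃t θ φ q⦄, 0 < t → q ∈ openSquare →
      |F t θ φ q| ≤ K * (relPhase t θ φ q ^ (-κ / 2) * Real.cosh (t / 2) ^ d) := by
  induction hF with
  | const c => exact ⟨|c|, abs_nonneg c, fun t θ φ q _ _ => by simp⟩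
  | cosh => exact ⟨1, zero_le_one, fun t θ φ q _ _ => by simp [abs_of_pos (cosh_pos _)]⟩
  | sinh =>
    refine ⟨√2, sqrt_nonneg 2, fun t θ φ q _ hq => ?_⟩
    simpa [mul_assoc] using abs_le_sqrt_two_mul_rpow_half (cosh_pos (t / 2)).le
      (sq_sinh_le_relPhase (θ := θ) (φ := φ) hq)
  | angle => exact ⟨1, zero_le_one, fun t θ φ q _ hq => by simpa using abs_angleForm_le_one θ φ hq⟩
  | angleLeft =>
    refine ⟨√2, sqrt_nonneg 2, fun t θ φ q _ hq => ?_⟩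
    have hsq := sq_angleForm_add_pi_left_le_relPhase (t := t) (θ := θ) (φ := φ) hq
    simpa using abs_le_sqrt_two_mul_rpow_half zero_le_one (hsq.trans_eq (by ring))
  | angleRight =>
    refine ⟨√2, sqrt_nonneg 2, fun t θ φ q _ hq => ?_⟩
    have hsq := sq_angleForm_add_pi_left_le_relPhase (t := t) (θ := φ) (φ := θ) hq
    rw [angleForm_comm, relPhase_comm] at hsq
    simpa using abs_le_sqrt_two_mul_rpow_half zero_le_one (hsq.trans_eq (by ring))
  | angleBoth =>
    exact ⟨1, zero_le_one, fun t θ φ q _ hq => by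
      simpa using abs_angleForm_le_one (θ + π) (φ + π) hq⟩
  | phase ν =>
    refine ⟨1, zero_le_one, fun t θ φ q ht hq => le_of_eq ?_⟩
    rw [abs_of_pos (rpow_pos_of_pos (poissonPhase_pos ht hq) _), one_mul,
      poissonPhase_rpow_eq ht hq, show -(2 * ν) / 2 = -ν by ring]
  | add _ _ ihF ihG =>
    obtain ⟨K, hK, hF⟩ := ihF
    obtain ⟨K', hK', hG⟩ := ihG
    refine ⟨K + K', add_nonneg hK hK', fun t θ φ q ht hq => ?_⟩
    rw [add_mul]
    exact (abs_add_le _ _).trans (add_le_add (hF ht hq) (hG ht hq))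
  | @mul κ₁ κ₂ d₁ d₂ F G _ _ ihF ihG =>
    obtain ⟨K, hK, hF⟩ := ihF
    obtain ⟨K', hK', hG⟩ := ihG
    refine ⟨K * K', mul_nonneg hK hK', fun t θ φ q ht hq => ?_⟩
    have hR := relPhase_pos (θ := θ) (φ := φ) ht hq
    rw [abs_mul, neg_add, add_div, rpow_add hR, rpow_add (cosh_pos _)]
    exact (mul_le_mul (hF ht hq) (hG ht hq) (abs_nonneg _) (by positivity)).trans_eq (by ring)
  | @weaken κ κ' _ _ _ _ hκ hd ih =>
    obtain ⟨K, hK, hF⟩ := ih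
    refine ⟨K * 2 ^ ((κ' - κ) / 2), by positivity, fun t θ φ q ht hq => (hF ht hq).trans ?_⟩
    rw [mul_assoc]
    exact mul_le_mul_of_nonneg_left (relPhase_rpow_mul_cosh_rpow_le hκ hd ht hq) hK

lemma PoissonSymbol.const_mul {κ d : ℝ} {F : ℝ → ℝ → ℝ → ℝ × ℝ → ℝ} (hF : PoissonSymbol κ d F)
    (c : ℝ) : PoissonSymbol κ d fun t θ φ q => c * F t θ φ q :=
  ((const c).mul hF).weaken (zero_add κ).le (zero_add d).le

lemma hasDerivAt_angleForm {y z : ℝ → ℝ} {v w s : ℝ} (hy : HasDerivAt y v s)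
    (hz : HasDerivAt z w s) (q : ℝ × ℝ) :
    HasDerivAt (fun s => angleForm (y s) (z s) q)
      (v / 2 * angleForm (y s + π) (z s) q + w / 2 * angleForm (y s) (z s + π) q) s := by
  have hsum := (((hy.div_const 2).sin.mul (hz.div_const 2).sin).const_mul q.1).add
    (((hy.div_const 2).cos.mul (hz.div_const 2).cos).const_mul q.2)
  refine hsum.congr_deriv ?_
  rw [angleForm_comm (y s), angleForm_add_pi_left, angleForm_add_pi_left]
  ring

/-- `F'` is the derivative of `F` with velocity `(u, v, w)` in the variables `(t, θ, φ)`: the chain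
rule holds along curves, at points with `t > 0` and with parameter in the open square. -/
def HasDirectionalDeriv (u v w : ℝ) (F F' : ℝ → ℝ → ℝ → ℝ × ℝ → ℝ) : Prop :=
  ∀ ⦃x y z : ℝ → ℝ⦄ ⦃s : ℝ⦄ ⦃q : ℝ × ℝ⦄, HasDerivAt x u s → HasDerivAt y v s →
    HasDerivAt z w s → 0 < x s → q ∈ openSquare →
      HasDerivAt (fun s => F (x s) (y s) (z s) q) (F' (x s) (y s) (z s) q) s

lemma hasDirectionalDeriv_angleForm_add_pi_left (u v w : ℝ) :
    HasDirectionalDeriv u v w (fun _ θ φ q => angleForm (θ + π) φ q)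
      fun _ θ φ q => -(v / 2) * angleForm θ φ q + w / 2 * angleForm (θ + π) (φ + π) q := by
  intro x y z s q _ hy hz _ _
  refine (hasDerivAt_angleForm (hy.add_const π) hz q).congr_deriv ?_
  rw [angleForm_add_pi_add_pi_left]
  ring

lemma hasDirectionalDeriv_angleForm_add_pi_right (u v w : ℝ) :
    HasDirectionalDeriv u v w (fun _ θ φ q => angleForm θ (φ + π) q)
      fun _ θ φ q => v / 2 * angleForm (θ + π) (φ + π) q + -(w / 2) * angleForm θ φ q := by
  intro x y z s q _ hy hz _ _
  refine (hasDerivAt_angleForm hy (hz.add_const π) q).congr_deriv ?_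
  rw [angleForm_add_pi_add_pi_right]
  ring

lemma hasDirectionalDeriv_angleForm_add_pi_add_pi (u v w : ℝ) :
    HasDirectionalDeriv u v w (fun _ θ φ q => angleForm (θ + π) (φ + π) q)
      fun _ θ φ q => -(v / 2) * angleForm θ (φ + π) q + -(w / 2) * angleForm (θ + π) φ q := by
  intro x y z s q _ hy hz _ _
  refine (hasDerivAt_angleForm (hy.add_const π) (hz.add_const π) q).congr_deriv ?_
  rw [angleForm_add_pi_add_pi_left, angleForm_add_pi_add_pi_right]
  ring

lemma hasDirectionalDeriv_poissonPhase_rpow (u v w ν : ℝ) :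
    HasDirectionalDeriv u v w (fun t θ φ q => poissonPhase t θ φ q ^ (-ν)) fun t θ φ q =>
      -ν * ((u / 2 * sinh (t / 2) + (-(v / 2) * angleForm (θ + π) φ q +
        -(w / 2) * angleForm θ (φ + π) q)) * poissonPhase t θ φ q ^ (-(ν + 1))) := by
  intro x y z s q hx hy hz hpos hq
  have hphase := ((hx.div_const 2).cosh.sub (hasDerivAt_angleForm hy hz q)).rpow_const (p := -ν)
    (.inl (poissonPhase_pos hpos hq).ne')
  refine hphase.congr_deriv ?_
  simp only [poissonPhase, neg_add' ν 1, Pi.sub_apply]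
  ring

lemma PoissonSymbol.exists_hasDirectionalDeriv {κ d : ℝ} {F : ℝ → ℝ → ℝ → ℝ × ℝ → ℝ}
    (hF : PoissonSymbol κ d F) (u v w : ℝ) :
    ∃ F', PoissonSymbol (κ + 1) d F' ∧ HasDirectionalDeriv u v w F F' := by
  induction hF with
  | const c =>
    exact ⟨_, (const 0).weaken (by norm_num) le_rfl,
      fun _ _ _ s _ _ _ _ _ _ => hasDerivAt_const s c⟩
  | cosh =>
    exact ⟨_, (sinh.const_mul (u / 2)).weaken (by norm_num) le_rfl, fun _ _ _ _ _ hx _ _ _ _ =>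
      (hx.div_const 2).cosh.congr_deriv (mul_comm _ _)⟩
  | sinh =>
    exact ⟨_, (cosh.const_mul (u / 2)).weaken (by norm_num) le_rfl, fun _ _ _ _ _ hx _ _ _ _ =>
      (hx.div_const 2).sinh.congr_deriv (mul_comm _ _)⟩
  | angle =>
    exact ⟨_, ((angleLeft.const_mul (v / 2)).add (angleRight.const_mul (w / 2))).weaken
      (by norm_num) le_rfl, fun _ _ _ _ q _ hy hz _ _ => hasDerivAt_angleForm hy hz q⟩
  | angleLeft =>
    exact ⟨_, ((angle.const_mul (-(v / 2))).add (angleBoth.const_mul (w / 2))).weaken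
      (by norm_num) le_rfl, hasDirectionalDeriv_angleForm_add_pi_left u v w⟩
  | angleRight =>
    exact ⟨_, ((angleBoth.const_mul (v / 2)).add (angle.const_mul (-(w / 2)))).weaken
      (by norm_num) le_rfl, hasDirectionalDeriv_angleForm_add_pi_right u v w⟩
  | angleBoth =>
    exact ⟨_, ((angleRight.const_mul (-(v / 2))).add (angleLeft.const_mul (-(w / 2)))).weaken
      (by norm_num) le_rfl, hasDirectionalDeriv_angleForm_add_pi_add_pi u v w⟩
  | phase ν =>
    have hangles := (angleLeft.const_mul (-(v / 2))).add (angleRight.const_mul (-(w / 2)))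
    have hphase' := (sinh.const_mul (u / 2)).add (hangles.weaken le_rfl zero_le_one)
    exact ⟨_, ((hphase'.mul (phase (ν + 1))).const_mul (-ν)).weaken (by linarith) (by linarith),
      hasDirectionalDeriv_poissonPhase_rpow u v w ν⟩
  | add _ _ ihF ihG =>
    obtain ⟨F', hF', hF⟩ := ihF
    obtain ⟨G', hG', hG⟩ := ihG
    exact ⟨_, hF'.add hG', fun _ _ _ _ _ hx hy hz ht hq =>
      (hF hx hy hz ht hq).add (hG hx hy hz ht hq)⟩
  | mul hF₀ hG₀ ihF ihG =>
    obtain ⟨F', hF', hF⟩ := ihF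
    obtain ⟨G', hG', hG⟩ := ihG
    exact ⟨_, ((hF'.mul hG₀).weaken (by linarith) le_rfl).add
      ((hF₀.mul hG').weaken (by linarith) le_rfl), fun _ _ _ _ _ hx hy hz ht hq =>
      (hF hx hy hz ht hq).mul (hG hx hy hz ht hq)⟩
  | weaken _ hκ hd ih =>
    obtain ⟨F', hF', hF⟩ := ih
    exact ⟨F', hF'.weaken (by linarith) hd, hF⟩

end PoissonSymbol

/-! ### Derivatives of the kernel -/

section KernelDerivatives

variable {a b κ d : ℝ} {F : ℝ → ℝ → ℝ → ℝ × ℝ → ℝ} {g : ℝ → ℝ → ℝ → ℝ}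

lemma PoissonSymbol.exists_abs_le_mul_cosh_rpow (hF : PoissonSymbol κ d F) {t₀ : ℝ} (ht₀ : 0 < t₀) :
    ∃ K, 0 ≤ K ∧ ∀ ⦃t θ φ q⦄, t₀ ≤ t → q ∈ openSquare →
      |F t θ φ q| ≤ K * Real.cosh (t / 2) ^ d := by
  obtain ⟨K, hK, hbound⟩ := hF.exists_abs_le
  have hlow : 0 < 1 - (Real.cosh (t₀ / 2))⁻¹ :=
    sub_pos.2 (inv_lt_one_of_one_lt₀ (one_lt_cosh.2 (by positivity)))
  refine ⟨K * ((1 - (Real.cosh (t₀ / 2))⁻¹) ^ (-κ / 2) + 2 ^ (-κ / 2)), by positivity,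
    fun t θ φ q ht hq => (hbound (ht₀.trans_le ht) hq).trans ?_⟩
  rw [mul_assoc]
  gcongr
  exact rpow_le_rpow_add_rpow hlow (one_sub_inv_cosh_le_relPhase ht₀.le ht hq)
    (relPhase_le_two hq) _

lemma PoissonSymbol.exists_abs_le_mul_poissonPhase_rpow (hF : PoissonSymbol κ d F) (T : ℝ) :
    ∃ K, 0 ≤ K ∧ ∀ ⦃t θ φ q⦄, 0 < t → t ≤ T → q ∈ openSquare →
      |F t θ φ q| ≤ K * poissonPhase t θ φ q ^ (-κ / 2) := by
  obtain ⟨K, hK, hbound⟩ := hF.exists_abs_le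
  refine ⟨K * (1 ^ (d + κ / 2) + Real.cosh (T / 2) ^ (d + κ / 2)), by positivity,
    fun t θ φ q ht htT hq => (hbound ht hq).trans ?_⟩
  have hcosh : Real.cosh (t / 2) ≤ Real.cosh (T / 2) := by
    rw [cosh_le_cosh, abs_of_pos (by positivity), abs_of_pos (by linarith)]
    linarith
  have hrel : relPhase t θ φ q ^ (-κ / 2) * Real.cosh (t / 2) ^ d =
      Real.cosh (t / 2) ^ (d + κ / 2) * poissonPhase t θ φ q ^ (-κ / 2) := by
    rw [relPhase, div_rpow (poissonPhase_pos ht hq).le (cosh_pos _).le, neg_div,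
      rpow_neg (cosh_pos _).le, rpow_add (cosh_pos _), div_inv_eq_mul]
    ring
  rw [hrel, mul_assoc]
  have hphase := rpow_nonneg (poissonPhase_pos (θ := θ) (φ := φ) ht hq).le (-κ / 2)
  gcongr
  exact rpow_le_rpow_add_rpow one_pos (one_le_cosh _) hcosh _

lemma PoissonSymbol.integrable (hF : PoissonSymbol κ d F) (ha : -(1 / 2) < a)
    (hb : -(1 / 2) < b) {t : ℝ} (ht : 0 < t) (θ φ : ℝ) :
    Integrable (F t θ φ) (ultrasphericalProd a b) := by
  have := isFiniteMeasure_ultrasphericalProd ha hb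
  obtain ⟨K, -, hK⟩ := hF.exists_abs_le_mul_cosh_rpow ht
  refine .of_bound (hF.measurable t θ φ).aestronglyMeasurable (K * Real.cosh (t / 2) ^ d) ?_
  filter_upwards [ae_ultrasphericalProd_mem a b] with q hq using hK le_rfl hq

lemma PoissonSymbol.exists_hasDerivAt_integral (hF : PoissonSymbol κ d F) (ha : -(1 / 2) < a)
    (hb : -(1 / 2) < b) (u v w : ℝ) :
    ∃ F', PoissonSymbol (κ + 1) d F' ∧ ∀ ⦃x y z : ℝ → ℝ⦄, (∀ s, HasDerivAt x u s) →
      (∀ s, HasDerivAt y v s) → (∀ s, HasDerivAt z w s) → ∀ ⦃s₀⦄, 0 < x s₀ →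
        HasDerivAt (fun s => ∫ q, F (x s) (y s) (z s) q ∂ultrasphericalProd a b)
          (∫ q, F' (x s₀) (y s₀) (z s₀) q ∂ultrasphericalProd a b) s₀ := by
  have := isFiniteMeasure_ultrasphericalProd ha hb
  obtain ⟨F', hF', hderiv⟩ := hF.exists_hasDirectionalDeriv u v w
  refine ⟨F', hF', fun x y z hx hy hz s₀ hs₀ => ?_⟩
  obtain ⟨K, hK, hbound⟩ := hF'.exists_abs_le_mul_cosh_rpow (half_pos hs₀)
  have hnhds : x ⁻¹' Ioo (x s₀ / 2) (2 * x s₀) ∈ nhds s₀ :=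
    (hx s₀).continuousAt.preimage_mem_nhds (Ioo_mem_nhds (by linarith) (by linarith))
  refine (hasDerivAt_integral_of_dominated_loc_of_deriv_le (F := fun s => F (x s) (y s) (z s))
    (F' := fun s => F' (x s) (y s) (z s)) hnhds
    (.of_forall fun s => (hF.measurable _ _ _).aestronglyMeasurable) (hF.integrable ha hb hs₀ _ _)
    (hF'.measurable _ _ _).aestronglyMeasurable ?_
    (integrable_const (K * (1 ^ d + Real.cosh (x s₀) ^ d))) ?_).2
  · filter_upwards [ae_ultrasphericalProd_mem a b] with q hq s hs
    have hpos : 0 < x s := (half_pos hs₀).trans hs.1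
    refine (hbound hs.1.le hq).trans (mul_le_mul_of_nonneg_left ?_ hK)
    refine rpow_le_rpow_add_rpow one_pos (one_le_cosh _) (cosh_le_cosh.2 ?_) d
    rw [abs_of_pos (half_pos hpos), abs_of_pos hs₀]
    linarith [hs.2]
  · filter_upwards [ae_ultrasphericalProd_mem a b] with q hq s hs
    exact hderiv (hx s) (hy s) (hz s) ((half_pos hs₀).trans hs.1) hq

/-- `g` is, for positive times, the integral of a symbol of order `κ` and growth `d`. -/
def IsSymbolIntegral (a b κ d : ℝ) (g : ℝ → ℝ → ℝ → ℝ) : Prop :=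
  ∃ F, PoissonSymbol κ d F ∧
    ∀ ⦃t⦄, 0 < t → ∀ θ φ, g t θ φ = ∫ q, F t θ φ q ∂ultrasphericalProd a b

lemma isSymbolIntegral_jHker (ha : -(1 / 2) < a) (hb : -(1 / 2) < b) :
    IsSymbolIntegral a b (2 * (a + b) + 3) (-(a + b + 1)) (jHker a b) := by
  refine ⟨_, ((PoissonSymbol.sinh.mul (.phase (a + b + 2))).const_mul (poissonConst a b)).weaken
    (by linarith) (by linarith), fun t ht θ φ => ?_⟩
  rw [jHker_eq_integral ha hb ht, ← integral_const_mul]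
  rfl

lemma IsSymbolIntegral.deriv_time (hg : IsSymbolIntegral a b κ d g) (ha : -(1 / 2) < a)
    (hb : -(1 / 2) < b) :
    IsSymbolIntegral a b (κ + 1) d fun t θ φ => deriv (fun s => g s θ φ) t := by
  obtain ⟨F, hF, hgF⟩ := hg
  obtain ⟨F', hF', hderiv⟩ := hF.exists_hasDerivAt_integral ha hb 1 0 0
  refine ⟨F', hF', fun t ht θ φ => ?_⟩
  have heq : (fun s => g s θ φ) =ᶠ[nhds t] fun s => ∫ q, F s θ φ q ∂ultrasphericalProd a b :=
    (lt_mem_nhds ht).mono fun s hs => hgF hs θ φ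
  exact heq.deriv_eq.trans
    (hderiv hasDerivAt_id (hasDerivAt_const · θ) (hasDerivAt_const · φ) ht).deriv

lemma IsSymbolIntegral.deriv_left (hg : IsSymbolIntegral a b κ d g) (ha : -(1 / 2) < a)
    (hb : -(1 / 2) < b) :
    IsSymbolIntegral a b (κ + 1) d fun t θ φ => deriv (fun x => g t x φ) θ := by
  obtain ⟨F, hF, hgF⟩ := hg
  obtain ⟨F', hF', hderiv⟩ := hF.exists_hasDerivAt_integral ha hb 0 1 0
  refine ⟨F', hF', fun t ht θ φ => ?_⟩
  simp only [hgF ht]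
  exact (hderiv (hasDerivAt_const · t) hasDerivAt_id (hasDerivAt_const · φ) ht).deriv

lemma IsSymbolIntegral.deriv_right (hg : IsSymbolIntegral a b κ d g) (ha : -(1 / 2) < a)
    (hb : -(1 / 2) < b) :
    IsSymbolIntegral a b (κ + 1) d fun t θ φ => deriv (g t θ) φ := by
  obtain ⟨F, hF, hgF⟩ := hg
  obtain ⟨F', hF', hderiv⟩ := hF.exists_hasDerivAt_integral ha hb 0 0 1
  refine ⟨F', hF', fun t ht θ φ => ?_⟩
  simp only [funext (hgF ht θ)]
  exact (hderiv (hasDerivAt_const · t) (hasDerivAt_const · θ) hasDerivAt_id ht).deriv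

lemma isSymbolIntegral_iterate_deriv_time (hg : IsSymbolIntegral a b κ d g) (ha : -(1 / 2) < a)
    (hb : -(1 / 2) < b) (n : ℕ) :
    IsSymbolIntegral a b (κ + n) d fun t θ φ => deriv^[n] (fun s => g s θ φ) t := by
  induction n with
  | zero => simpa using hg
  | succ n ih =>
    simp only [Function.iterate_succ_apply', Nat.cast_succ, ← add_assoc]
    exact ih.deriv_time ha hb

lemma isSymbolIntegral_iterate_deriv_left (hg : IsSymbolIntegral a b κ d g) (ha : -(1 / 2) < a)
    (hb : -(1 / 2) < b) (n : ℕ) :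
    IsSymbolIntegral a b (κ + n) d fun t θ φ => deriv^[n] (fun x => g t x φ) θ := by
  induction n with
  | zero => simpa using hg
  | succ n ih =>
    simp only [Function.iterate_succ_apply', Nat.cast_succ, ← add_assoc]
    exact ih.deriv_left ha hb

lemma isSymbolIntegral_iterate_deriv_right (hg : IsSymbolIntegral a b κ d g) (ha : -(1 / 2) < a)
    (hb : -(1 / 2) < b) (n : ℕ) :
    IsSymbolIntegral a b (κ + n) d fun t θ φ => deriv^[n] (g t θ) φ := by
  induction n with
  | zero => simpa using hg
  | succ n ih =>
    simp only [Function.iterate_succ_apply', Nat.cast_succ, ← add_assoc]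
    exact ih.deriv_right ha hb

/-- The derivative `∂_φ^L ∂_θ^N ∂_t^M` of the Jacobi–Poisson kernel. -/
def kernelDeriv (a b : ℝ) (M N L : ℕ) (t θ φ : ℝ) : ℝ :=
  deriv^[L] (fun φ' => deriv^[N] (fun θ' => deriv^[M] (fun s => jHker a b s θ' φ') t) θ) φ

lemma isSymbolIntegral_kernelDeriv (ha : -(1 / 2) < a) (hb : -(1 / 2) < b) (M N L : ℕ) :
    IsSymbolIntegral a b (2 * (a + b) + 3 + M + N + L) (-(a + b + 1)) (kernelDeriv a b M N L) :=
  isSymbolIntegral_iterate_deriv_right (isSymbolIntegral_iterate_deriv_left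
    (isSymbolIntegral_iterate_deriv_time (isSymbolIntegral_jHker ha hb) ha hb M) ha hb N) ha hb L

lemma IsSymbolIntegral.exists_abs_le_integral (hg : IsSymbolIntegral a b κ d g)
    (ha : -(1 / 2) < a) (hb : -(1 / 2) < b) (T : ℝ) :
    ∃ C, 0 ≤ C ∧ ∀ ⦃t⦄, 0 < t → t ≤ T → ∀ θ φ,
      |g t θ φ| ≤ C * ∫ q, poissonPhase t θ φ q ^ (-κ / 2) ∂ultrasphericalProd a b := by
  obtain ⟨F, hF, hgF⟩ := hg
  obtain ⟨K, hK, hbound⟩ := hF.exists_abs_le_mul_poissonPhase_rpow T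
  refine ⟨K, hK, fun t ht htT θ φ => ?_⟩
  have hphase := ((PoissonSymbol.phase (κ / 2)).integrable ha hb ht θ φ).const_mul K
  rw [hgF ht, ← integral_const_mul, ← norm_eq_abs, neg_div]
  refine norm_integral_le_of_norm_le hphase ?_
  filter_upwards [ae_ultrasphericalProd_mem a b] with q hq
  exact neg_div (2 : ℝ) κ ▸ hbound ht htT hq

lemma cosh_rpow_le_mul_exp {t : ℝ} (ht : 0 ≤ t) (d : ℝ) :
    cosh (t / 2) ^ d ≤ ((1 / 2) ^ d + 1) * exp (d * (t / 2)) := by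
  have hlow : 1 / 2 * exp (t / 2) ≤ cosh (t / 2) := by
    rw [cosh_eq]
    linarith [exp_pos (-(t / 2))]
  have hupp : cosh (t / 2) ≤ exp (t / 2) := by
    rw [cosh_eq]
    linarith [exp_le_exp.2 (show -(t / 2) ≤ t / 2 by linarith)]
  calc cosh (t / 2) ^ d ≤ (1 / 2 * exp (t / 2)) ^ d + exp (t / 2) ^ d :=
        rpow_le_rpow_add_rpow (by positivity) hlow hupp d
    _ = ((1 / 2) ^ d + 1) * exp (d * (t / 2)) := by
      rw [mul_rpow (by norm_num) (exp_pos _).le, ← exp_mul, mul_comm d]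
      ring

lemma IsSymbolIntegral.exists_abs_le_exp (hg : IsSymbolIntegral a b κ d g)
    (ha : -(1 / 2) < a) (hb : -(1 / 2) < b) {t₀ : ℝ} (ht₀ : 0 < t₀) :
    ∃ C, 0 ≤ C ∧ ∀ ⦃t⦄, t₀ ≤ t → ∀ θ φ, |g t θ φ| ≤ C * exp (d * (t / 2)) := by
  have := isFiniteMeasure_ultrasphericalProd ha hb
  obtain ⟨F, hF, hgF⟩ := hg
  obtain ⟨K, hK, hbound⟩ := hF.exists_abs_le_mul_cosh_rpow ht₀
  refine ⟨K * ((1 / 2) ^ d + 1) * (ultrasphericalProd a b).real univ, by positivity,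
    fun t ht θ φ => ?_⟩
  rw [hgF (ht₀.trans_le ht), mul_right_comm, ← norm_eq_abs]
  refine norm_integral_le_of_norm_le_const ?_
  filter_upwards [ae_ultrasphericalProd_mem a b] with q hq
  rw [mul_assoc]
  exact (hbound ht hq).trans
    (mul_le_mul_of_nonneg_left (cosh_rpow_le_mul_exp (ht₀.le.trans ht) d) hK)

end KernelDerivatives

/-! ### Singular integrals with respect to the ultraspherical measures -/

section SingularIntegrals

lemma setLIntegral_Ioc_rpow {e δ : ℝ} (he : -1 < e) (hδ : 0 ≤ δ) :
    ∫⁻ x in Ioc 0 δ, ENNReal.ofReal (x ^ e) = ENNReal.ofReal (δ ^ (e + 1) / (e + 1)) := by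
  have hint := (intervalIntegrable_iff_integrableOn_Ioc_of_le hδ).1
    (intervalIntegral.intervalIntegrable_rpow' he)
  rw [← ofReal_integral_eq_lintegral_ofReal hint, ← intervalIntegral.integral_of_le hδ,
    integral_rpow (.inl he), zero_rpow (by linarith), sub_zero]
  filter_upwards [ae_restrict_mem measurableSet_Ioc] with x hx using rpow_nonneg hx.1.le e

lemma setLIntegral_Ioi_rpow {e δ : ℝ} (he : e < -1) (hδ : 0 < δ) :
    ∫⁻ x in Ioi δ, ENNReal.ofReal (x ^ e) = ENNReal.ofReal (-δ ^ (e + 1) / (e + 1)) := by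
  rw [← ofReal_integral_eq_lintegral_ofReal (integrableOn_Ioi_rpow_of_lt he hδ),
    integral_Ioi_rpow_of_lt he hδ]
  filter_upwards [ae_restrict_mem measurableSet_Ioi] with x hx using rpow_nonneg (hδ.trans hx).le e

variable {τ ν A D : ℝ}

lemma setLIntegral_Ioc_rpow_mul_min_rpow_le (hτ : 0 < τ) (hA : 0 < A) (hD : 0 < D) :
    ∫⁻ x in Ioc 0 (A / D), ENNReal.ofReal (x ^ (τ - 1) * min (A ^ (-ν)) ((x * D) ^ (-ν))) ≤
      ENNReal.ofReal (A ^ (τ - ν) * D ^ (-τ) / τ) := by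
  have hvalue : A ^ (-ν) * (A / D) ^ τ = A ^ (τ - ν) * D ^ (-τ) := by
    rw [div_rpow hA.le hD.le, sub_eq_add_neg, rpow_add hA, rpow_neg hD.le]
    ring
  calc ∫⁻ x in Ioc 0 (A / D), ENNReal.ofReal (x ^ (τ - 1) * min (A ^ (-ν)) ((x * D) ^ (-ν)))
      ≤ ∫⁻ x in Ioc 0 (A / D), ENNReal.ofReal (A ^ (-ν)) * ENNReal.ofReal (x ^ (τ - 1)) := by
        refine setLIntegral_mono' measurableSet_Ioc fun x hx => ?_
        rw [← ENNReal.ofReal_mul (by positivity), mul_comm]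
        gcongr
        · exact rpow_nonneg hx.1.le _
        · exact min_le_left _ _
    _ = ENNReal.ofReal (A ^ (τ - ν) * D ^ (-τ) / τ) := by
      rw [lintegral_const_mul _ (by fun_prop), setLIntegral_Ioc_rpow (by linarith) (by positivity),
        ← ENNReal.ofReal_mul (by positivity), sub_add_cancel, ← mul_div_assoc, hvalue]

lemma setLIntegral_Ioi_rpow_mul_min_rpow_le (hν : τ < ν) (hA : 0 < A) (hD : 0 < D) :
    ∫⁻ x in Ioi (A / D), ENNReal.ofReal (x ^ (τ - 1) * min (A ^ (-ν)) ((x * D) ^ (-ν))) ≤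
      ENNReal.ofReal (A ^ (τ - ν) * D ^ (-τ) / (ν - τ)) := by
  have hδ : 0 < A / D := div_pos hA hD
  have hvalue : D ^ (-ν) * (A / D) ^ (τ - ν) = A ^ (τ - ν) * D ^ (-τ) := by
    rw [div_rpow hA.le hD.le, show -τ = -ν - (τ - ν) by ring, rpow_sub hD (-ν)]
    ring
  calc ∫⁻ x in Ioi (A / D), ENNReal.ofReal (x ^ (τ - 1) * min (A ^ (-ν)) ((x * D) ^ (-ν)))
      ≤ ∫⁻ x in Ioi (A / D), ENNReal.ofReal (D ^ (-ν)) * ENNReal.ofReal (x ^ (τ - ν - 1)) := by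
        refine setLIntegral_mono' measurableSet_Ioi fun x hx => ?_
        have hx : 0 < x := hδ.trans hx
        rw [← ENNReal.ofReal_mul (by positivity), show τ - ν - 1 = τ - 1 + -ν by ring, rpow_add hx,
          mul_left_comm, mul_comm (D ^ (-ν)), ← mul_rpow hx.le hD.le]
        gcongr
        exact min_le_right _ _
    _ = ENNReal.ofReal (A ^ (τ - ν) * D ^ (-τ) / (ν - τ)) := by
      rw [lintegral_const_mul _ (by fun_prop), setLIntegral_Ioi_rpow (by linarith) hδ,
        ← ENNReal.ofReal_mul (by positivity), sub_add_cancel, neg_div, ← div_neg, neg_sub,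
        ← mul_div_assoc, hvalue]

/- The two terms of the minimum are equal at `x = A / D`, where the integral is split. -/
lemma setLIntegral_rpow_mul_min_rpow_le (hτ : 0 < τ) (hν : τ < ν) (hA : 0 < A) (hD : 0 < D) :
    ∫⁻ x in Ioi 0, ENNReal.ofReal (x ^ (τ - 1) * min (A ^ (-ν)) ((x * D) ^ (-ν))) ≤
      ENNReal.ofReal ((1 / τ + 1 / (ν - τ)) * (A ^ (τ - ν) * D ^ (-τ))) := by
  rw [← Ioc_union_Ioi_eq_Ioi (div_pos hA hD).le]
  refine (lintegral_union_le _ _ _).trans ((add_le_add (setLIntegral_Ioc_rpow_mul_min_rpow_le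
    hτ hA hD) (setLIntegral_Ioi_rpow_mul_min_rpow_le hν hA hD)).trans_eq ?_)
  rw [← ENNReal.ofReal_add (by positivity) (by positivity)]
  ring_nf

lemma setLIntegral_ultrasphericalMeasure_comp_one_sub_le (a : ℝ) {g : ℝ → ℝ≥0∞}
    (hg : Measurable g) :
    ∫⁻ u in Ioi 0, g (1 - u) ∂ultrasphericalMeasure a ≤
      ENNReal.ofReal (1 + 2 ^ (a - 1 / 2)) *
        ∫⁻ x in Ioi 0, ENNReal.ofReal (x ^ (a - 1 / 2)) * g x := by
  have hdensity : ∀ u ∈ Ioi 0 ∩ Ioo (-1 : ℝ) 1,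
      (1 - u ^ 2) ^ (a - 1 / 2) ≤ (1 + 2 ^ (a - 1 / 2)) * (1 - u) ^ (a - 1 / 2) := by
    rintro u ⟨hu0 : 0 < u, -, hu1⟩
    rw [show 1 - u ^ 2 = (1 + u) * (1 - u) by ring, mul_rpow (by linarith) (by linarith)]
    have hupp := rpow_le_rpow_add_rpow (e := a - 1 / 2) one_pos (show 1 ≤ 1 + u by linarith)
      (show 1 + u ≤ 2 by linarith)
    rw [one_rpow] at hupp
    exact mul_le_mul_of_nonneg_right hupp (rpow_nonneg (by linarith) _)
  rw [ultrasphericalMeasure, setLIntegral_withDensity_eq_setLIntegral_mul _ (by fun_prop)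
    (by fun_prop) measurableSet_Ioi, Measure.restrict_restrict measurableSet_Ioi,
    ← lintegral_indicator (measurableSet_Ioi.inter measurableSet_Ioo),
    ← lintegral_const_mul _ (by fun_prop), ← lintegral_indicator measurableSet_Ioi,
    ← lintegral_sub_left_eq_self (indicator (Ioi 0) _) (1 : ℝ)]
  refine lintegral_mono fun u => indicator_apply_le' (fun hu => ?_) fun _ => zero_le
  rw [indicator_of_mem (show 1 - u ∈ Ioi 0 from sub_pos.2 hu.2.2), ← mul_assoc,
    ← ENNReal.ofReal_mul (by positivity)]
  exact mul_le_mul_left (ENNReal.ofReal_le_ofReal (hdensity u hu)) _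

variable {a b B : ℝ}

/- For `0 < x < 2` both `A` and `x / 2 * (A + B)` are lower bounds for `A + x * B`. -/
lemma setLIntegral_Ioi_ultrasphericalMeasure_rpow_le (ha : -(1 / 2) < a) (hν : a + 1 / 2 < ν)
    (hA : 0 < A) (hB : 0 ≤ B) :
    ∫⁻ u in Ioi (0 : ℝ), ENNReal.ofReal ((A + (1 - u) * B) ^ (-ν)) ∂ultrasphericalMeasure a ≤
      ENNReal.ofReal ((1 + 2 ^ (a - 1 / 2)) * ((1 / (a + 1 / 2) + 1 / (ν - (a + 1 / 2))) *
        (A ^ (a + 1 / 2 - ν) * ((A + B) / 2) ^ (-(a + 1 / 2))))) := by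
  have hmin : ∀ᵐ u ∂ultrasphericalMeasure a, ENNReal.ofReal ((A + (1 - u) * B) ^ (-ν)) ≤
      ENNReal.ofReal (min (A ^ (-ν)) (((1 - u) * ((A + B) / 2)) ^ (-ν))) := by
    filter_upwards [ae_ultrasphericalMeasure_mem a] with u ⟨hu1, hu2⟩
    refine ENNReal.ofReal_le_ofReal (le_min ?_ ?_)
    · exact rpow_le_rpow_of_nonpos hA (by nlinarith) (by linarith)
    · exact rpow_le_rpow_of_nonpos (by positivity) (by nlinarith) (by linarith)
  refine (lintegral_mono_ae (ae_restrict_of_ae hmin)).trans <|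
    (setLIntegral_ultrasphericalMeasure_comp_one_sub_le a
      (g := fun x => ENNReal.ofReal (min (A ^ (-ν)) ((x * ((A + B) / 2)) ^ (-ν))))
      (by fun_prop)).trans ?_
  rw [ENNReal.ofReal_mul (by positivity)]
  gcongr
  refine (setLIntegral_congr_fun measurableSet_Ioi fun x hx => ?_).trans_le
    (setLIntegral_rpow_mul_min_rpow_le (by linarith) hν hA (by positivity))
  rw [← ENNReal.ofReal_mul (rpow_nonneg (le_of_lt hx) _), show a - 1 / 2 = a + 1 / 2 - 1 by ring]

lemma setLIntegral_Iic_ultrasphericalMeasure_rpow_le (ha : -(1 / 2) < a) (hν : a + 1 / 2 < ν)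
    (hA : 0 < A) (hB : 0 ≤ B) :
    ∫⁻ u in Iic (0 : ℝ), ENNReal.ofReal ((A + (1 - u) * B) ^ (-ν)) ∂ultrasphericalMeasure a ≤
      ENNReal.ofReal ((ultrasphericalMeasure a).real univ *
        (A ^ (a + 1 / 2 - ν) * (A + B) ^ (-(a + 1 / 2)))) := by
  have := isFiniteMeasure_ultrasphericalMeasure ha
  have hbound : ∀ u ∈ Iic (0 : ℝ),
      (A + (1 - u) * B) ^ (-ν) ≤ A ^ (a + 1 / 2 - ν) * (A + B) ^ (-(a + 1 / 2)) := by
    intro u (hu : u ≤ 0)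
    calc (A + (1 - u) * B) ^ (-ν) ≤ (A + B) ^ (-ν) :=
          rpow_le_rpow_of_nonpos (by positivity) (by nlinarith) (by linarith)
      _ = (A + B) ^ (a + 1 / 2 - ν) * (A + B) ^ (-(a + 1 / 2)) := by
        rw [← rpow_add (by positivity)]
        ring_nf
      _ ≤ A ^ (a + 1 / 2 - ν) * (A + B) ^ (-(a + 1 / 2)) := by
        gcongr ?_ * _
        exact rpow_le_rpow_of_nonpos hA (by linarith) (by linarith)
  refine (setLIntegral_mono' measurableSet_Iic fun u hu =>
    ENNReal.ofReal_le_ofReal (hbound u hu)).trans ?_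
  rw [setLIntegral_const, mul_comm, ENNReal.ofReal_mul measureReal_nonneg, ofReal_measureReal]
  gcongr
  exact subset_univ _

lemma exists_lintegral_ultrasphericalMeasure_rpow_le (ha : -(1 / 2) < a) (hν : a + 1 / 2 < ν) :
    ∃ C, 0 ≤ C ∧ ∀ ⦃A B : ℝ⦄, 0 < A → 0 ≤ B →
      ∫⁻ u, ENNReal.ofReal ((A + (1 - u) * B) ^ (-ν)) ∂ultrasphericalMeasure a ≤
        ENNReal.ofReal (C * (A ^ (a + 1 / 2 - ν) * (A + B) ^ (-(a + 1 / 2)))) := by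
  have hτ : 0 < a + 1 / 2 := by linarith
  refine ⟨(ultrasphericalMeasure a).real univ + (1 + 2 ^ (a - 1 / 2)) *
    (1 / (a + 1 / 2) + 1 / (ν - (a + 1 / 2))) * 2 ^ (a + 1 / 2), by positivity,
    fun A B hA hB => ?_⟩
  rw [← setLIntegral_univ, ← Iic_union_Ioi (a := (0 : ℝ))]
  refine (lintegral_union_le _ _ _).trans <| (add_le_add
    (setLIntegral_Iic_ultrasphericalMeasure_rpow_le ha hν hA hB)
    (setLIntegral_Ioi_ultrasphericalMeasure_rpow_le ha hν hA hB)).trans_eq ?_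
  rw [← ENNReal.ofReal_add (by positivity) (by positivity), div_rpow (by positivity) two_pos.le,
    rpow_neg two_pos.le, div_inv_eq_mul, Iic_union_Ioi]
  ring_nf

lemma exists_lintegral_ultrasphericalProd_rpow_le (ha : -(1 / 2) < a) (hb : -(1 / 2) < b)
    (hν : a + b + 1 < ν) :
    ∃ C, 0 ≤ C ∧ ∀ ⦃R s c : ℝ⦄, 0 < R → 0 ≤ s → 0 ≤ c →
      ∫⁻ q, ENNReal.ofReal ((R + (1 - q.1) * s + (1 - q.2) * c) ^ (-ν)) ∂ultrasphericalProd a b ≤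
        ENNReal.ofReal (C * (R ^ (a + b + 1 - ν) * (R + s) ^ (-(a + 1 / 2)) *
          (R + c) ^ (-(b + 1 / 2)))) := by
  have := isFiniteMeasure_ultrasphericalMeasure hb
  obtain ⟨C₁, hC₁, hinner⟩ :=
    exists_lintegral_ultrasphericalMeasure_rpow_le hb (show b + 1 / 2 < ν by linarith)
  obtain ⟨C₂, hC₂, houter⟩ := exists_lintegral_ultrasphericalMeasure_rpow_le ha
    (show a + 1 / 2 < ν - (b + 1 / 2) by linarith)
  refine ⟨C₁ * C₂, by positivity, fun R s c hR hs hc => ?_⟩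
  have hsection : ∀ᵐ u ∂ultrasphericalMeasure a,
      ∫⁻ v, ENNReal.ofReal ((R + (1 - u) * s + (1 - v) * c) ^ (-ν)) ∂ultrasphericalMeasure b ≤
        ENNReal.ofReal (C₁ * (R + c) ^ (-(b + 1 / 2))) *
          ENNReal.ofReal ((R + (1 - u) * s) ^ (-(ν - (b + 1 / 2)))) := by
    filter_upwards [ae_ultrasphericalMeasure_mem a] with u hu
    have hR_le : R ≤ R + (1 - u) * s :=
      le_add_of_nonneg_right (mul_nonneg (sub_nonneg.2 hu.2.le) hs)
    have hpos : 0 < R + (1 - u) * s := hR.trans_le hR_le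
    refine (hinner hpos hc).trans ?_
    rw [← ENNReal.ofReal_mul (by positivity), mul_assoc, neg_sub, mul_comm ((R + c) ^ _)]
    gcongr ENNReal.ofReal (_ * (_ * ?_))
    exact rpow_le_rpow_of_nonpos (by positivity) (by linarith) (by linarith)
  rw [lintegral_prod _ (by fun_prop)]
  refine (lintegral_mono_ae hsection).trans ?_
  rw [lintegral_const_mul _ (by fun_prop)]
  refine (mul_le_mul_right (houter hR hs) _).trans_eq ?_
  rw [← ENNReal.ofReal_mul (by positivity),
    show a + 1 / 2 - (ν - (b + 1 / 2)) = a + b + 1 - ν by ring]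
  ring_nf

/-- The factor of `u` in `angleForm θ φ (u, v)`. -/
def sinProd (θ φ : ℝ) : ℝ := sin (θ / 2) * sin (φ / 2)

/-- The factor of `v` in `angleForm θ φ (u, v)`. -/
def cosProd (θ φ : ℝ) : ℝ := cos (θ / 2) * cos (φ / 2)

variable {θ φ : ℝ}

lemma sinProd_pos (hθ : θ ∈ Ioo 0 π) (hφ : φ ∈ Ioo 0 π) : 0 < sinProd θ φ :=
  mul_pos (sin_half_pos hθ) (sin_half_pos hφ)

lemma cosProd_pos (hθ : θ ∈ Ioo 0 π) (hφ : φ ∈ Ioo 0 π) : 0 < cosProd θ φ :=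
  mul_pos (cos_half_pos hθ) (cos_half_pos hφ)

lemma sinProd_add_cosProd (θ φ : ℝ) : sinProd θ φ + cosProd θ φ = cos ((θ - φ) / 2) := by
  rw [sub_div, cos_sub, sinProd, cosProd, add_comm]

lemma sq_div_eight_le_cosh_half_sub_one {t : ℝ} (ht : 0 ≤ t) : t ^ 2 / 8 ≤ cosh (t / 2) - 1 := by
  have hsinh : t / 4 ≤ sinh (t / 4) := self_le_sinh_iff.2 (by positivity)
  rw [show t / 2 = 2 * (t / 4) by ring, cosh_two_mul, cosh_sq]
  nlinarith

lemma sq_sub_div_le_one_sub_cos_half (h : |θ - φ| ≤ π) :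
    (θ - φ) ^ 2 / 32 ≤ 1 - cos ((θ - φ) / 2) := by
  have hcos := cos_le_one_sub_mul_cos_sq (x := (θ - φ) / 2)
    (by rw [abs_div, abs_two]; linarith [pi_pos])
  have hpi : 1 / 8 ≤ 2 / π ^ 2 := by
    rw [div_le_div_iff₀ (by norm_num) (by positivity)]
    nlinarith [pi_pos, pi_le_four]
  nlinarith [mul_le_mul_of_nonneg_right hpi (sq_nonneg ((θ - φ) / 2))]

lemma abs_sub_lt_pi (hθ : θ ∈ Ioo 0 π) (hφ : φ ∈ Ioo 0 π) : |θ - φ| < π :=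
  abs_lt.2 ⟨by linarith [hθ.1, hφ.2], by linarith [hθ.2, hφ.1]⟩

lemma le_poissonPhase {t : ℝ} (ht : 0 ≤ t) (hθ : θ ∈ Ioo 0 π) (hφ : φ ∈ Ioo 0 π) {q : ℝ × ℝ}
    (hq : q ∈ openSquare) :
    1 / 32 * (t ^ 2 + (θ - φ) ^ 2 + (1 - q.1) * sinProd θ φ + (1 - q.2) * cosProd θ φ) ≤
      poissonPhase t θ φ q := by
  have htime := sq_div_eight_le_cosh_half_sub_one ht
  have hangle := sq_sub_div_le_one_sub_cos_half (abs_sub_lt_pi hθ hφ).le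
  have hs := mul_nonneg (sub_nonneg.2 hq.1.2.le) (sinProd_pos hθ hφ).le
  have hc := mul_nonneg (sub_nonneg.2 hq.2.2.le) (cosProd_pos hθ hφ).le
  have hphase : poissonPhase t θ φ q = (cosh (t / 2) - 1) + (1 - cos ((θ - φ) / 2)) +
      (1 - q.1) * sinProd θ φ + (1 - q.2) * cosProd θ φ := by
    rw [← sinProd_add_cosProd, poissonPhase, angleForm, sinProd, cosProd]
    ring
  nlinarith [sq_nonneg t]

theorem exists_integral_poissonPhase_rpow_le (ha : -(1 / 2) < a) (hb : -(1 / 2) < b)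
    (hν : a + b + 1 < ν) :
    ∃ C, 0 ≤ C ∧ ∀ ⦃t θ φ : ℝ⦄, 0 < t → θ ∈ Ioo 0 π → φ ∈ Ioo 0 π →
      ∫ q, poissonPhase t θ φ q ^ (-ν) ∂ultrasphericalProd a b ≤
        C * ((t ^ 2 + (θ - φ) ^ 2) ^ (a + b + 1 - ν) *
          (t ^ 2 + (θ - φ) ^ 2 + sinProd θ φ) ^ (-(a + 1 / 2)) *
          (t ^ 2 + (θ - φ) ^ 2 + cosProd θ φ) ^ (-(b + 1 / 2))) := by
  obtain ⟨C, hC, hbound⟩ := exists_lintegral_ultrasphericalProd_rpow_le ha hb hν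
  refine ⟨(1 / 32) ^ (-ν) * C, by positivity, fun t θ φ ht hθ hφ => ?_⟩
  have hs := sinProd_pos hθ hφ
  have hc := cosProd_pos hθ hφ
  have hR : 0 < t ^ 2 + (θ - φ) ^ 2 := by positivity
  rw [integral_eq_lintegral_of_nonneg_ae
    ((ae_ultrasphericalProd_mem a b).mono fun q hq => rpow_nonneg (poissonPhase_pos ht hq).le _)
    ((PoissonSymbol.phase ν).integrable ha hb ht θ φ).1]
  refine ENNReal.toReal_le_of_le_ofReal (by positivity) ?_
  rw [mul_assoc, ENNReal.ofReal_mul (by positivity)]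
  refine le_trans ?_ (mul_le_mul_right (hbound hR hs.le hc.le) _)
  rw [← lintegral_const_mul _ (by fun_prop)]
  refine lintegral_mono_ae ?_
  filter_upwards [ae_ultrasphericalProd_mem a b] with q hq
  have hsum : 0 < t ^ 2 + (θ - φ) ^ 2 + (1 - q.1) * sinProd θ φ + (1 - q.2) * cosProd θ φ := by
    have := sub_pos.2 hq.1.2
    have := sub_pos.2 hq.2.2
    positivity
  rw [← ENNReal.ofReal_mul (by positivity), ← mul_rpow (by norm_num) hsum.le]
  exact ENNReal.ofReal_le_ofReal (rpow_le_rpow_of_nonpos (by positivity)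
    (le_poissonPhase ht.le hθ hφ hq) (by linarith))

end SingularIntegrals

/-! ### The measure of balls -/

section BallMeasure

lemma rpow_le_mul_rpow {l h x y : ℝ} (hl : 0 < l) (hh : 0 ≤ h) (hy : 0 < y) (hlx : l * y ≤ x)
    (hxh : x ≤ h * y) (e : ℝ) : x ^ e ≤ (l ^ e + h ^ e) * y ^ e := by
  rw [add_mul, ← mul_rpow hl.le hy.le, ← mul_rpow hh hy.le]
  exact rpow_le_rpow_add_rpow (mul_pos hl hy) hlx hxh e

variable {e f θ φ r x : ℝ}

lemma setLIntegral_Ioo_rpow_le_of_le_half (e : ℝ) (hθ : 0 < θ) (hr : 0 ≤ r) (h : r ≤ θ / 2) :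
    ∫⁻ x in Ioo (θ - r) (θ + r), ENNReal.ofReal (x ^ e) ≤
      ENNReal.ofReal (2 * ((1 / 3) ^ e + 1) * (r * (θ + r) ^ e)) := by
  have hpos : 0 < θ + r := by positivity
  calc ∫⁻ x in Ioo (θ - r) (θ + r), ENNReal.ofReal (x ^ e)
      ≤ ∫⁻ _ in Ioo (θ - r) (θ + r), ENNReal.ofReal (((1 / 3) ^ e + 1 ^ e) * (θ + r) ^ e) :=
        setLIntegral_mono' measurableSet_Ioo fun x hx => ENNReal.ofReal_le_ofReal <|
          rpow_le_mul_rpow (by norm_num) zero_le_one hpos (by linarith [hx.1])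
            (by linarith [hx.2]) e
    _ = ENNReal.ofReal (2 * ((1 / 3) ^ e + 1) * (r * (θ + r) ^ e)) := by
      rw [setLIntegral_const, Real.volume_Ioo, ← ENNReal.ofReal_mul (by positivity), one_rpow]
      ring_nf

lemma setLIntegral_Ioc_rpow_le_of_half_le (he : -1 < e) (hθ : 0 < θ) (h : θ / 2 ≤ r) :
    ∫⁻ x in Ioc 0 (θ + r), ENNReal.ofReal (x ^ e) ≤
      ENNReal.ofReal (3 / (e + 1) * (r * (θ + r) ^ e)) := by
  have hpos : 0 < θ + r := by linarith
  have he' : 0 < e + 1 := by linarith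
  rw [setLIntegral_Ioc_rpow he hpos.le, rpow_add_one hpos.ne', div_mul_eq_mul_div]
  gcongr ENNReal.ofReal (?_ / _)
  nlinarith [rpow_pos_of_pos hpos e]

lemma exists_setLIntegral_Ioo_inter_Ioi_rpow_le (he : -1 < e) :
    ∃ C, 0 ≤ C ∧ ∀ ⦃θ r : ℝ⦄, 0 < θ → 0 < r →
      ∫⁻ x in Ioo (θ - r) (θ + r) ∩ Ioi 0, ENNReal.ofReal (x ^ e) ≤
        ENNReal.ofReal (C * (r * (θ + r) ^ e)) := by
  have he' : 0 < e + 1 := by linarith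
  refine ⟨2 * ((1 / 3) ^ e + 1) + 3 / (e + 1), by positivity, fun θ r hθ hr => ?_⟩
  rcases le_total r (θ / 2) with h | h
  · refine (lintegral_mono_set inter_subset_left).trans <|
      (setLIntegral_Ioo_rpow_le_of_le_half e hθ hr.le h).trans ?_
    gcongr
    exact le_add_of_nonneg_right (by positivity)
  · refine (lintegral_mono_set fun x hx => (⟨hx.2, hx.1.2.le⟩ : x ∈ Ioc 0 (θ + r))).trans <|
      (setLIntegral_Ioc_rpow_le_of_half_le he hθ h).trans ?_
    gcongr
    exact le_add_of_nonneg_left (by positivity)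

lemma quarter_mul_le_sin_half (hx : 0 ≤ x) (hxπ : x ≤ π) : 1 / 4 * x ≤ sin (x / 2) := by
  have hjordan := mul_le_sin (x := x / 2) (by positivity) (by linarith)
  have hpi : 1 / 2 ≤ 2 / π := by
    rw [div_le_div_iff₀ two_pos pi_pos]
    linarith [pi_le_four]
  nlinarith

lemma sin_half_rpow_mul_cos_half_rpow_le (e f : ℝ) (hx : 0 < x) (hxπ : x ≤ π / 2) :
    sin (x / 2) ^ e * cos (x / 2) ^ f ≤ ((1 / 4) ^ e + 1) * ((1 / 2) ^ f + 1) * x ^ e := by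
  have hsin_ge := quarter_mul_le_sin_half hx.le (by linarith)
  have hsin_le : sin (x / 2) ≤ 1 * x := by linarith [sin_le (x := x / 2) (by positivity)]
  have hcos_ge : 1 / 2 ≤ cos (x / 2) := by
    rw [← cos_pi_div_three]
    exact cos_le_cos_of_nonneg_of_le_pi (by positivity) (by linarith) (by linarith)
  have hsin := rpow_le_mul_rpow (by norm_num) zero_le_one hx hsin_ge hsin_le e
  have hcos := rpow_le_rpow_add_rpow (by norm_num) hcos_ge (cos_le_one (x / 2)) f
  rw [one_rpow] at hsin hcos
  calc sin (x / 2) ^ e * cos (x / 2) ^ f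
      ≤ ((1 / 4) ^ e + 1) * x ^ e * ((1 / 2) ^ f + 1) := by gcongr
    _ = _ := by ring

/- If the ball meets `(0, π / 2]`, then `π - θ + r` is comparable to `1`. -/
lemma exists_setLIntegral_sin_half_rpow_mul_cos_half_rpow_le (he : -1 < e) (f : ℝ) :
    ∃ C, 0 ≤ C ∧ ∀ ⦃θ r : ℝ⦄, θ ∈ Ioo 0 π → 0 < r → r < π →
      ∫⁻ x in Ioo (θ - r) (θ + r) ∩ Ioc 0 (π / 2),
          ENNReal.ofReal (sin (x / 2) ^ e * cos (x / 2) ^ f) ≤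
        ENNReal.ofReal (C * (r * (θ + r) ^ e * (π - θ + r) ^ f)) := by
  obtain ⟨C, hC, hpower⟩ := exists_setLIntegral_Ioo_inter_Ioi_rpow_le he
  refine ⟨((1 / 4) ^ e + 1) * ((1 / 2) ^ f + 1) * C * ((1 / 8) ^ f + 2 ^ f), by positivity,
    fun θ r hθ hr hrπ => ?_⟩
  rcases (Ioo (θ - r) (θ + r) ∩ Ioc 0 (π / 2)).eq_empty_or_nonempty with hempty | ⟨y, hy⟩
  · simp [hempty]
  have hθr : 0 < θ + r := by linarith [hθ.1]
  have hfactor : 1 ≤ ((1 / 8) ^ f + 2 ^ f) * (π - θ + r) ^ f := by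
    have hone := rpow_le_mul_rpow (l := 1 / 8) (h := 2) (x := 1) (y := π - θ + r) (by norm_num)
      two_pos.le (by linarith [hθ.2]) (by linarith [pi_le_four, hθ.1])
      (by linarith [pi_gt_three, hy.1.1, hy.2.2]) f
    rwa [one_rpow] at hone
  calc _ ≤ ∫⁻ x in Ioo (θ - r) (θ + r) ∩ Ioc 0 (π / 2),
          ENNReal.ofReal (((1 / 4) ^ e + 1) * ((1 / 2) ^ f + 1)) * ENNReal.ofReal (x ^ e) := by
        refine setLIntegral_mono' (measurableSet_Ioo.inter measurableSet_Ioc) fun x hx => ?_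
        rw [← ENNReal.ofReal_mul (by positivity)]
        exact ENNReal.ofReal_le_ofReal (sin_half_rpow_mul_cos_half_rpow_le e f hx.2.1 hx.2.2)
    _ ≤ ∫⁻ x in Ioo (θ - r) (θ + r) ∩ Ioi 0,
          ENNReal.ofReal (((1 / 4) ^ e + 1) * ((1 / 2) ^ f + 1)) * ENNReal.ofReal (x ^ e) :=
        lintegral_mono_set fun x hx => ⟨hx.1, hx.2.1⟩
    _ ≤ ENNReal.ofReal (((1 / 4) ^ e + 1) * ((1 / 2) ^ f + 1) * (C * (r * (θ + r) ^ e))) := by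
        rw [lintegral_const_mul _ (by fun_prop), ENNReal.ofReal_mul (q := C * _) (by positivity)]
        exact mul_le_mul_right (hpower hθ.1 hr) _
    _ ≤ ENNReal.ofReal (((1 / 4) ^ e + 1) * ((1 / 2) ^ f + 1) * (C * (r * (θ + r) ^ e)) *
          (((1 / 8) ^ f + 2 ^ f) * (π - θ + r) ^ f)) :=
        ENNReal.ofReal_le_ofReal (le_mul_of_one_le_right (by positivity) hfactor)
    _ = _ := by ring_nf

variable {α β : ℝ}

lemma pi_sub_mem_Ioo (hθ : θ ∈ Ioo 0 π) : π - θ ∈ Ioo 0 π :=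
  ⟨by linarith [hθ.2], by linarith [hθ.1]⟩

lemma ballMeasure_eq_lintegral (α β θ r : ℝ) :
    ballMeasure α β θ r = ∫⁻ x in Ioo (θ - r) (θ + r) ∩ Ioo 0 π,
      ENNReal.ofReal (sin (x / 2) ^ (2 * α + 1) * cos (x / 2) ^ (2 * β + 1)) := by
  rw [ballMeasure, jacobiMeasurePlus_eq_withDensity, withDensity_apply _ measurableSet_Ioo,
    Measure.restrict_restrict measurableSet_Ioo]
  refine setLIntegral_congr_fun (measurableSet_Ioo.inter measurableSet_Ioo) fun x hx => ?_
  rw [jPsi_sq_eq α β hx.2]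

lemma Ioo_inter_Ioo_zero_pi_subset (θ r : ℝ) :
    Ioo (θ - r) (θ + r) ∩ Ioo 0 π ⊆ Ioo (θ - r) (θ + r) ∩ Ioc 0 (π / 2) ∪
      (π - ·) ⁻¹' (Ioo (π - θ - r) (π - θ + r) ∩ Ioc 0 (π / 2)) := by
  rintro x ⟨⟨hx₁, hx₂⟩, hx₃, hx₄⟩
  rcases le_total x (π / 2) with h | h
  · exact .inl ⟨⟨hx₁, hx₂⟩, hx₃, h⟩
  · exact .inr ⟨⟨by linarith, by linarith⟩, by linarith, by linarith⟩

/- The half `x ≥ π / 2` of the ball is carried to `x ≤ π / 2` by `x ↦ π - x`, which exchanges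
sine and cosine. -/
lemma exists_ballMeasure_le (hα : -1 < α) (hβ : -1 < β) :
    ∃ C, 0 ≤ C ∧ ∀ ⦃θ r : ℝ⦄, θ ∈ Ioo 0 π → 0 < r → r < π →
      ballMeasure α β θ r ≤
        ENNReal.ofReal (C * (r * (θ + r) ^ (2 * α + 1) * (π - θ + r) ^ (2 * β + 1))) := by
  obtain ⟨C₁, hC₁, hleft⟩ := exists_setLIntegral_sin_half_rpow_mul_cos_half_rpow_le
    (e := 2 * α + 1) (by linarith) (2 * β + 1)
  obtain ⟨C₂, hC₂, hright⟩ := exists_setLIntegral_sin_half_rpow_mul_cos_half_rpow_le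
    (e := 2 * β + 1) (by linarith) (2 * α + 1)
  refine ⟨C₁ + C₂, by positivity, fun θ r hθ hr hrπ => ?_⟩
  have hθr : 0 < θ + r := by linarith [hθ.1]
  have hθr' : 0 < π - θ + r := by linarith [hθ.2]
  have hreflect : ∫⁻ x in (π - ·) ⁻¹' (Ioo (π - θ - r) (π - θ + r) ∩ Ioc 0 (π / 2)),
      ENNReal.ofReal (sin (x / 2) ^ (2 * α + 1) * cos (x / 2) ^ (2 * β + 1)) =
        ∫⁻ x in Ioo (π - θ - r) (π - θ + r) ∩ Ioc 0 (π / 2),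
          ENNReal.ofReal (sin (x / 2) ^ (2 * β + 1) * cos (x / 2) ^ (2 * α + 1)) := by
    rw [← (Measure.measurePreserving_sub_left volume π).setLIntegral_comp_preimage
      (measurableSet_Ioo.inter measurableSet_Ioc) (by fun_prop)]
    simp only [sub_div, sin_pi_div_two_sub, cos_pi_div_two_sub, mul_comm]
  rw [ballMeasure_eq_lintegral]
  refine (lintegral_mono_set (Ioo_inter_Ioo_zero_pi_subset θ r)).trans <|
    (lintegral_union_le _ _ _).trans <| (add_le_add (hleft hθ hr hrπ)
      (hreflect.trans_le (hright (pi_sub_mem_Ioo hθ) hr hrπ))).trans_eq ?_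
  rw [sub_sub_cancel, ← ENNReal.ofReal_add (by positivity) (by positivity)]
  ring_nf

lemma ballMeasure_pos (α β : ℝ) (hθ : θ ∈ Ioo 0 π) (hr : 0 < r) : 0 < ballMeasure α β θ r := by
  have hsupport : Ioo (θ - r) (θ + r) ∩ Ioo 0 π ⊆ Function.support fun x =>
      ENNReal.ofReal (sin (x / 2) ^ (2 * α + 1) * cos (x / 2) ^ (2 * β + 1)) := by
    intro x hx
    have hsin := sin_half_pos hx.2
    have hcos := cos_half_pos hx.2
    exact (ENNReal.ofReal_pos.2 (by positivity)).ne'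
  rw [ballMeasure_eq_lintegral, setLIntegral_pos_iff (by fun_prop), inter_eq_right.2 hsupport]
  exact (isOpen_Ioo.inter isOpen_Ioo).measure_pos _ ⟨θ, ⟨by linarith, by linarith⟩, hθ⟩

lemma isFiniteMeasure_jacobiMeasurePlus (hα : -1 < α) (hβ : -1 < β) :
    IsFiniteMeasure (jacobiMeasurePlus α β) := by
  obtain ⟨C, -, hball⟩ := exists_ballMeasure_le hα hβ
  have hfull : jacobiMeasurePlus α β univ = ballMeasure α β (π / 2) (π / 2) := by
    rw [ballMeasure, jacobiMeasurePlus, sub_self, add_halves, Measure.restrict_apply_univ,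
      Measure.restrict_apply_self]
  have hpi := pi_pos
  exact ⟨hfull ▸ (hball ⟨by positivity, by linarith⟩ (by positivity) (by linarith)).trans_lt
    ENNReal.ofReal_lt_top⟩

lemma ballMeasure_toReal_pos (hα : -1 < α) (hβ : -1 < β) (hθ : θ ∈ Ioo 0 π) (hr : 0 < r) :
    0 < (ballMeasure α β θ r).toReal :=
  have := isFiniteMeasure_jacobiMeasurePlus hα hβ
  ENNReal.toReal_pos (ballMeasure_pos α β hθ hr).ne' (measure_ne_top _ _)

lemma exists_ballMeasure_toReal_le_const (hα : -1 < α) (hβ : -1 < β) :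
    ∃ C, 0 ≤ C ∧ ∀ θ r : ℝ, (ballMeasure α β θ r).toReal ≤ C :=
  have := isFiniteMeasure_jacobiMeasurePlus hα hβ
  ⟨(jacobiMeasurePlus α β).real univ, measureReal_nonneg,
    fun _ _ => measureReal_mono (subset_univ _)⟩

lemma sinProd_bounds (hθ : θ ∈ Ioo 0 π) (hφ : φ ∈ Ioo 0 π) :
    1 / 16 * (θ * φ) ≤ sinProd θ φ ∧ sinProd θ φ ≤ 1 / 4 * (θ * φ) := by
  have hθ_ge := quarter_mul_le_sin_half hθ.1.le hθ.2.le
  have hφ_ge := quarter_mul_le_sin_half hφ.1.le hφ.2.le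
  have hθ_le := sin_le (x := θ / 2) (by linarith [hθ.1])
  have hφ_le := sin_le (x := φ / 2) (by linarith [hφ.1])
  have hθ₀ := hθ.1
  have hφ₀ := hφ.1
  rw [sinProd]
  constructor
  · linarith [mul_le_mul hθ_ge hφ_ge (by positivity) (by linarith)]
  · linarith [mul_le_mul hθ_le hφ_le (by linarith) (by linarith)]

lemma sq_add_abs_sub_le (hθ : θ ∈ Ioo 0 π) (hφ : φ ∈ Ioo 0 π) :
    (θ + |θ - φ|) ^ 2 ≤ 72 * ((θ - φ) ^ 2 + sinProd θ φ) := by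
  have hsinProd := (sinProd_bounds hθ hφ).1
  have hφ_ge : θ - |θ - φ| ≤ φ := by linarith [le_abs_self (θ - φ)]
  have hθ₀ := hθ.1
  have hφ₀ := hφ.1
  have habs := abs_nonneg (θ - φ)
  rw [← sq_abs (θ - φ)]
  rcases le_total |θ - φ| (θ / 2) with h | h
  · nlinarith [mul_le_mul_of_nonneg_left (show θ / 2 ≤ φ by linarith) hθ₀.le]
  · nlinarith [mul_pos hθ₀ hφ₀]

lemma sq_sub_add_sinProd_le (hθ : θ ∈ Ioo 0 π) (hφ : φ ∈ Ioo 0 π) :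
    (θ - φ) ^ 2 + sinProd θ φ ≤ (θ + |θ - φ|) ^ 2 := by
  have hsinProd := (sinProd_bounds hθ hφ).2
  have hφ_le : φ ≤ θ + |θ - φ| := by linarith [neg_abs_le (θ - φ)]
  rw [← sq_abs (θ - φ)]
  nlinarith [mul_le_mul_of_nonneg_left hφ_le hθ.1.le, mul_nonneg hθ.1.le (abs_nonneg (θ - φ)),
    sq_nonneg θ]

lemma exists_add_abs_sub_rpow_le (e : ℝ) :
    ∃ C, 0 ≤ C ∧ ∀ ⦃θ φ : ℝ⦄, θ ∈ Ioo 0 π → φ ∈ Ioo 0 π →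
      (θ + |θ - φ|) ^ (2 * e) ≤ C * ((θ - φ) ^ 2 + sinProd θ φ) ^ e := by
  refine ⟨1 ^ e + 72 ^ e, by positivity, fun θ φ hθ hφ => ?_⟩
  have hs := sinProd_pos hθ hφ
  rw [rpow_mul (add_nonneg hθ.1.le (abs_nonneg _)), rpow_two]
  exact rpow_le_mul_rpow one_pos (by norm_num) (by positivity)
    ((one_mul _).trans_le (sq_sub_add_sinProd_le hθ hφ)) (sq_add_abs_sub_le hθ hφ) e

lemma sinProd_pi_sub (θ φ : ℝ) : sinProd (π - θ) (π - φ) = cosProd θ φ := by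
  simp only [sinProd, cosProd, sub_div, sin_pi_div_two_sub]

theorem exists_ballMeasure_toReal_le (hα : -1 < α) (hβ : -1 < β) :
    ∃ C, 0 ≤ C ∧ ∀ ⦃θ φ : ℝ⦄, θ ∈ Ioo 0 π → φ ∈ Ioo 0 π → θ ≠ φ →
      (ballMeasure α β θ |θ - φ|).toReal ≤
        C * (|θ - φ| * ((θ - φ) ^ 2 + sinProd θ φ) ^ (α + 1 / 2) *
          ((θ - φ) ^ 2 + cosProd θ φ) ^ (β + 1 / 2)) := by
  obtain ⟨C, hC, hball⟩ := exists_ballMeasure_le hα hβ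
  obtain ⟨C₁, hC₁, hsin⟩ := exists_add_abs_sub_rpow_le (α + 1 / 2)
  obtain ⟨C₂, hC₂, hcos⟩ := exists_add_abs_sub_rpow_le (β + 1 / 2)
  refine ⟨C * (C₁ * C₂), by positivity, fun θ φ hθ hφ hne => ?_⟩
  have hs := sinProd_pos hθ hφ
  have hleft : 0 ≤ θ + |θ - φ| := add_nonneg hθ.1.le (abs_nonneg _)
  have hright : 0 ≤ π - θ + |θ - φ| := add_nonneg (sub_nonneg.2 hθ.2.le) (abs_nonneg _)
  have hsin := hsin hθ hφ
  have hcos := hcos (pi_sub_mem_Ioo hθ) (pi_sub_mem_Ioo hφ)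
  rw [sinProd_pi_sub, sub_sub_sub_cancel_left, abs_sub_comm φ θ, sub_sq_comm φ θ] at hcos
  refine (ENNReal.toReal_le_of_le_ofReal (by positivity)
    (hball hθ (abs_pos.2 (sub_ne_zero.2 hne)) (abs_sub_lt_pi hθ hφ))).trans ?_
  rw [show 2 * α + 1 = 2 * (α + 1 / 2) by ring, show 2 * β + 1 = 2 * (β + 1 / 2) by ring]
  calc C * (|θ - φ| * (θ + |θ - φ|) ^ (2 * (α + 1 / 2)) *
        (π - θ + |θ - φ|) ^ (2 * (β + 1 / 2)))
      ≤ C * (|θ - φ| * (C₁ * ((θ - φ) ^ 2 + sinProd θ φ) ^ (α + 1 / 2)) *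
          (C₂ * ((θ - φ) ^ 2 + cosProd θ φ) ^ (β + 1 / 2))) := by gcongr
    _ = _ := by ring

end BallMeasure

/-! ### Pointwise estimate of the kernel -/

section PointwiseEstimate

variable {a b α β θ φ : ℝ} {M N L γ₁ γ₂ : ℕ}

lemma exists_abs_kernelDeriv_le (ha : -(1 / 2) < a) (hb : -(1 / 2) < b) (M N L : ℕ) :
    ∃ C, 0 ≤ C ∧ ∀ ⦃t θ φ : ℝ⦄, 0 < t → t ≤ 1 → θ ∈ Ioo 0 π → φ ∈ Ioo 0 π →
      |kernelDeriv a b M N L t θ φ| ≤ C * ((t ^ 2 + (θ - φ) ^ 2) ^ (-(1 + M + N + L : ℝ) / 2) *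
        (t ^ 2 + (θ - φ) ^ 2 + sinProd θ φ) ^ (-(a + 1 / 2)) *
        (t ^ 2 + (θ - φ) ^ 2 + cosProd θ φ) ^ (-(b + 1 / 2))) := by
  obtain ⟨C₁, hC₁, hkernel⟩ :=
    (isSymbolIntegral_kernelDeriv ha hb M N L).exists_abs_le_integral ha hb 1
  have horder : (0 : ℝ) ≤ M + N + L := by positivity
  obtain ⟨C₂, hC₂, hphase⟩ := exists_integral_poissonPhase_rpow_le
    (ν := (2 * (a + b) + 3 + M + N + L) / 2) ha hb (by linarith)
  refine ⟨C₁ * C₂, by positivity, fun t θ φ ht ht₁ hθ hφ => (hkernel ht ht₁ θ φ).trans ?_⟩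
  have hphase := hphase ht hθ hφ
  rw [show a + b + 1 - (2 * (a + b) + 3 + M + N + L) / 2 = -(1 + M + N + L : ℝ) / 2 by ring]
    at hphase
  rw [neg_div, mul_assoc C₁]
  exact mul_le_mul_of_nonneg_left hphase hC₁

lemma rpow_mul_rpow_mul_rpow_neg_le {R X Z U V A B e : ℝ} (hR : 0 < R) (hX : 0 < X) (hZ : 0 < Z)
    (hXU : X ≤ U) (hZV : Z ≤ V) (hRUV : R ≤ U * V) (he : 0 ≤ e) (heA : e ≤ A) (heB : e ≤ B) :
    X ^ (A - e) * Z ^ (B - e) * (U ^ (-A) * V ^ (-B)) ≤ R ^ (-e) := by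
  have hU : 0 < U := hX.trans_le hXU
  have hV : 0 < V := hZ.trans_le hZV
  calc X ^ (A - e) * Z ^ (B - e) * (U ^ (-A) * V ^ (-B))
      ≤ U ^ (A - e) * V ^ (B - e) * (U ^ (-A) * V ^ (-B)) := by
        gcongr
    _ = (U * V) ^ (-e) := by
        rw [mul_mul_mul_comm, ← rpow_add hU, ← rpow_add hV, mul_rpow hU.le hV.le]
        ring_nf
    _ ≤ R ^ (-e) := rpow_le_rpow_of_nonpos hR hRUV (by linarith)

/- By `sinProd_add_cosProd`, the sum `R + sinProd θ φ + cosProd θ φ` is at least `1`. -/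
lemma le_mul_add_sinProd_add_cosProd {R : ℝ} (hR : (θ - φ) ^ 2 ≤ R) (hθ : θ ∈ Ioo 0 π)
    (hφ : φ ∈ Ioo 0 π) : R ≤ (R + sinProd θ φ) * (R + cosProd θ φ) := by
  have hR₀ : 0 ≤ R := (sq_nonneg _).trans hR
  have hsum : 1 ≤ R + sinProd θ φ + cosProd θ φ := by
    rw [add_assoc, sinProd_add_cosProd]
    nlinarith [one_sub_sq_div_two_le_cos (x := (θ - φ) / 2)]
  nlinarith [mul_pos (sinProd_pos hθ hφ) (cosProd_pos hθ hφ), mul_le_mul_of_nonneg_left hsum hR₀]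

lemma rpow_mul_rpow_mul_rpow_add_sinProd_le {R A B e : ℝ} (hR : 0 < R) (hle : (θ - φ) ^ 2 ≤ R)
    (hθ : θ ∈ Ioo 0 π) (hφ : φ ∈ Ioo 0 π) (he : 0 ≤ e) (heA : e ≤ A) (heB : e ≤ B) :
    ((θ - φ) ^ 2 + sinProd θ φ) ^ (A - e) * ((θ - φ) ^ 2 + cosProd θ φ) ^ (B - e) *
      ((R + sinProd θ φ) ^ (-A) * (R + cosProd θ φ) ^ (-B)) ≤ R ^ (-e) := by
  have hs := sinProd_pos hθ hφ
  have hc := cosProd_pos hθ hφ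
  exact rpow_mul_rpow_mul_rpow_neg_le hR (by positivity) (by positivity) (add_le_add_left hle _)
    (add_le_add_left hle _) (le_mul_add_sinProd_add_cosProd hle hθ hφ) he heA heB

lemma sinProd_comm (θ φ : ℝ) : sinProd θ φ = sinProd φ θ := mul_comm _ _

lemma cosProd_comm (θ φ : ℝ) : cosProd θ φ = cosProd φ θ := mul_comm _ _

lemma sin_half_sq_le (θ φ : ℝ) : sin (θ / 2) ^ 2 ≤ 2 * ((θ - φ) ^ 2 + sinProd θ φ) := by
  have hdiff := sq_le_sq.2 (abs_sin_sub_sin_le (θ / 2) (φ / 2))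
  rw [sinProd]
  nlinarith [sq_nonneg (sin (φ / 2)), sq_nonneg (θ - φ)]

lemma cos_half_sq_le (θ φ : ℝ) : cos (θ / 2) ^ 2 ≤ 2 * ((θ - φ) ^ 2 + cosProd θ φ) := by
  have hdiff := sq_le_sq.2 (abs_cos_sub_cos_le (θ / 2) (φ / 2))
  rw [cosProd]
  nlinarith [sq_nonneg (cos (φ / 2)), sq_nonneg (θ - φ)]

lemma sin_sq_le (hθ : θ ∈ Ioo 0 π) (hφ : φ ∈ Ioo 0 π) :
    sin θ ^ 2 ≤ 16 * (((θ - φ) ^ 2 + sinProd θ φ) * ((θ - φ) ^ 2 + cosProd θ φ)) := by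
  have hs := sinProd_pos hθ hφ
  have hprod := mul_le_mul (sin_half_sq_le θ φ) (cos_half_sq_le θ φ) (sq_nonneg _) (by positivity)
  have hdouble : sin θ = 2 * sin (θ / 2) * cos (θ / 2) := by
    rw [← sin_two_mul, mul_div_cancel₀ θ two_ne_zero]
  rw [hdouble]
  linarith

lemma pow_le_mul_rpow_of_sq_le {x Y : ℝ} (hx : 0 ≤ x) (hY : 0 ≤ Y) (h : x ^ 2 ≤ 16 * Y) (n : ℕ) :
    x ^ n ≤ 4 ^ n * Y ^ ((n : ℝ) / 2) := by
  have hsqrt : x ≤ 4 * √Y := by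
    refine le_of_sq_le_sq ?_ (by positivity)
    rw [mul_pow, sq_sqrt hY]
    linarith
  calc x ^ n ≤ (4 * √Y) ^ n := by gcongr
    _ = 4 ^ n * Y ^ ((n : ℝ) / 2) := by
      rw [mul_pow, sqrt_eq_rpow, ← rpow_mul_natCast hY, one_div_mul_eq_div]

lemma sin_pow_mul_sin_pow_le (hθ : θ ∈ Ioo 0 π) (hφ : φ ∈ Ioo 0 π) (γ₁ γ₂ : ℕ) :
    sin θ ^ γ₁ * sin φ ^ γ₂ ≤ 4 ^ (γ₁ + γ₂) *
      (((θ - φ) ^ 2 + sinProd θ φ) ^ ((γ₁ + γ₂ : ℝ) / 2) *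
        ((θ - φ) ^ 2 + cosProd θ φ) ^ ((γ₁ + γ₂ : ℝ) / 2)) := by
  have hs := sinProd_pos hθ hφ
  have hc := cosProd_pos hθ hφ
  have hsin_φ := sin_sq_le hφ hθ
  rw [sub_sq_comm φ θ, sinProd_comm φ θ, cosProd_comm φ θ] at hsin_φ
  have hY : 0 < ((θ - φ) ^ 2 + sinProd θ φ) * ((θ - φ) ^ 2 + cosProd θ φ) := by positivity
  refine (mul_le_mul
    (pow_le_mul_rpow_of_sq_le (sin_pos_of_mem_Ioo hθ).le hY.le (sin_sq_le hθ hφ) γ₁)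
    (pow_le_mul_rpow_of_sq_le (sin_pos_of_mem_Ioo hφ).le hY.le hsin_φ γ₂)
    (pow_nonneg (sin_pos_of_mem_Ioo hφ).le _) (by positivity)).trans_eq ?_
  rw [← mul_rpow (by positivity) (by positivity), add_div, rpow_add hY, pow_add]
  ring

lemma exists_sin_pow_mul_abs_kernelDeriv_le_rpow (hα : -1 < α) (hβ : -1 < β) (M N L : ℕ)
    (hγ : 1 ≤ γ₁ + γ₂) (hγ' : γ₁ + γ₂ ≤ 2) :
    ∃ C, 0 ≤ C ∧ ∀ ⦃t θ φ : ℝ⦄, 0 < t → t ≤ 1 → θ ∈ Ioo 0 π → φ ∈ Ioo 0 π →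
      sin θ ^ γ₁ * sin φ ^ γ₂ * |kernelDeriv (α + 1) (β + 1) M N L t θ φ| ≤
        C * (((θ - φ) ^ 2 + sinProd θ φ) ^ (-(α + 1 / 2)) *
          ((θ - φ) ^ 2 + cosProd θ φ) ^ (-(β + 1 / 2)) *
          (t ^ 2 + (θ - φ) ^ 2) ^ (-(3 + M + N + L - γ₁ - γ₂ : ℝ) / 2)) := by
  obtain ⟨C, hC, hkernel⟩ := exists_abs_kernelDeriv_le (a := α + 1) (b := β + 1)
    (by linarith) (by linarith) M N L
  refine ⟨4 ^ (γ₁ + γ₂) * C, by positivity, fun t θ φ ht ht₁ hθ hφ => ?_⟩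
  have hs := sinProd_pos hθ hφ
  have hc := cosProd_pos hθ hφ
  have hγ_real : (1 : ℝ) ≤ γ₁ + γ₂ := mod_cast hγ
  have hγ'_real : (γ₁ + γ₂ : ℝ) ≤ 2 := mod_cast hγ'
  have hsin := sin_pow_mul_sin_pow_le hθ hφ γ₁ γ₂
  have hR : 0 < t ^ 2 + (θ - φ) ^ 2 := by positivity
  have hX : 0 < (θ - φ) ^ 2 + sinProd θ φ := by positivity
  have hZ : 0 < (θ - φ) ^ 2 + cosProd θ φ := by positivity
  have hfactors := rpow_mul_rpow_mul_rpow_add_sinProd_le (A := α + 1 + 1 / 2)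
    (B := β + 1 + 1 / 2) (e := 1 - (γ₁ + γ₂) / 2) hR (le_add_of_nonneg_left (sq_nonneg t)) hθ hφ
    (by linarith) (by linarith) (by linarith)
  have hprod := mul_le_mul hsin (hkernel ht ht₁ hθ hφ) (abs_nonneg _) (by positivity)
  set R := t ^ 2 + (θ - φ) ^ 2
  set X := (θ - φ) ^ 2 + sinProd θ φ
  set Z := (θ - φ) ^ 2 + cosProd θ φ
  set γ : ℝ := γ₁ + γ₂ with hγ_def
  have hsplit {x : ℝ} (hx : 0 < x) (c : ℝ) :
      x ^ (γ / 2) = x ^ (-(c + 1 / 2)) * x ^ (c + 1 + 1 / 2 - (1 - γ / 2)) := by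
    rw [← rpow_add hx]
    ring_nf
  rw [hsplit hX α, hsplit hZ β] at hprod
  calc _ ≤ _ := hprod
    _ = 4 ^ (γ₁ + γ₂) * C * (X ^ (-(α + 1 / 2)) * Z ^ (-(β + 1 / 2)) *
          R ^ (-(1 + M + N + L : ℝ) / 2)) * (X ^ (α + 1 + 1 / 2 - (1 - γ / 2)) *
          Z ^ (β + 1 + 1 / 2 - (1 - γ / 2)) *
          ((R + sinProd θ φ) ^ (-(α + 1 + 1 / 2)) * (R + cosProd θ φ) ^ (-(β + 1 + 1 / 2)))) := by
        ring
    _ ≤ 4 ^ (γ₁ + γ₂) * C * (X ^ (-(α + 1 / 2)) * Z ^ (-(β + 1 / 2)) *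
          R ^ (-(1 + M + N + L : ℝ) / 2)) * R ^ (-(1 - γ / 2)) :=
        mul_le_mul_of_nonneg_left hfactors (by positivity)
    _ = _ := by
        rw [mul_assoc, mul_assoc (_ * _ : ℝ) (R ^ _), ← rpow_add hR, hγ_def]
        ring_nf

lemma exists_rpow_mul_rpow_le_div_ballMeasure (hα : -1 < α) (hβ : -1 < β) :
    ∃ C, 0 ≤ C ∧ ∀ ⦃θ φ : ℝ⦄, θ ∈ Ioo 0 π → φ ∈ Ioo 0 π → θ ≠ φ →
      ((θ - φ) ^ 2 + sinProd θ φ) ^ (-(α + 1 / 2)) * ((θ - φ) ^ 2 + cosProd θ φ) ^ (-(β + 1 / 2)) ≤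
        C / (ballMeasure α β θ |θ - φ|).toReal * |θ - φ| := by
  obtain ⟨C, hC, hball⟩ := exists_ballMeasure_toReal_le hα hβ
  refine ⟨C, hC, fun θ φ hθ hφ hne => ?_⟩
  have hB := ballMeasure_toReal_pos hα hβ hθ (abs_pos.2 (sub_ne_zero.2 hne))
  have hs := sinProd_pos hθ hφ
  have hc := cosProd_pos hθ hφ
  rw [rpow_neg (by positivity), rpow_neg (by positivity), ← mul_inv, div_mul_eq_mul_div,
    ← one_div, div_le_div_iff₀ (by positivity) hB, one_mul, mul_assoc]
  exact (hball hθ hφ hne).trans_eq (by ring)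

lemma exists_sin_pow_mul_abs_kernelDeriv_le_of_le_one (hα : -1 < α) (hβ : -1 < β)
    (hγ : 1 ≤ γ₁ + γ₂) (hγ' : γ₁ + γ₂ ≤ 2) {w : ℝ} (hw : 2 ≤ w + γ₁ + γ₂ - L - N - M) :
    ∃ C, 0 ≤ C ∧ ∀ ⦃t θ φ : ℝ⦄, 0 < t → t ≤ 1 → θ ∈ Ioo 0 π → φ ∈ Ioo 0 π → θ ≠ φ →
      sin θ ^ γ₁ * sin φ ^ γ₂ * |kernelDeriv (α + 1) (β + 1) M N L t θ φ| ≤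
        C / (ballMeasure α β θ |θ - φ|).toReal *
          (|θ - φ| * (t ^ 2 + |θ - φ| ^ 2) ^ (-(1 + w) / 2)) := by
  obtain ⟨C₁, hC₁, hkernel⟩ := exists_sin_pow_mul_abs_kernelDeriv_le_rpow hα hβ M N L hγ hγ'
  obtain ⟨C₂, hC₂, hball⟩ := exists_rpow_mul_rpow_le_div_ballMeasure hα hβ
  set e : ℝ := (w + γ₁ + γ₂ - L - N - M - 2) / 2 with he
  refine ⟨C₁ * C₂ * (1 + π ^ 2) ^ e, by positivity, fun t θ φ ht ht₁ hθ hφ hne =>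
    (hkernel ht ht₁ hθ hφ).trans ?_⟩
  rw [sq_abs]
  have hR : 0 < t ^ 2 + (θ - φ) ^ 2 := by positivity
  have hR_le : t ^ 2 + (θ - φ) ^ 2 ≤ 1 + π ^ 2 :=
    add_le_add (pow_le_one₀ ht.le ht₁) (sq_le_sq.2 (by
      rw [abs_of_pos pi_pos]
      exact (abs_sub_lt_pi hθ hφ).le))
  have hexponent : (t ^ 2 + (θ - φ) ^ 2) ^ (-(3 + M + N + L - γ₁ - γ₂ : ℝ) / 2) ≤
      (1 + π ^ 2) ^ e * (t ^ 2 + (θ - φ) ^ 2) ^ (-(1 + w) / 2) := by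
    rw [show -(3 + M + N + L - γ₁ - γ₂ : ℝ) / 2 = e + -(1 + w) / 2 by rw [he]; ring, rpow_add hR]
    gcongr
  calc _ ≤ C₁ * (C₂ / (ballMeasure α β θ |θ - φ|).toReal * |θ - φ| *
        ((1 + π ^ 2) ^ e * (t ^ 2 + (θ - φ) ^ 2) ^ (-(1 + w) / 2))) := by
        gcongr _ * (?_ * ?_)
        exact hball hθ hφ hne
    _ = _ := by ring

lemma exists_sin_pow_mul_abs_kernelDeriv_le_of_one_le (hα : -1 < α) (hβ : -1 < β)
    (M N L γ₁ γ₂ : ℕ) :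
    ∃ C, 0 ≤ C ∧ ∀ ⦃t θ φ : ℝ⦄, 1 ≤ t → θ ∈ Ioo 0 π → φ ∈ Ioo 0 π → θ ≠ φ →
      sin θ ^ γ₁ * sin φ ^ γ₂ * |kernelDeriv (α + 1) (β + 1) M N L t θ φ| ≤
        C / (ballMeasure α β θ |θ - φ|).toReal * exp (-((α + β + 3) / 2) * t) := by
  have ha : -(1 / 2) < α + 1 := by linarith
  have hb : -(1 / 2) < β + 1 := by linarith
  obtain ⟨C₁, hC₁, hkernel⟩ :=
    (isSymbolIntegral_kernelDeriv ha hb M N L).exists_abs_le_exp ha hb one_pos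
  obtain ⟨C₂, hC₂, hball⟩ := exists_ballMeasure_toReal_le_const hα hβ
  refine ⟨C₁ * C₂, by positivity, fun t θ φ ht hθ hφ hne => ?_⟩
  have hB := ballMeasure_toReal_pos hα hβ hθ (abs_pos.2 (sub_ne_zero.2 hne))
  have hsin : sin θ ^ γ₁ * sin φ ^ γ₂ ≤ 1 :=
    mul_le_one₀ (pow_le_one₀ (sin_pos_of_mem_Ioo hθ).le (sin_le_one _))
      (pow_nonneg (sin_pos_of_mem_Ioo hφ).le _)
      (pow_le_one₀ (sin_pos_of_mem_Ioo hφ).le (sin_le_one _))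
  have hone : 1 ≤ C₂ / (ballMeasure α β θ |θ - φ|).toReal := (one_le_div hB).2 (hball _ _)
  calc _ ≤ 1 * (C₁ * exp (-(α + 1 + (β + 1) + 1) * (t / 2))) :=
        mul_le_mul hsin (hkernel ht θ φ) (abs_nonneg _) zero_le_one
    _ = C₁ * 1 * exp (-((α + β + 3) / 2) * t) := by ring_nf
    _ ≤ C₁ * (C₂ / (ballMeasure α β θ |θ - φ|).toReal) * exp (-((α + β + 3) / 2) * t) := by
        gcongr
    _ = _ := by ring

theorem exists_sin_pow_mul_abs_kernelDeriv_le (hα : -1 < α) (hβ : -1 < β) (hγ : 1 ≤ γ₁ + γ₂)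
    (hγ' : γ₁ + γ₂ ≤ 2) {w : ℝ} (hw : 2 ≤ w + γ₁ + γ₂ - L - N - M) :
    ∃ C, 0 ≤ C ∧ ∀ ⦃t θ φ : ℝ⦄, 0 < t → θ ∈ Ioo 0 π → φ ∈ Ioo 0 π → θ ≠ φ →
      sin θ ^ γ₁ * sin φ ^ γ₂ * |kernelDeriv (α + 1) (β + 1) M N L t θ φ| ≤
        C / (ballMeasure α β θ |θ - φ|).toReal *
          (|θ - φ| * (t ^ 2 + |θ - φ| ^ 2) ^ (-(1 + w) / 2) + exp (-((α + β + 3) / 2) * t)) := by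
  obtain ⟨C₁, hC₁, hsmall⟩ := exists_sin_pow_mul_abs_kernelDeriv_le_of_le_one hα hβ hγ hγ' hw
  obtain ⟨C₂, hC₂, hlarge⟩ := exists_sin_pow_mul_abs_kernelDeriv_le_of_one_le hα hβ M N L γ₁ γ₂
  refine ⟨C₁ + C₂, by positivity, fun t θ φ ht hθ hφ hne => ?_⟩
  rcases le_total t 1 with ht₁ | ht₁
  · refine (hsmall ht ht₁ hθ hφ hne).trans ?_
    gcongr
    · exact le_add_of_nonneg_right hC₂
    · exact le_add_of_nonneg_right (exp_pos _).le
  · refine (hlarge ht₁ hθ hφ hne).trans ?_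
    gcongr
    · exact le_add_of_nonneg_left hC₁
    · exact le_add_of_nonneg_left (by positivity)

end PointwiseEstimate

/-! ### Weighted `L^p` norms in time -/

section WeightedLp

variable {W : ℝ} {p : ℝ≥0∞}

/-- The measure `t^{W-1} dt` on `(0, ∞)`, in which the time variable is integrated. -/
def powerMeasure (W : ℝ) : Measure ℝ :=
  (volume.restrict (Ioi 0)).withDensity fun t => ENNReal.ofReal (t ^ (W - 1))

lemma ae_powerMeasure_pos (W : ℝ) : ∀ᵐ t ∂powerMeasure W, 0 < t :=
  (withDensity_absolutelyContinuous _ _).ae_le (ae_restrict_mem measurableSet_Ioi)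

lemma eLpNorm_powerMeasure_eq (hp : p ≠ 0) (hp_top : p ≠ ⊤) {g : ℝ → ℝ} (hg : Measurable g)
    (hg₀ : ∀ t, 0 ≤ g t) : eLpNorm g p (powerMeasure W) =
      (∫⁻ t in Ioi 0, ENNReal.ofReal (t ^ (W - 1) * g t ^ p.toReal)) ^ (1 / p.toReal) := by
  rw [eLpNorm_eq_lintegral_rpow_enorm_toReal hp hp_top, powerMeasure,
    lintegral_withDensity_eq_lintegral_mul _ (by fun_prop) (by fun_prop)]
  congr 1
  refine setLIntegral_congr_fun measurableSet_Ioi fun t (ht : 0 < t) => ?_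
  rw [Pi.mul_apply, Real.enorm_of_nonneg (hg₀ t),
    ENNReal.ofReal_rpow_of_nonneg (hg₀ t) ENNReal.toReal_nonneg,
    ← ENNReal.ofReal_mul (by positivity)]

lemma sq_add_sq_rpow_le_left {x y ν : ℝ} (hx : 0 < x) (hν : 0 ≤ ν) :
    (x ^ 2 + y ^ 2) ^ (-ν / 2) ≤ x ^ (-ν) := by
  calc (x ^ 2 + y ^ 2) ^ (-ν / 2) ≤ (x ^ 2) ^ (-ν / 2) :=
        rpow_le_rpow_of_nonpos (by positivity) (le_add_of_nonneg_right (sq_nonneg y)) (by linarith)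
    _ = x ^ (-ν) := by
        rw [← rpow_natCast_mul hx.le]
        ring_nf

lemma lintegral_rpow_mul_sq_add_sq_rpow_le {τ σ r : ℝ} (hτ : 0 < τ) (hσ : 0 < σ) (hr : 0 < r) :
    ∫⁻ t in Ioi 0, ENNReal.ofReal (t ^ (τ - 1) * (r ^ σ * (t ^ 2 + r ^ 2) ^ (-(σ + τ) / 2))) ≤
      ENNReal.ofReal (1 / τ + 1 / σ) := by
  calc _ ≤ ∫⁻ t in Ioi 0, ENNReal.ofReal (r ^ σ) *
        ENNReal.ofReal (t ^ (τ - 1) * min (r ^ (-(σ + τ))) ((t * 1) ^ (-(σ + τ)))) := by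
        refine setLIntegral_mono' measurableSet_Ioi fun t (ht : 0 < t) => ?_
        have hmin : (t ^ 2 + r ^ 2) ^ (-(σ + τ) / 2) ≤ min (r ^ (-(σ + τ))) (t ^ (-(σ + τ))) :=
          le_min (by rw [add_comm]; exact sq_add_sq_rpow_le_left hr (by positivity))
            (sq_add_sq_rpow_le_left ht (by positivity))
        rw [← ENNReal.ofReal_mul (by positivity), mul_left_comm, mul_one]
        gcongr
    _ ≤ ENNReal.ofReal (r ^ σ) * ENNReal.ofReal ((1 / τ + 1 / (σ + τ - τ)) *
          (r ^ (τ - (σ + τ)) * 1 ^ (-τ))) := by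
        rw [lintegral_const_mul' _ _ ENNReal.ofReal_ne_top]
        gcongr
        exact setLIntegral_rpow_mul_min_rpow_le hτ (by linarith) hr one_pos
    _ = ENNReal.ofReal (1 / τ + 1 / σ) := by
        rw [← ENNReal.ofReal_mul (by positivity), one_rpow, mul_one, mul_left_comm, ← rpow_add hr,
          add_sub_cancel_right, show σ + (τ - (σ + τ)) = 0 by ring, rpow_zero, mul_one]

/- For `p = ∞` the exponent `W / p.toReal` vanishes, since `(⊤ : ℝ≥0∞).toReal = 0`. -/
lemma exists_eLpNorm_mul_sq_add_sq_rpow_le (hW : 0 < W) (hp : p ≠ 0) :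
    ∃ C ≠ ⊤, ∀ ⦃r : ℝ⦄, 0 < r → eLpNorm
      (fun t => r * (t ^ 2 + r ^ 2) ^ (-(1 + W / p.toReal) / 2)) p (powerMeasure W) ≤ C := by
  rcases eq_or_ne p ⊤ with rfl | hp_top
  · refine ⟨1, ENNReal.one_ne_top, fun r hr => ?_⟩
    rw [eLpNorm_exponent_top, ← ENNReal.ofReal_one]
    refine eLpNormEssSup_le_of_ae_bound (Filter.Eventually.of_forall fun t => ?_)
    rw [ENNReal.toReal_top, div_zero, add_zero, norm_of_nonneg (by positivity), add_comm]
    calc r * (r ^ 2 + t ^ 2) ^ (-(1 : ℝ) / 2) ≤ r * r ^ (-(1 : ℝ)) := by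
          gcongr
          exact sq_add_sq_rpow_le_left hr zero_le_one
      _ = 1 := by rw [rpow_neg_one, mul_inv_cancel₀ hr.ne']
  · have hq : 0 < p.toReal := ENNReal.toReal_pos hp hp_top
    refine ⟨ENNReal.ofReal (1 / W + 1 / p.toReal) ^ (1 / p.toReal),
      ENNReal.rpow_ne_top_of_nonneg (by positivity) ENNReal.ofReal_ne_top, fun r hr => ?_⟩
    rw [eLpNorm_powerMeasure_eq hp hp_top (by fun_prop) fun t => by positivity]
    gcongr
    convert lintegral_rpow_mul_sq_add_sq_rpow_le hW hq hr using 6 with t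
    rw [mul_rpow hr.le (by positivity), ← rpow_mul (by positivity)]
    congr 2
    field_simp

lemma eLpNorm_exp_neg_mul_lt_top (hW : 0 < W) (hp : p ≠ 0) {d : ℝ} (hd : 0 < d) :
    eLpNorm (fun t => exp (-d * t)) p (powerMeasure W) < ⊤ := by
  rcases eq_or_ne p ⊤ with rfl | hp_top
  · rw [eLpNorm_exponent_top]
    refine (eLpNormEssSup_le_of_ae_bound (C := 1) ?_).trans_lt ENNReal.ofReal_lt_top
    filter_upwards [ae_powerMeasure_pos W] with t ht
    rw [norm_of_nonneg (exp_pos _).le, exp_le_one_iff]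
    nlinarith
  · have hq : 0 < p.toReal := ENNReal.toReal_pos hp hp_top
    rw [eLpNorm_powerMeasure_eq hp hp_top (by fun_prop) fun t => (exp_pos _).le]
    refine ENNReal.rpow_lt_top_of_nonneg (by positivity) ?_
    have hint := integrableOn_rpow_mul_exp_neg_mul_rpow (p := 1) (s := W - 1) (b := d * p.toReal)
      (by linarith) one_pos (by positivity)
    convert hint.lintegral_lt_top.ne using 5 with t
    rw [rpow_one, ← exp_mul]
    ring_nf

lemma exists_eLpNorm_mul_sq_add_sq_rpow_add_exp_le (hW : 0 < W) (hp : p ≠ 0) {d : ℝ} (hd : 0 < d) :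
    ∃ C ≠ ⊤, ∀ ⦃r : ℝ⦄, 0 < r →
      eLpNorm (fun t => r * (t ^ 2 + r ^ 2) ^ (-(1 + W / p.toReal) / 2) + exp (-d * t)) p
        (powerMeasure W) ≤ C := by
  obtain ⟨C, hC, hrational⟩ := exists_eLpNorm_mul_sq_add_sq_rpow_le hW hp
  refine ⟨ENNReal.LpAddConst p * (C + _), ENNReal.mul_ne_top (ENNReal.LpAddConst_lt_top p).ne
    (ENNReal.add_ne_top.2 ⟨hC, (eLpNorm_exp_neg_mul_lt_top hW hp hd).ne⟩), fun r hr => ?_⟩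
  refine (eLpNorm_add_le' (Measurable.aestronglyMeasurable (by fun_prop)) (by fun_prop) p).trans ?_
  gcongr
  exact hrational hr

end WeightedLp

theorem kernel_growth_estimate_general {α β : ℝ} (hα : -1 < α) (hβ : -1 < β) {M N L γ₁ γ₂ : ℕ}
    (hγ : 1 ≤ γ₁ + γ₂) (hγ' : γ₁ + γ₂ ≤ 2) {W : ℝ} (hW : 0 < W) {p : ℝ≥0∞} (hp : p ≠ 0)
    (hcond : 2 ≤ W / p.toReal + γ₁ + γ₂ - L - N - M) :
    ∃ C : ℝ, 0 < C ∧ ∀ θ ∈ Ioo 0 π, ∀ φ ∈ Ioo 0 π, θ ≠ φ →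
      ENNReal.ofReal (sin θ ^ γ₁ * sin φ ^ γ₂) *
          eLpNorm (fun t => kernelDeriv (α + 1) (β + 1) M N L t θ φ) p (powerMeasure W) ≤
        ENNReal.ofReal (C / (ballMeasure α β θ |θ - φ|).toReal) := by
  obtain ⟨C, hC, hpointwise⟩ := exists_sin_pow_mul_abs_kernelDeriv_le hα hβ hγ hγ' hcond
  obtain ⟨E, hE, hmajorant⟩ := exists_eLpNorm_mul_sq_add_sq_rpow_add_exp_le hW hp
    (d := (α + β + 3) / 2) (by linarith)
  refine ⟨C * E.toReal + 1, by positivity, fun θ hθ φ hφ hne => ?_⟩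
  have hsin : 0 ≤ sin θ ^ γ₁ * sin φ ^ γ₂ := by
    have := sin_pos_of_mem_Ioo hθ
    have := sin_pos_of_mem_Ioo hφ
    positivity
  set B := (ballMeasure α β θ |θ - φ|).toReal
  rw [← Real.enorm_of_nonneg hsin, ← eLpNorm_const_smul]
  calc _ ≤ eLpNorm ((C / B) • fun t => |θ - φ| *
        (t ^ 2 + |θ - φ| ^ 2) ^ (-(1 + W / p.toReal) / 2) + exp (-((α + β + 3) / 2) * t)) p
          (powerMeasure W) := by
        refine eLpNorm_mono_ae_real ?_
        filter_upwards [ae_powerMeasure_pos W] with t ht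
        rw [Pi.smul_apply, smul_eq_mul, norm_mul, norm_of_nonneg hsin]
        exact hpointwise ht hθ hφ hne
    _ ≤ ENNReal.ofReal (C / B) * E := by
        rw [eLpNorm_const_smul, Real.enorm_of_nonneg (by positivity)]
        gcongr
        exact hmajorant (abs_pos.2 (sub_ne_zero.2 hne))
    _ ≤ ENNReal.ofReal ((C * E.toReal + 1) / B) := by
        rw [← ENNReal.ofReal_toReal hE, ← ENNReal.ofReal_mul (by positivity),
          ENNReal.toReal_ofReal ENNReal.toReal_nonneg, div_mul_eq_mul_div]
        gcongr
        exact le_add_of_nonneg_right zero_le_one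

/-- Theorem (growth-type estimate, Lemma 4.6 of the paper): weighted `L^p((0,∞), t^{W−1}dt)`
bounds of mixed derivatives of `H_t^{α+1,β+1}` against `1/μ⁺_{α,β}(B(θ,|θ−φ|))`. -/
theorem kernel_growth_estimate (α β : ℝ) (hα : -1 < α) (hβ : -1 < β)
    (M N L γ₁ γ₂ : ℕ) (hL : L ≤ 1) (hγ₁ : γ₁ ≤ 1) (hγ₂ : γ₂ ≤ 1) (hγ : 1 ≤ γ₁ + γ₂)
    (W : ℝ) (hW : 1 ≤ W) (p : ℝ≥0∞) (hp : 1 ≤ p)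
    (hcond : 2 ≤ W / p.toReal + γ₁ + γ₂ - L - N - M) :
    ∃ C : ℝ, 0 < C ∧ ∀ θ ∈ Ioo (0 : ℝ) π, ∀ φ ∈ Ioo (0 : ℝ) π, θ ≠ φ →
      ENNReal.ofReal (Real.sin θ ^ γ₁ * Real.sin φ ^ γ₂) *
          eLpNorm (fun t => deriv^[L] (fun φ' => deriv^[N] (fun θ' =>
              deriv^[M] (fun s => jHker (α + 1) (β + 1) s θ' φ') t) θ) φ) p
            ((volume.restrict (Ioi (0 : ℝ))).withDensity fun t =>
              ENNReal.ofReal (t ^ (W - 1))) ≤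
        ENNReal.ofReal (C / (ballMeasure α β θ |θ - φ|).toReal) :=
  kernel_growth_estimate_general hα hβ hγ (add_le_add hγ₁ hγ₂) (one_pos.trans_le hW)
    (one_pos.trans_le hp).ne' hcond

end
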